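/- Let j be a positive real number. Then the following are equivalent: (a) rank_ℤ E^{(D)}(ℚ) < 2j for every nonzero integer D (i.e., for every nonzero integer D there is no ℤ-linearly independent family of ⌈2j⌉ points in the abelian group E^{(D)}(ℚ)); (b) R_E(j,k,X) converges for some real k ≥ 1 and some broad set X ⊆ ℝ; (c) R_E(j,k) converges for every real k ≥ 1. -/

import Mathlib

noncomputable section

/-- `F(u,v) = v·(u³ + au²v + buv² + cv³) = v⁴ f(u/v)`. -/
def Fbin (a b c u v : ℤ) : ℤ := v * (u^3 + a*u^2*v + b*u*v^2 + c*v^3)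

/-- `Ψ = {(u,v) ∈ ℤ² : gcd(u,v) = 1 and F(u,v) ≠ 0}`. -/
def Psi (a b c : ℤ) : Set (ℤ × ℤ) := {p | Int.gcd p.1 p.2 = 1 ∧ Fbin a b c p.1 p.2 ≠ 0}

/-- `h(u/v) = max(1, log|u|, log|v|)` for coprime `u, v`. -/
def ht (u v : ℤ) : ℝ := max 1 (max (Real.log |(u : ℝ)|) (Real.log |(v : ℝ)|))

/-- the polynomial `f(x) = x³ + ax² + bx + c` has three distinct complex roots. -/
def DistinctRoots (a b c : ℤ) : Prop :=
  ∃ r₁ r₂ r₃ : ℂ, r₁ ≠ r₂ ∧ r₁ ≠ r₃ ∧ r₂ ≠ r₃ ∧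
    ∀ z : ℂ, z^3 + a*z^2 + b*z + c = (z - r₁) * (z - r₂) * (z - r₃)

/-- `sq` is a squarefree-part function: for nonzero `n`, `sq n` is squarefree and
`n = sq n · m²` for some rational `m`. -/
def IsSqfreePart (sq : ℤ → ℤ) : Prop :=
  ∀ n : ℤ, n ≠ 0 → Squarefree (sq n) ∧ ∃ m : ℚ, (n : ℚ) = sq n * m^2

/-- the general term `|s(F(u,v))|^{-k} · h(u/v)^{-j}` of `S_E(j,k)`. -/
def STerm (a b c : ℤ) (sq : ℤ → ℤ) (j k : ℝ) (p : ℤ × ℤ) : ℝ :=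
  |(sq (Fbin a b c p.1 p.2) : ℝ)| ^ (-k) * ht p.1 p.2 ^ (-j)

/-- index set of `S_E(j,k,X)`: `(u,v) ∈ Ψ` with `u/v ∈ X`. -/
def SIdx (a b c : ℤ) (X : Set ℝ) : Set (ℤ × ℤ) :=
  {p | p ∈ Psi a b c ∧ ((p.1 : ℝ) / (p.2 : ℝ)) ∈ X}

/-- `S_E(j,k,X)` converges. -/
def SConv (a b c : ℤ) (sq : ℤ → ℤ) (j k : ℝ) (X : Set ℝ) : Prop :=
  Summable fun p : SIdx a b c X => STerm a b c sq j k p.1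

/-- index set of `R_E(j,k,X)`: `t ≥ 1`, `(u,v) ∈ Ψ`, `u/v ∈ X`, `t² ∣ F(u,v)`. -/
def RIdx (a b c : ℤ) (X : Set ℝ) : Set (ℕ × ℤ × ℤ) :=
  {q | 1 ≤ q.1 ∧ q.2 ∈ Psi a b c ∧ ((q.2.1 : ℝ) / (q.2.2 : ℝ)) ∈ X ∧
    (q.1 : ℤ)^2 ∣ Fbin a b c q.2.1 q.2.2}

/-- the general term `t^{2k} · |F(u,v)|^{-k} · h(u/v)^{-j}` of `R_E(j,k)`. -/
def RTerm (a b c : ℤ) (j k : ℝ) (q : ℕ × ℤ × ℤ) : ℝ :=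
  (q.1 : ℝ) ^ (2*k) * |(Fbin a b c q.2.1 q.2.2 : ℝ)| ^ (-k) * ht q.2.1 q.2.2 ^ (-j)

/-- `R_E(j,k,X)` converges. -/
def RConv (a b c : ℤ) (j k : ℝ) (X : Set ℝ) : Prop :=
  Summable fun q : RIdx a b c X => RTerm a b c j k q.1

/-- `Ω_d = {α ∈ ℤ/d²ℤ : f(α) ≡ 0 (mod d²)}`. -/
def OmegaSet (a b c : ℤ) (d : ℕ) : Set (ZMod (d^2)) :=
  {α | α^3 + (a : ZMod (d^2))*α^2 + (b : ZMod (d^2))*α + (c : ZMod (d^2)) = 0}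

/-- the lattice `L_{α,d,d'} = {(u,v) : u ≡ αv (mod d²), v ≡ 0 (mod d'²)}`. -/
def latL (d d' : ℕ) (α : ZMod (d^2)) : Set (ℤ × ℤ) :=
  {p | ((p.1 : ZMod (d^2)) = α * (p.2 : ZMod (d^2))) ∧ ((d' : ℤ))^2 ∣ p.2}

/-- `ω` is a choice, for coprime `d, d' ≥ 1` and `α ∈ Ω_d`, of a shortest nonzero
vector `ω_{α,d,d'}` of the lattice `L_{α,d,d'}` for the Euclidean norm. -/
def IsShortestChoice (a b c : ℤ) (ω : (d d' : ℕ) → ZMod (d^2) → ℤ × ℤ) : Prop :=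
  ∀ d d' : ℕ, 0 < d → 0 < d' → Nat.Coprime d d' → ∀ α ∈ OmegaSet a b c d,
    ω d d' α ∈ latL d d' α ∧ ω d d' α ≠ 0 ∧
    ∀ p ∈ latL d d' α, p ≠ 0 →
      (ω d d' α).1^2 + (ω d d' α).2^2 ≤ p.1^2 + p.2^2

/-- index set of `Q_E(j,k)`: coprime `d, d' ≥ 1`, `α ∈ Ω_d`, `ω_{α,d,d'} ∈ Ψ`. -/
def QIdx (a b c : ℤ) (ω : (d d' : ℕ) → ZMod (d^2) → ℤ × ℤ) :
    Set (Σ d : ℕ, ℕ × ZMod (d^2)) :=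
  {x | 0 < x.1 ∧ 0 < x.2.1 ∧ Nat.Coprime x.1 x.2.1 ∧ x.2.2 ∈ OmegaSet a b c x.1 ∧
    ω x.1 x.2.1 x.2.2 ∈ Psi a b c}

/-- the general term `(dd')^{2k} · max(1, log(dd'))^{-j} · ‖ω_{α,d,d'}‖^{-4k}` of `Q_E(j,k)`. -/
def QTerm (j k : ℝ) (ω : (d d' : ℕ) → ZMod (d^2) → ℤ × ℤ)
    (x : Σ d : ℕ, ℕ × ZMod (d^2)) : ℝ :=
  ((x.1 : ℝ) * (x.2.1 : ℝ)) ^ (2*k) * max 1 (Real.log ((x.1 : ℝ) * (x.2.1 : ℝ))) ^ (-j) *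
    Real.sqrt (((ω x.1 x.2.1 x.2.2).1 : ℝ)^2 + ((ω x.1 x.2.1 x.2.2).2 : ℝ)^2) ^ (-(4*k))

/-- `Q_E(j,k)` converges. -/
def QConv (a b c : ℤ) (j k : ℝ) (ω : (d d' : ℕ) → ZMod (d^2) → ℤ × ℤ) : Prop :=
  Summable fun x : QIdx a b c ω => QTerm j k ω x.1

/-- the quadratic twist `E^{(D)} : Dy² = f(x)`, in Weierstrass form
`y² = x³ + aDx² + bD²x + cD³` (isomorphic via `(x,y) ↦ (Dx, D²y)`). -/
def twist (a b c D : ℤ) : WeierstrassCurve.Affine ℚ :=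
  { a₁ := 0, a₂ := a*D, a₃ := 0, a₄ := b*D^2, a₆ := c*D^3 }

/-- `rank_ℤ E^{(D)}(ℚ) < 2j` for every nonzero integer `D`: there is no
ℤ-linearly independent family of `⌈2j⌉` rational points on `E^{(D)}`. -/
def RankBound (a b c : ℤ) (j : ℝ) : Prop :=
  ∀ D : ℤ, D ≠ 0 →
    ¬ ∃ P : Fin ⌈2*j⌉₊ → (twist a b c D).Point, LinearIndependent ℤ P

/-- `X ⊆ ℝ` is broad: open, and meets both `(e_max, ∞)` and `(-∞, e_min)`. -/
def Broad (a b c : ℤ) (X : Set ℝ) : Prop :=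
  IsOpen X ∧ (∃ x ∈ X, ∀ r : ℝ, r^3 + a*r^2 + b*r + c = 0 → r < x) ∧
    (∃ x ∈ X, ∀ r : ℝ, r^3 + a*r^2 + b*r + c = 0 → x < r)

/-- the set of triples `(α, d, d')` with `d, d'` coprime positive integers,
`dd' = t`, and `α ∈ Ω_d`. -/
def TripSet (a b c : ℤ) (t : ℕ) : Set (Σ d : ℕ, ℕ × ZMod (d^2)) :=
  {x | 0 < x.1 ∧ 0 < x.2.1 ∧ Nat.Coprime x.1 x.2.1 ∧ x.1 * x.2.1 = t ∧
    x.2.2 ∈ OmegaSet a b c x.1}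

end

noncomputable section

section field
variable {K : Type*} [Field K]

def T0 (b a c s t u : K) : K := (s - b*u)^2 - 4*c*u*(t + a*u)
def T1 (b a c s t u : K) : K := 2*(t*(s+b*u) + 2*a*s*u + 2*c*u^2)
def T2 (s t u : K) : K := t^2 - 4*s*u

/-- `T(sym(v,w)) = l · sym(p,m)`. -/
def XRel (a b c : K) (v w p m : K × K) : Prop :=
  ∃ l : K, l ≠ 0 ∧
    T0 b a c (v.1*w.1) (v.1*w.2+v.2*w.1) (v.2*w.2) = l * (p.1*m.1) ∧
    T1 b a c (v.1*w.1) (v.1*w.2+v.2*w.1) (v.2*w.2) = l * (p.1*m.2+p.2*m.1) ∧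
    T2 (v.1*w.1) (v.1*w.2+v.2*w.1) (v.2*w.2) = l * (p.2*m.2)

lemma XRel.swap {a b c : K} {v w p m : K × K} (h : XRel a b c v w p m) : XRel a b c v w m p := by
  obtain ⟨l, hl, h0, h1, h2⟩ := h
  exact ⟨l, hl, by rw [h0]; ring, by rw [h1]; ring, by rw [h2]; ring⟩
end field

/-- discriminant of `f` -/
def dsc {K : Type*} [CommRing K] (a b c : K) : K :=
  a^2*b^2 - 4*b^3 - 4*a^3*c + 18*a*b*c - 27*c^2

lemma dsc_ne {a b c : ℤ} (hf : DistinctRoots a b c) : dsc a b c ≠ 0 := by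
  obtain ⟨r, s, t, hrs, hrt, hst, h⟩ := hf
  have h0 := h 0
  have h1 := h 1
  have h2 := h (-1)
  have ha : (a:ℂ) = -(r+s+t) := by linear_combination (h1 + h2)/2 - h0
  have hb : (b:ℂ) = r*s+r*t+s*t := by linear_combination (h1 - h2)/2
  have hc : (c:ℂ) = -(r*s*t) := by linear_combination h0
  have : ((dsc a b c : ℤ) : ℂ) = ((r-s)*(r-t)*(s-t))^2 := by
    unfold dsc; push_cast; rw [ha, hb, hc]; ring
  intro h0
  rw [h0] at this
  have h3 : ((r-s)*(r-t)*(s-t)) ≠ 0 :=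
    mul_ne_zero (mul_ne_zero (sub_ne_zero.2 hrs) (sub_ne_zero.2 hrt)) (sub_ne_zero.2 hst)
  exact pow_ne_zero 2 h3 (by simpa using this.symm)

variable {a b c D : ℤ}

/-- projective x-coordinate of a point, in the model `D y² = f(x)` -/
def vx (a b c D : ℤ) : (twist a b c D).Point → ℚ × ℚ
  | .zero => (1, 0)
  | .some x _ _ => (x / D, 1)

lemma vx_zero : vx a b c D 0 = (1, 0) := rfl
lemma vx_some {x y : ℚ} (h : (twist a b c D).Nonsingular x y) :
    vx a b c D (.some x y h) = (x / D, 1) := rfl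

lemma tw_eqn {x y : ℚ} (h : (twist a b c D).Nonsingular x y) :
    y^2 = x^3 + a*D*x^2+b*D^2*x+c*D^3 := by
  have := (WeierstrassCurve.Affine.equation_iff ..).1 h.1
  simp [twist] at this
  linear_combination this

lemma tw_nons {x : ℚ} (h : (twist a b c D).Nonsingular x 0) :
    3*x^2 + 2*a*D*x+b*D^2 ≠ 0 := by
  have := (WeierstrassCurve.Affine.nonsingular_iff ..).1 h
  intro h0
  simp [twist] at this
  apply this.2
  linear_combination -h0

lemma vx_neg (P : (twist a b c D).Point) : vx a b c D (-P) = vx a b c D P := by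
  rcases P with _ | ⟨x, y, h⟩
  · rfl
  · rfl

lemma vx_eq (hD : D ≠ 0) {P Q : (twist a b c D).Point} (h : vx a b c D P = vx a b c D Q) :
    P = Q ∨ P = -Q := by
  apply WeierstrassCurve.Affine.Point.eq_or_eq_neg_of_xRep_eq_xRep
  have hD' : (D:ℚ) ≠ 0 := by exact_mod_cast hD
  rcases P with _ | ⟨x, y, hP⟩ <;> rcases Q with _ | ⟨x', y', hQ⟩
  · rfl
  · simp [vx] at h
  · simp [vx] at h
  · simp [vx] at h
    field_simp at h
    subst h; rfl

lemma vx_zero_iff {P : (twist a b c D).Point} : (vx a b c D P).2 = 0 ↔ P = 0 := by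
  rcases P with _ | ⟨x, y, h⟩
  · simp [vx]; rfl
  · simp [vx]

lemma aux_prod {K : Type*} [Field K] {A B C x y x' y' : K} (e : y^2 = x^3+A*x^2+B*x+C)
    (e' : y'^2 = x'^3+A*x'^2+B*x'+C) (hx : x - x' ≠ 0) :
    (x*x'-B)^2-4*C*(x+x'+A) = (x-x')^2*((((y-y')/(x-x'))^2-A-x-x')*(((y+y')/(x-x'))^2-A-x-x')) := by
  have k : (y-y')*(y+y') = (x-x')*(x^2+x*x'+x'^2+A*(x+x')+B) := by linear_combination e - e'
  have k1 : (x-x')^2*(((y-y')/(x-x'))^2*((y+y')/(x-x'))^2) = (x^2+x*x'+x'^2+A*(x+x')+B)^2 := by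
    rw [← mul_pow, div_mul_div_comm, k]; field_simp
  have k2 : (x-x')^2*(((y-y')/(x-x'))^2 + ((y+y')/(x-x'))^2) = 2*(y^2+y'^2) := by
    field_simp; ring
  linear_combination -k1 + (A+x+x')*k2 + 2*(A+x+x')*(e+e')

lemma aux_sum {K : Type*} [Field K] {A B C x y x' y' : K} (e : y^2 = x^3+A*x^2+B*x+C)
    (e' : y'^2 = x'^3+A*x'^2+B*x'+C) (hx : x - x' ≠ 0) :
    2*((x+x')*(x*x'+B)+2*A*x*x'+2*C) = (x-x')^2*((((y-y')/(x-x'))^2-A-x-x')+(((y+y')/(x-x'))^2-A-x-x')) := by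
  have k2 : (x-x')^2*(((y-y')/(x-x'))^2 + ((y+y')/(x-x'))^2) = 2*(y^2+y'^2) := by
    field_simp; ring
  linear_combination -k2 -2*(e+e')

lemma aux_dbl {K : Type*} [Field K] [CharZero K] {A B C x y : K} (e : y^2 = x^3+A*x^2+B*x+C)
    (hy : y ≠ 0) :
    (x*x-B)^2-4*C*(x+x+A) = 4*y^2*(((3*x^2+2*A*x+B)/(2*y))^2-A-x-x) := by
  field_simp
  linear_combination 16*(A+2*x)*e

lemma rel_double (hD : D ≠ 0) (P : (twist a b c D).Point) :
    XRel (a:ℚ) b c (vx a b c D P) (vx a b c D P) (vx a b c D (P+P)) (1,0) := by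
  have hD' : (D:ℚ) ≠ 0 := by exact_mod_cast hD
  rcases P with _ | ⟨x, y, h⟩
  · have : (WeierstrassCurve.Affine.Point.zero + .zero : (twist a b c D).Point) = 0 := 
      add_zero (0 : (twist a b c D).Point)
    rw [this]
    exact ⟨1, one_ne_zero, by simp [vx, T0], by simp [vx, T1], by simp [vx, T2]⟩
  · have e := tw_eqn h
    have hn : (twist a b c D).negY x y = -y := by simp [WeierstrassCurve.Affine.negY, twist]
    by_cases hy : y = 0
    · subst hy
      have n := tw_nons h
      rw [WeierstrassCurve.Affine.Point.add_self_of_Y_eq (by rw [hn]; simp), vx_zero, vx_some]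
      refine ⟨((3*x^2 + 2*a*D*x+b*D^2)/D^2)^2, by positivity, ?_, ?_, ?_⟩
      · simp only [T0]; field_simp; linear_combination (4*(2*x+a*D)*D^0) * e
      · simp only [T1]; field_simp; linear_combination (-4*D) * e
      · simp only [T2]; field_simp; ring
    · have hy' : y ≠ (twist a b c D).negY x y := by
        rw [hn]; intro h; apply hy; linarith
      rw [WeierstrassCurve.Affine.Point.add_self_of_Y_ne hy', vx_some, vx_some]
      have hs := WeierstrassCurve.Affine.slope_of_Y_ne rfl hy'
      rw [hn] at hs
      have hs' : (twist a b c D).slope x x y y = (3*x^2+2*(a*D)*x+b*D^2)/(2*y) := by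
        rw [hs]; simp [twist]; ring
      have e2 : y^2 = x^3 + (a*D)*x^2+(b*D^2)*x+c*D^3 := by rw [e]
      have k := aux_dbl e2 hy
      have hX : (twist a b c D).addX x x ((twist a b c D).slope x x y y) =
        ((3*x^2+2*(a*D)*x+b*D^2)/(2*y))^2-(a*D)-x-x := by
        rw [hs']; simp [WeierstrassCurve.Affine.addX, twist]
      rw [hX]
      refine ⟨4*y^2/D^3, by positivity, ?_, ?_, ?_⟩
      · simp only [T0]
        generalize ((3*x^2+2*(a*D)*x+b*D^2)/(2*y))^2-(a*D)-x-x = z at k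
        field_simp; linear_combination k
      · simp only [T1]; field_simp; linear_combination (-16*D) * e
      · simp only [T2]; field_simp; ring

lemma rel_all (hD : D ≠ 0) (P Q : (twist a b c D).Point) :
    XRel (a:ℚ) b c (vx a b c D P) (vx a b c D Q) (vx a b c D (P+Q)) (vx a b c D (P-Q)) := by
  have hD' : (D:ℚ) ≠ 0 := by exact_mod_cast hD
  by_cases hPQ : vx a b c D P = vx a b c D Q
  · rcases vx_eq hD hPQ with rfl | rfl
    · rw [sub_self, vx_zero]; exact rel_double hD P
    · have := rel_double hD (-Q)
      rw [vx_neg] at this ⊢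
      rw [neg_add_cancel, vx_zero, sub_eq_add_neg]
      exact this.swap
  · rcases P with _ | ⟨x, y, h⟩
    · change XRel (a:ℚ) b c (vx a b c D 0) (vx a b c D Q) (vx a b c D (0+Q)) (vx a b c D (0-Q))
      rw [zero_add, zero_sub, vx_neg, vx_zero]
      exact ⟨1, one_ne_zero, by simp [T0]; ring, by simp [T1]; ring, by simp [T2]; ring⟩
    rcases Q with _ | ⟨x', y', h'⟩
    · change XRel (a:ℚ) b c (vx a b c D _) (vx a b c D 0) (vx a b c D (_+0)) (vx a b c D (_-0))
      rw [add_zero, sub_zero, vx_zero]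
      exact ⟨1, one_ne_zero, by simp [T0]; ring, by simp [T1]; ring, by simp [T2]; ring⟩
    have hx : x ≠ x' := by
      rintro rfl; exact hPQ rfl
    have e := tw_eqn h
    have e' := tw_eqn h'
    have hn : (twist a b c D).negY x' y' = -y' := by simp [WeierstrassCurve.Affine.negY, twist]
    have hxx : x - x' ≠ 0 := sub_ne_zero.2 hx
    rw [sub_eq_add_neg, WeierstrassCurve.Affine.Point.neg_some, 
      WeierstrassCurve.Affine.Point.add_of_X_ne hx, WeierstrassCurve.Affine.Point.add_of_X_ne hx]
    have e2 : y^2 = x^3 + (a*D)*x^2+(b*D^2)*x+c*D^3 := by rw [e]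
    have e2' : y'^2 = x'^3 + (a*D)*x'^2+(b*D^2)*x'+c*D^3 := by rw [e']
    have k := aux_prod e2 e2' hxx
    have k' := aux_sum e2 e2' hxx
    have hX : (twist a b c D).addX x x' ((twist a b c D).slope x x' y y') =
        ((y-y')/(x-x'))^2-(a*D)-x-x' := by
      rw [WeierstrassCurve.Affine.slope_of_X_ne hx]; simp [WeierstrassCurve.Affine.addX, twist]
    have hX' : (twist a b c D).addX x x' ((twist a b c D).slope x x' y (-y')) =
        ((y+y')/(x-x'))^2-(a*D)-x-x' := by
      rw [WeierstrassCurve.Affine.slope_of_X_ne hx]; simp [WeierstrassCurve.Affine.addX, twist]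
    simp only [vx_some, hn, hX, hX']
    generalize ((y-y')/(x-x'))^2-(a*D)-x-x' = z at k k'
    generalize ((y+y')/(x-x'))^2-(a*D)-x-x' = z' at k k'
    refine ⟨(x-x')^2/D^2, by positivity, ?_, ?_, ?_⟩
    · simp only [T0]; field_simp; linear_combination k
    · simp only [T1]; field_simp; linear_combination k'
    · simp only [T2]; field_simp; ring
end

noncomputable section

theorem canon {G : Type*} [AddCommGroup G] (H : G → ℝ) (C : ℝ) (H0 : ∀ P, 0 ≤ H P)
    (h : ∀ P Q, |H (P+Q) + H (P-Q) - 2*H P - 2*H Q| ≤ C) :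
    ∃ q : G → ℝ, (∀ P, |q P - H P| ≤ C) ∧ (∀ P, 0 ≤ q P) ∧
      ∀ P Q, q (P+Q) + q (P-Q) = 2*q P + 2*q Q := by
  have hC : 0 ≤ C := (abs_nonneg _).trans (h 0 0)
  have hz : |H 0| ≤ C/2 := by
    have := h 0 0
    simp only [add_zero, sub_zero] at this
    rw [abs_le] at this ⊢
    constructor <;> linarith [this.1, this.2]
  have hd : ∀ P, |H (2•P) - 4*H P| ≤ 3*C/2 := by
    intro P
    have := h P P
    rw [sub_self, ← two_nsmul] at this
    rw [abs_le] at this hz ⊢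
    constructor <;> linarith [this.1, this.2]
  let A : G → ℕ → ℝ := fun P n => H (2^n • P) / 4^n
  have hA : ∀ P n, dist (A P n) (A P (n+1)) ≤ (3*C/8) * (1/4)^n := by
    intro P n
    have h1 := hd (2^n • P)
    rw [← mul_nsmul, ← pow_succ] at h1
    have e : A P n - A P (n+1) = -(H (2^(n+1) • P) - 4*H (2^n • P)) / 4^(n+1) := by
      simp only [A]; field_simp; ring
    rw [Real.dist_eq, e, abs_div, abs_neg, abs_of_pos (by positivity : (0:ℝ) < 4^(n+1)), div_le_iff₀ (by positivity)]
    refine h1.trans (le_of_eq ?_)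
    rw [one_div, inv_pow, pow_succ]; field_simp; ring
  have hlim : ∀ P, ∃ l, Filter.Tendsto (A P) Filter.atTop (nhds l) := fun P =>
    cauchySeq_tendsto_of_complete (cauchySeq_of_le_geometric _ _ (by norm_num) (hA P))
  choose q hq using hlim
  refine ⟨q, fun P => ?_, fun P => ge_of_tendsto' (hq P) fun n => div_nonneg (H0 _) (by positivity), fun P Q => ?_⟩
  · have := dist_le_of_le_geometric_of_tendsto₀ _ _ (by norm_num) (hA P) (hq P)
    rw [dist_comm, Real.dist_eq] at this
    have e : A P 0 = H P := by simp [A]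
    rw [e] at this
    refine this.trans ?_
    norm_num; linarith
  · have t1 : Filter.Tendsto (fun n => A (P+Q) n + A (P-Q) n - (2*A P n + 2*A Q n)) Filter.atTop
      (nhds (q (P+Q) + q (P-Q) - (2*q P + 2*q Q))) :=
      ((hq _).add (hq _)).sub (((hq P).const_mul 2).add ((hq Q).const_mul 2))
    have t2 : Filter.Tendsto (fun n => A (P+Q) n + A (P-Q) n - (2*A P n + 2*A Q n)) Filter.atTop (nhds 0) := by
      have t3 : Filter.Tendsto (fun n : ℕ => C * (1/4:ℝ)^n) Filter.atTop (nhds 0) := by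
        simpa using (tendsto_pow_atTop_nhds_zero_of_lt_one (by norm_num : (0:ℝ) ≤ 1/4) (by norm_num)).const_mul C
      refine squeeze_zero_norm (fun n => ?_) t3
      have e : A (P+Q) n + A (P-Q) n - (2*A P n + 2*A Q n) =
        (H (2^n•P + 2^n•Q) + H (2^n•P - 2^n•Q) - 2*H (2^n•P) - 2*H (2^n•Q)) / 4^n := by
        simp only [A, nsmul_add, nsmul_sub]; ring
      rw [e, Real.norm_eq_abs, abs_div, abs_of_pos (by positivity : (0:ℝ) < 4^n), div_eq_mul_inv, one_div, inv_pow]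
      exact mul_le_mul_of_nonneg_right (h _ _) (by positivity)
    linarith [tendsto_nhds_unique t1 t2]

/-- parallelogram law -/
def Quad {G : Type*} [AddCommGroup G] (q : G → ℝ) : Prop :=
  ∀ P Q, q (P+Q) + q (P-Q) = 2*q P + 2*q Q

namespace Quad
variable {G : Type*} [AddCommGroup G] {q : G → ℝ} (h : Quad q)
include h

lemma zero : q 0 = 0 := by
  have := h 0 0; simp at this; linarith

lemma neg (P : G) : q (-P) = q P := by
  have := h 0 P; simp [h.zero] at this; linarith

lemma three (x y z : G) : q (x+y+z) = q (x+y) + q (y+z) + q (x+z) - q x - q y - q z := by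
  have h1 := h (x+y) z
  have h2 := h (x-z) y
  have h3 := h (y-z) x
  have h4 := h y z
  have h5 := h x z
  have h6 := h (x+z) y
  have e1 : x - z + y = x + y - z := by abel
  have e2 : y - z + x = x + y - z := by abel
  have e3 : x - z - y = -(y + z - x) := by abel
  have e4 : y - z - x = -(x + z - y) := by abel
  have e5 : x + z + y = x + y + z := by abel
  have h7 := h (y+z) x
  have e6 : y + z + x = x + y + z := by abel
  rw [e1, e3, neg h] at h2
  rw [e2, e4, neg h] at h3
  rw [e5] at h6
  rw [e6] at h7
  linarith

lemma nsmul (n : ℕ) (P : G) : q (n • P) = n^2 * q P := by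
  induction n using Nat.strong_induction_on with
  | _ n ih =>
    match n with
    | 0 => simp [h.zero]
    | 1 => simp
    | (k+2) =>
      have h1 := h ((k+1)•P) P
      have e1 : (k+1)•P + P = (k+2)•P := by rw [succ_nsmul _ (k+1)]
      have e2 : (k+1)•P - P = k•P := by rw [succ_nsmul]; abel
      rw [e1, e2, ih k (by omega), ih (k+1) (by omega)] at h1
      push_cast at h1 ⊢
      linarith

lemma zsmul (n : ℤ) (P : G) : q (n • P) = n^2 * q P := by
  obtain ⟨k, rfl | rfl⟩ := n.eq_nat_or_neg
  · rw [natCast_zsmul, h.nsmul]; simp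
  · rw [neg_zsmul, h.neg, natCast_zsmul, h.nsmul]; simp

lemma add_le (h0 : ∀ P, 0 ≤ q P) (P Q : G) : q (P+Q) ≤ 2*q P + 2*q Q := by
  linarith [h P Q, h0 (P-Q)]

/-- the pairing kills multiples -/
lemma pair_zsmul (n : ℤ) (P Q : G) :
    q (n • P + Q) - q (n • P) - q Q = n * (q (P+Q) - q P - q Q) := by
  have nat : ∀ (n : ℕ), q (n • P + Q) - q (n • P) - q Q = n * (q (P+Q) - q P - q Q) := by
    intro n
    induction n with
    | zero => simp [h.zero]
    | succ k ih =>
      have := h.three (k•P) P Q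
      rw [succ_nsmul]
      push_cast
      linarith
  obtain ⟨k, rfl | rfl⟩ := n.eq_nat_or_neg
  · rw [natCast_zsmul, nat]; simp
  · have h1 := h.three (k • P) (-(k•P)) Q
    rw [add_neg_cancel, zero_add, h.zero, h.neg] at h1
    rw [neg_zsmul, natCast_zsmul, h.neg]
    have := nat k
    push_cast
    linarith

/-- dependent points have vanishing Gram determinant -/
lemma gram {m n : ℤ} (hmn : m ≠ 0 ∨ n ≠ 0) {P Q : G} (e : m • P + n • Q = 0) :
    4 * q P * q Q = (q (P+Q) - q P - q Q)^2 := by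
  set B := q (P+Q) - q P - q Q with hB
  have key : ∀ R, (q (m • P + (n • Q + R)) = q R) := fun R => by rw [← add_assoc, e, zero_add]
  have a1 : ∀ R, m * (q (P+R) - q P - q R) + n * (q (Q+R) - q Q - q R) = 0 := by
    intro R
    have h1 := h.three (m•P) (n•Q) R
    rw [e, zero_add, h.zero] at h1
    have := h.pair_zsmul m P R
    have := h.pair_zsmul n Q R
    linarith
  have b1 := a1 P
  have b2 := a1 Q
  rw [← two_nsmul, h.nsmul] at b1 b2
  rw [add_comm Q P] at b1
  push_cast at b1 b2
  have c1 : m * (2*q P) + n * B = 0 := by rw [hB]; linarith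
  have c2 : m * B + n * (2*q Q) = 0 := by rw [hB]; linarith
  have d1 : (m:ℝ) * (4*q P*q Q - B^2) = 0 := by linear_combination 2*q Q*c1 - B*c2
  have d2 : (n:ℝ) * (4*q P*q Q - B^2) = 0 := by linear_combination 2*q P*c2 - B*c1
  rcases hmn with hm | hm
  · have := (mul_eq_zero.1 d1).resolve_left (by exact_mod_cast hm); linarith
  · have := (mul_eq_zero.1 d2).resolve_left (by exact_mod_cast hm); linarith

lemma tors {n : ℕ} (hn : n ≠ 0) {P : G} (e : n • P = 0) : q P = 0 := by
  have := h.nsmul n P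
  rw [e, h.zero] at this
  have h2 : (n:ℝ)^2 ≠ 0 := by positivity
  exact (mul_eq_zero.1 this.symm).resolve_left h2

lemma add_tors {n : ℕ} (hn : n ≠ 0) {P Q : G} (e : n • P = 0) : q (P + Q) = q Q := by
  have := h.pair_zsmul n P Q
  rw [natCast_zsmul, e, zero_add, h.zero, h.tors hn e] at this
  have h2 : ((n:ℤ):ℝ) ≠ 0 := by exact_mod_cast hn
  have h3 := mul_eq_zero.1 (show ((n:ℤ):ℝ) * (q (P+Q) - 0 - q Q) = 0 by linarith)
  have := h3.resolve_left h2
  linarith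
end Quad

open Height in
/-- naive height -/
def Hn (a b c D : ℤ) (P : (twist a b c D).Point) : ℝ :=
  logHeight ![(vx a b c D P).1, (vx a b c D P).2]

lemma addSub_eval (a b c : ℤ) {v w p m : ℚ × ℚ} {l : ℚ}
    (r0 : T0 (b:ℚ) a c (v.1*w.1) (v.1*w.2+v.2*w.1) (v.2*w.2) = l * (p.1*m.1))
    (r1 : T1 (b:ℚ) a c (v.1*w.1) (v.1*w.2+v.2*w.1) (v.2*w.2) = l * (p.1*m.2+p.2*m.1))
    (r2 : T2 (v.1*w.1) (v.1*w.2+v.2*w.1) (v.2*w.2) = l * (p.2*m.2)) :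
    (fun i ↦ (WeierstrassCurve.addSubMap (twist a b c 1) i).eval
      ![v.1*w.1, v.1*w.2+v.2*w.1, v.2*w.2]) = l • ![p.1*m.1, p.1*m.2+p.2*m.1, p.2*m.2] := by
  funext i
  fin_cases i
  · simp [WeierstrassCurve.addSubMap, WeierstrassCurve.b₄, WeierstrassCurve.b₆, WeierstrassCurve.b₈, twist]
    rw [← r0, T0]; ring
  · simp [WeierstrassCurve.addSubMap, WeierstrassCurve.b₂, WeierstrassCurve.b₄, WeierstrassCurve.b₆, twist]
    rw [← r1, T1]; ring
  · simp [WeierstrassCurve.addSubMap]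
    rw [← r2, T2]

open Height in
theorem parallelogram {a b c : ℤ} (hd : dsc a b c ≠ 0) : ∃ C : ℝ, ∀ D : ℤ, D ≠ 0 →
    ∀ P Q : (twist a b c D).Point,
    |Hn a b c D (P+Q) + Hn a b c D (P-Q) - 2*Hn a b c D P - 2*Hn a b c D Q| ≤ C := by
  let W : WeierstrassCurve ℚ := twist a b c 1
  have hW : W.Δ = 16 * (dsc a b c : ℤ) := by
    simp only [W, twist, WeierstrassCurve.Δ, WeierstrassCurve.b₂, WeierstrassCurve.b₄,
      WeierstrassCurve.b₆, WeierstrassCurve.b₈, dsc]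
    push_cast; ring
  have : W.IsElliptic := ⟨by
    rw [hW]; exact (mul_ne_zero (by norm_num) (by exact_mod_cast hd)).isUnit⟩
  obtain ⟨C1, h1⟩ := W.abs_logHeight_addSubMap_sub_two_mul_logHeight_le
  obtain ⟨C2, h2⟩ := abs_logHeight_sym2_sub_le ℚ
  refine ⟨C1 + 2*C2 + C2, fun D hD P Q => ?_⟩
  obtain ⟨l, hl, r0, r1, r2⟩ := rel_all hD P Q
  have nz : ∀ P : (twist a b c D).Point, ![(vx a b c D P).1, (vx a b c D P).2] ≠ 0 := by
    intro P
    rcases P with _ | ⟨x, y, h⟩ <;> simp [vx]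
  have a1 := h2 (nz P) (nz Q)
  have a2 := h2 (nz (P+Q)) (nz (P-Q))
  have a3 := h1 ![(vx a b c D P).1 * (vx a b c D Q).1, (vx a b c D P).1 * (vx a b c D Q).2 + 
    (vx a b c D P).2 * (vx a b c D Q).1, (vx a b c D P).2 * (vx a b c D Q).2]
  have e : (fun i ↦ (W.addSubMap i).eval ![(vx a b c D P).1 * (vx a b c D Q).1, (vx a b c D P).1 * (vx a b c D Q).2 + 
    (vx a b c D P).2 * (vx a b c D Q).1, (vx a b c D P).2 * (vx a b c D Q).2]) =
    l • ![(vx a b c D (P+Q)).1 * (vx a b c D (P-Q)).1, (vx a b c D (P+Q)).1 * (vx a b c D (P-Q)).2 + 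
    (vx a b c D (P+Q)).2 * (vx a b c D (P-Q)).1, (vx a b c D (P+Q)).2 * (vx a b c D (P-Q)).2] := by
    exact addSub_eval a b c r0 r1 r2
  rw [e, logHeight_smul_eq_logHeight _ hl] at a3
  unfold Hn
  rw [abs_le] at *
  constructor <;> linarith [a1.1, a1.2, a2.1, a2.2, a3.1, a3.2]

/-- uniform canonical heights -/
theorem heights {a b c : ℤ} (hd : dsc a b c ≠ 0) : ∃ C : ℝ, 0 ≤ C ∧ ∀ D : ℤ, D ≠ 0 →
    ∃ q : (twist a b c D).Point → ℝ, (∀ P, |q P - Hn a b c D P| ≤ C) ∧ (∀ P, 0 ≤ q P) ∧ Quad q := by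
  obtain ⟨C, hC⟩ := parallelogram hd
  refine ⟨C, (abs_nonneg _).trans (hC 1 one_ne_zero 0 0), fun D hD => ?_⟩
  exact canon _ C (fun P => Height.logHeight_nonneg _) (hC D hD)

end

noncomputable section
open Height

lemma h_cop {u v : ℤ} (h : Int.gcd u v = 1) (hv : v ≠ 0) :
    logHeight₁ ((u:ℚ)/v) = Real.log (max |(u:ℝ)| |(v:ℝ)|) := by
  have hh : ∃ w : ℤ, 0 < w ∧ |v| = w ∧ ((u:ℚ)/v).num.natAbs = u.natAbs ∧ (((u:ℚ)/v).den : ℤ) = w := by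
    refine ⟨|v|, abs_pos.2 hv, rfl, ?_, ?_⟩
    · rcases lt_or_gt_of_ne hv with h' | h'
      · have e : (u:ℚ)/v = ((-u : ℤ):ℚ)/((-v : ℤ):ℚ) := by push_cast; rw [neg_div_neg_eq]
        rw [e, Rat.num_div_eq_of_coprime (by omega) (by simpa [Int.gcd] using h), Int.natAbs_neg]
      · rw [Rat.num_div_eq_of_coprime h' h]
    · rcases lt_or_gt_of_ne hv with h' | h'
      · have e : (u:ℚ)/v = ((-u : ℤ):ℚ)/((-v : ℤ):ℚ) := by push_cast; rw [neg_div_neg_eq]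
        rw [e, Rat.den_div_eq_of_coprime (by omega) (by simpa [Int.gcd] using h), abs_of_neg h']
      · rw [Rat.den_div_eq_of_coprime h' h, abs_of_pos h']
  obtain ⟨w, hw, hvw, h1, h2⟩ := hh
  rw [Rat.logHeight₁_eq_log_max, h1]
  congr 1
  have h3 : (((u:ℚ)/v).den : ℝ) = |(v:ℝ)| := by
    have : ((((u:ℚ)/v).den : ℤ) : ℝ) = ((|v| : ℤ) : ℝ) := by rw [h2, hvw]
    simpa using this
  rw [Nat.cast_max, h3, Nat.cast_natAbs, Int.cast_abs]

lemma ht_bounds {u v : ℤ} (h : Int.gcd u v = 1) (hv : v ≠ 0) :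
    logHeight₁ ((u:ℚ)/v) ≤ ht u v ∧ ht u v ≤ logHeight₁ ((u:ℚ)/v) + 1 := by
  have e := h_cop h hv
  have hv1 : 1 ≤ |(v:ℝ)| := by exact_mod_cast Int.one_le_abs hv
  have e2 : Real.log (max |(u:ℝ)| |(v:ℝ)|) = max (Real.log |(u:ℝ)|) (Real.log |(v:ℝ)|) := by
    by_cases hu : u = 0
    · subst hu
      simp only [Int.cast_zero, abs_zero, Real.log_zero]
      rw [max_eq_right (by linarith), max_eq_right (Real.log_nonneg hv1)]
    · have hu1 : 1 ≤ |(u:ℝ)| := by exact_mod_cast Int.one_le_abs hu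
      rcases le_total |(u:ℝ)| |(v:ℝ)| with h | h
      · rw [max_eq_right h, max_eq_right (Real.log_le_log (by linarith) h)]
      · rw [max_eq_left h, max_eq_left (Real.log_le_log (by linarith) h)]
  rw [e, e2]
  have h0 : 0 ≤ max (Real.log |(u:ℝ)|) (Real.log |(v:ℝ)|) := le_max_of_le_right (Real.log_nonneg hv1)
  unfold ht
  exact ⟨le_max_right _ _, max_le (by linarith) (by linarith)⟩

lemma ht_pos (u v : ℤ) : 1 ≤ ht u v := le_max_left _ _

lemma northcott (B : ℝ) : {x : ℚ | logHeight₁ x ≤ B}.Finite := by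
  have hf : ((fun p : ℤ × ℕ => (p.1 : ℚ)/p.2) '' 
    (Set.Icc (-(⌊Real.exp B⌋₊:ℤ)) ⌊Real.exp B⌋₊ ×ˢ Set.Iic ⌊Real.exp B⌋₊)).Finite :=
    ((Set.finite_Icc _ _).prod (Set.finite_Iic _)).image _
  refine hf.subset fun x hx => ?_
  simp only [Set.mem_setOf_eq] at hx
  rw [Rat.logHeight₁_eq_log_max] at hx
  have h1 : ((max x.num.natAbs x.den : ℕ):ℝ) ≤ Real.exp B := by
    rw [← Real.log_le_iff_le_exp]
    · exact hx
    · exact_mod_cast lt_max_of_lt_right x.den_pos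
  have h2 := Nat.le_floor h1
  refine ⟨(x.num, x.den), ⟨?_, ?_⟩, Rat.num_div_den x⟩
  · simp only [Set.mem_Icc]
    have := (le_max_left _ _).trans h2
    constructor <;> omega
  · exact (le_max_right _ _).trans h2

variable {a b c D : ℤ}

lemma tw_ell (hd : dsc a b c ≠ 0) (hD : D ≠ 0) : (twist a b c D).Δ ≠ 0 := by
  have hW : (twist a b c D).Δ = 16 * D^6 * (dsc a b c : ℤ) := by
    simp only [twist, WeierstrassCurve.Δ, WeierstrassCurve.b₂, WeierstrassCurve.b₄,
      WeierstrassCurve.b₆, WeierstrassCurve.b₈, dsc]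
    push_cast; ring
  rw [hW]
  have : (D:ℚ) ≠ 0 := by exact_mod_cast hD
  have : ((dsc a b c : ℤ):ℚ) ≠ 0 := by exact_mod_cast hd
  positivity

/-- the point with coordinates `(α, y)` on `D y² = f(x)` -/
lemma pt_ns (hd : dsc a b c ≠ 0) (hD : D ≠ 0) {x y : ℚ} (h : D*y^2 = x^3+a*x^2+b*x+c) :
    (twist a b c D).Nonsingular (D*x) (D^2*y) := by
  apply (WeierstrassCurve.Affine.equation_iff_nonsingular_of_Δ_ne_zero (tw_ell hd hD)).1
  rw [WeierstrassCurve.Affine.equation_iff]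
  simp only [twist]
  linear_combination (D:ℚ)^3*h

lemma vx_pt (hD : D ≠ 0) {x y : ℚ} (h : (twist a b c D).Nonsingular (D*x) y) :
    vx a b c D (.some _ _ h) = (x, 1) := by
  have : (D:ℚ) ≠ 0 := by exact_mod_cast hD
  rw [vx_some]; field_simp

lemma vx_y (hD : D ≠ 0) {P : (twist a b c D).Point} (hP : P ≠ 0) :
    ∃ x y : ℚ, vx a b c D P = (x, 1) ∧ D*y^2 = x^3+a*x^2+b*x+c := by
  have hD' : (D:ℚ) ≠ 0 := by exact_mod_cast hD
  rcases P with _ | ⟨x, y, h⟩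
  · exact absurd rfl hP
  · refine ⟨x/D, y/D^2, rfl, ?_⟩
    have e := tw_eqn h
    field_simp
    linear_combination e

lemma vx_add_pt (hD : D ≠ 0) {x y x' y' : ℚ} (h : (twist a b c D).Nonsingular (D*x) (D^2*y))
    (h' : (twist a b c D).Nonsingular (D*x') (D^2*y')) (hx : x ≠ x') :
    vx a b c D (.some _ _ h + .some _ _ h') = (D*((y-y')/(x-x'))^2-a-x-x', 1) := by
  have hD' : (D:ℚ) ≠ 0 := by exact_mod_cast hD
  have hx2 : D*x ≠ D*x' := fun h => hx (mul_left_cancel₀ hD' h)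
  have hxx : x - x' ≠ 0 := sub_ne_zero.2 hx
  rw [WeierstrassCurve.Affine.Point.add_of_X_ne hx2, vx_some, WeierstrassCurve.Affine.slope_of_X_ne hx2]
  simp only [WeierstrassCurve.Affine.addX, twist, Prod.mk.injEq, and_true]
  have : D*x - D*x' ≠ 0 := sub_ne_zero.2 hx2
  rw [← mul_sub]
  field_simp
  ring

lemma Hn_eq {P : (twist a b c D).Point} {x : ℚ} (h : vx a b c D P = (x, 1)) :
    Hn a b c D P = logHeight₁ x := by
  rw [Hn, h, logHeight₁_eq_logHeight]
end

noncomputable section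

open Finset in
theorem count_pts {G : Type*} [AddCommGroup G] {q : G → ℝ} (hq : Quad q) (q0 : ∀ P, 0 ≤ q P)
    {r : ℕ} (hr : ¬ ∃ P : Fin (r+1) → G, LinearIndependent ℤ P) {μ : ℝ}
    (hμ : ∀ P, q P < μ → IsOfFinAddOrder P) (T : Finset G) (hT : ∀ P : G, IsOfFinAddOrder P → P ∈ T)
    (S : Finset G) {B : ℝ} (hS : ∀ P ∈ S, q P ≤ B) {m : ℕ} (hm : 1 ≤ m) (hB : 4*B < m^2*μ) :
    S.card ≤ T.card * m^r := by
  classical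
  let A : Submodule ℤ G := Submodule.span ℤ (S : Set G)
  have : Module.Finite ℤ A := Module.Finite.span_of_finite ℤ S.finite_toSet
  let Q := A ⧸ Submodule.torsion ℤ A
  have : Module.Free ℤ Q := Module.free_of_finite_type_torsion_free'
  let b := Module.finBasis ℤ Q
  set n := Module.finrank ℤ Q with hn
  have hnr : n ≤ r := by
    by_contra hlt
    push Not at hlt
    apply hr
    have hs : Function.Surjective (Submodule.mkQ (Submodule.torsion ℤ A)) := Submodule.mkQ_surjective _
    let g : Fin n → A := fun i => Function.surjInv hs (b i)
    have hg : LinearIndependent ℤ g := by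
      apply LinearIndependent.of_comp (Submodule.mkQ (Submodule.torsion ℤ A))
      have e : (Submodule.mkQ (Submodule.torsion ℤ A)) ∘ g = b :=
        funext fun i => Function.surjInv_eq hs (b i)
      rw [e]
      exact b.linearIndependent
    have hg' : LinearIndependent ℤ (fun i => (g i : G)) := by
      apply hg.map' A.subtype (by simp)
    exact ⟨fun i => g (Fin.castLE hlt i), hg'.comp _ (Fin.castLE_injective hlt)⟩
  have : NeZero m := ⟨by omega⟩
  let φ : G → (Fin n → ZMod m) := fun P => if h : P ∈ A then
    (fun i => ((b.repr (Submodule.Quotient.mk ⟨P, h⟩) i : ℤ) : ZMod m)) else 0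
  have hmem : ∀ P ∈ S, P ∈ A := fun P hP => Submodule.subset_span hP
  have key : ∀ P ∈ S, ∀ R ∈ S, φ P = φ R → P - R ∈ T := by
    intro P hP R hR h
    apply hT
    simp only [φ, dif_pos (hmem P hP), dif_pos (hmem R hR)] at h
    have h1 : ∀ i, ∃ z : ℤ, b.repr (Submodule.Quotient.mk ⟨P, hmem P hP⟩) i -
        b.repr (Submodule.Quotient.mk ⟨R, hmem R hR⟩) i = m * z := by
      intro i
      have := congrFun h i
      rw [ZMod.intCast_eq_intCast_iff_dvd_sub] at this
      obtain ⟨z, hz⟩ := this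
      exact ⟨-z, by linarith⟩
    choose z hz using h1
    obtain ⟨w, hw⟩ := Submodule.mkQ_surjective (Submodule.torsion ℤ A) (∑ i, z i • b i)
    have h2 : (Submodule.Quotient.mk (⟨P, hmem P hP⟩ - ⟨R, hmem R hR⟩ - (m:ℤ) • w) : Q) = 0 := by
      rw [Submodule.Quotient.mk_sub, Submodule.Quotient.mk_sub, Submodule.Quotient.mk_smul]
      rw [Submodule.mkQ_apply] at hw
      rw [hw]
      apply b.repr.injective
      ext i
      simp only [map_sub, map_smul, map_sum, Module.Basis.repr_self, map_zero, Finsupp.coe_sub,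
        Pi.sub_apply, Finsupp.coe_smul, Pi.smul_apply, Finsupp.coe_zero, Pi.zero_apply,
        Finsupp.finsetSum_apply, hz]
      simp [Finsupp.single_apply]
    rw [Submodule.Quotient.mk_eq_zero, Submodule.mem_torsion_iff] at h2
    obtain ⟨k, hk⟩ := h2
    have hk0 : (k:ℤ) ≠ 0 := nonZeroDivisors.ne_zero k.2
    have hk1 : ((k:ℤ)) • (P - R - (m:ℤ) • (w:G)) = 0 := by
      rw [Submonoid.smul_def] at hk
      have := congrArg (Subtype.val) hk
      simpa using this
    have hk2 : (k:ℤ).natAbs • (P - R - (m:ℤ) • (w:G)) = 0 := by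
      have := hk1
      rcases Int.natAbs_eq (k:ℤ) with e | e
      · rw [e, natCast_zsmul] at this; exact this
      · rw [e, neg_zsmul, natCast_zsmul, neg_eq_zero] at this; exact this
    have hkn : (k:ℤ).natAbs ≠ 0 := by simp [hk0]
    have h3 := hq.add_tors hkn (Q := (m:ℤ) • (w:G)) hk2
    rw [sub_add_cancel, hq.zsmul] at h3
    have h4 := hq.add_le q0 P (-R)
    rw [hq.neg, ← sub_eq_add_neg] at h4
    have h5 : q (w:G) < μ := by
      have := hS P hP
      have := hS R hR
      have hm' : (0:ℝ) < m^2 := by positivity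
      by_contra hc
      push Not at hc
      have := mul_le_mul_of_nonneg_left hc hm'.le
      push_cast at h3
      linarith
    obtain ⟨l, hl, hl'⟩ := (isOfFinAddOrder_iff_nsmul_eq_zero).1 (hμ _ h5)
    refine isOfFinAddOrder_iff_nsmul_eq_zero.2 ⟨l * (k:ℤ).natAbs, by positivity, ?_⟩
    have : P - R = (P - R - (m:ℤ) • (w:G)) + (m:ℤ) • (w:G) := by abel
    rw [this, smul_add, mul_smul, hk2, smul_zero, zero_add, mul_comm, mul_smul, smul_comm l, hl',
      smul_zero, smul_zero]
  have := Finset.card_le_mul_card_image (f := φ) S T.card (by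
    intro y hy
    obtain ⟨R, hR, rfl⟩ := Finset.mem_image.1 hy
    apply Finset.card_le_card_of_injOn (fun P => P - R)
    · intro P hP
      simp only [coe_filter, Set.mem_ofPred_eq] at hP
      exact key P hP.1 R hR hP.2
    · intro P _ P' _ h
      exact sub_left_injective h)
  refine this.trans (Nat.mul_le_mul_left _ ?_)
  calc _ ≤ Fintype.card (Fin n → ZMod m) := Finset.card_le_univ _
    _ = m^n := by simp [ZMod.card]
    _ ≤ m^r := Nat.pow_le_pow_right hm hnr
end

noncomputable section

theorem sum_q {G : Type*} [AddCommGroup G] {q : G → ℝ} (hq : Quad q) (q0 : ∀ P, 0 ≤ q P)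
    {r : ℕ} (hr : ¬ ∃ P : Fin (r+1) → G, LinearIndependent ℤ P) {μ : ℝ} (μ0 : 0 < μ)
    (hμ : ∀ P, q P < μ → IsOfFinAddOrder P) (T : Finset G) (hT : ∀ P : G, IsOfFinAddOrder P → P ∈ T)
    (S : Finset G) (hS : ∀ P ∈ S, μ ≤ q P) {j : ℝ} (hj : 0 < j) (hrj : r < 2*j) :
    ∑ P ∈ S, (q P)^(-j) ≤ T.card * 8^r * (1-(2:ℝ)^(r-2*j))⁻¹ * μ^(-j) := by
  classical
  have hn : ∀ P, ∃ n : ℕ, P ∈ S → 4^n*μ ≤ q P ∧ q P < 4^(n+1)*μ := by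
    intro P
    by_cases hP : P ∈ S
    · obtain ⟨n, h1, h2⟩ := exists_nat_pow_near (x := q P/μ) (y := 4)
        ((one_le_div μ0).2 (hS P hP)) (by norm_num)
      exact ⟨n, fun _ => ⟨(le_div_iff₀ μ0).1 h1, (div_lt_iff₀ μ0).1 h2⟩⟩
    · exact ⟨0, fun h => absurd h hP⟩
  choose n hn using hn
  set ρ : ℝ := (2:ℝ)^(r-2*j) with hρ
  have ρ0 : 0 < ρ := Real.rpow_pos_of_pos (by norm_num) _
  have ρ1 : ρ < 1 := Real.rpow_lt_one_of_one_lt_of_neg (by norm_num) (by linarith)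
  obtain ⟨N, hN⟩ : ∃ N, ∀ P ∈ S, n P ∈ Finset.range N := by
    refine ⟨S.sup n + 1, fun P hP => Finset.mem_range.2 (Nat.lt_succ_of_le (Finset.le_sup hP))⟩
  rw [← Finset.sum_fiberwise_of_maps_to hN]
  have step : ∀ k ∈ Finset.range N, ∑ P ∈ S with n P = k, (q P)^(-j) ≤
      (T.card * 8^r * μ^(-j)) * ρ^k := by
    intro k _
    have h1 := count_pts hq q0 hr hμ T hT (S.filter (fun P => n P = k)) (B := 4^(k+1)*μ)
      (by
        intro P hP
        rw [Finset.mem_filter] at hP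
        have := (hn P hP.1).2.le
        rwa [hP.2] at this) (m := 2^(k+3)) (Nat.one_le_two_pow) (by
        have : ((2:ℕ)^(k+3) : ℕ)^2 * μ = 64 * (4^k * μ) := by
          push_cast
          rw [← pow_mul, mul_comm (k+3) 2, pow_mul]; norm_num; ring
        push_cast at this ⊢
        rw [this, pow_succ]
        have : 0 < 4^k*μ := by positivity
        linarith)
    have h2 : ∑ P ∈ S with n P = k, (q P)^(-j) ≤ (S.filter (fun P => n P = k)).card • (4^k*μ)^(-j) := by
      apply Finset.sum_le_card_nsmul
      intro P hP
      rw [Finset.mem_filter] at hP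
      have := (hn P hP.1).1
      rw [hP.2] at this
      exact Real.rpow_le_rpow_of_nonpos (by positivity) this (by linarith)
    refine h2.trans ?_
    rw [nsmul_eq_mul]
    have h3 : ((S.filter (fun P => n P = k)).card : ℝ) ≤ T.card * (2^(k+3))^r := by exact_mod_cast h1
    refine (mul_le_mul_of_nonneg_right h3 (by positivity)).trans (le_of_eq ?_)
    have h4 : ρ^k = (2^k)^r * ((4:ℝ)^k)^(-j) := by
      rw [hρ, sub_eq_add_neg, Real.rpow_add (by norm_num), mul_pow]
      congr 1
      · rw [Real.rpow_natCast, ← pow_mul, ← pow_mul, mul_comm]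
      · rw [← Real.rpow_natCast, ← Real.rpow_mul (by norm_num), ← Real.rpow_natCast,
          ← Real.rpow_mul (by norm_num), show (4:ℝ) = 2^(2:ℝ) by norm_num, ← Real.rpow_mul (by norm_num)]
        congr 1; ring
    rw [Real.mul_rpow (by positivity) μ0.le, h4, pow_add, mul_pow]
    norm_num
    ring
  refine (Finset.sum_le_sum step).trans ?_
  rw [← Finset.mul_sum]
  have h5 : ∑ i ∈ Finset.range N, ρ^i ≤ (1-ρ)⁻¹ := by
    rw [← tsum_geometric_of_lt_one ρ0.le ρ1]
    exact (summable_geometric_of_lt_one ρ0.le ρ1).sum_le_tsum _ (fun i _ => by positivity)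
  calc _ ≤ (T.card * 8^r * μ^(-j)) * (1-ρ)⁻¹ := by gcongr
    _ = _ := by ring
end

noncomputable section
open Height

/-- Sum over n of 1/(n log(n+2)^j). -/
theorem sum_log {j : ℝ} (hj : 1 < j) : Summable fun n : ℕ => (n:ℝ)⁻¹ * (Real.log (n+2))^(-j) := by
  have hlog : ∀ n : ℕ, 0 < Real.log ((n:ℝ)+2) := fun n => Real.log_pos (by
    have : (0:ℝ) ≤ n := Nat.cast_nonneg n
    linarith)
  rw [← summable_condensed_iff_of_nonneg]
  · have h1 : Summable fun k : ℕ => (Real.log 2)^(-j) * ((k:ℝ)^(-j)) :=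
      (Real.summable_nat_rpow.2 (by linarith)).mul_left _
    rw [← summable_nat_add_iff 1] at h1 ⊢
    refine Summable.of_nonneg_of_le (fun k => ?_) (fun k => ?_) h1
    · have := hlog (2^(k+1)); positivity
    · have h2 : (0:ℝ) < 2^(k+1) := by positivity
      have hl2 : 0 < Real.log 2 := Real.log_pos (by norm_num)
      push_cast
      rw [← mul_assoc, mul_inv_cancel₀ h2.ne', one_mul,
        ← Real.mul_rpow hl2.le (by positivity)]
      apply Real.rpow_le_rpow_of_nonpos (by positivity) _ (by linarith)
      have : Real.log 2 * ((k:ℝ)+1) = Real.log (2^(k+1)) := by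
        rw [Real.log_pow]; push_cast; ring
      rw [this]
      exact Real.log_le_log h2 (by linarith)
  · intro n
    have := hlog n; positivity
  · intro m n hm hmn
    have := hlog m
    have := hlog n
    have h1 : (m:ℝ) ≤ n := by exact_mod_cast hmn
    have h2 : (0:ℝ) < m := by exact_mod_cast hm
    apply mul_le_mul
    · gcongr
    · apply Real.rpow_le_rpow_of_nonpos (by positivity) _ (by linarith)
      apply Real.log_le_log (by positivity) (by linarith)
    · positivity
    · positivity

variable {a b c : ℤ}

theorem vx_fin (B : ℝ) : ∃ V : Finset (ℚ × ℚ), ∀ D : ℤ, D ≠ 0 → ∀ P : (twist a b c D).Point,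
    Hn a b c D P ≤ B → vx a b c D P ∈ V := by
  classical
  refine ⟨insert (1,0) ((northcott B).toFinset.image (fun x => (x,1))), fun D hD P hP => ?_⟩
  by_cases h : P = 0
  · subst h; rw [vx_zero]; simp
  · obtain ⟨x, y, e, _⟩ := vx_y hD h
    rw [Hn_eq e] at hP
    rw [e]
    simp [hP]

theorem pts_fin (B : ℝ) : ∃ M : ℕ, ∀ D : ℤ, D ≠ 0 → ∃ T : Finset (twist a b c D).Point,
    T.card ≤ M ∧ ∀ P, Hn a b c D P ≤ B → P ∈ T := by
  classical
  obtain ⟨V, hV⟩ := vx_fin (a := a) (b := b) (c := c) B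
  refine ⟨2 * V.card, fun D hD => ?_⟩
  let g : ℚ × ℚ → Finset (twist a b c D).Point := fun w =>
    if h : ∃ P, vx a b c D P = w then {h.choose, -h.choose} else ∅
  refine ⟨V.biUnion g, ?_, ?_⟩
  · rw [mul_comm]
    apply Finset.card_biUnion_le_card_mul
    intro w _
    simp only [g]
    split_ifs
    · exact Finset.card_le_two
    · simp
  · intro P hP
    rw [Finset.mem_biUnion]
    refine ⟨_, hV D hD P hP, ?_⟩
    have h : ∃ P', vx a b c D P' = vx a b c D P := ⟨P, rfl⟩
    simp only [g]
    rw [dif_pos h]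
    rcases vx_eq hD h.choose_spec with e | e
    · simp [e]
    · simp [e]

theorem tors_iff {C : ℝ} {D : ℤ} (hD : D ≠ 0) {q : (twist a b c D).Point → ℝ}
    (h1 : ∀ P, |q P - Hn a b c D P| ≤ C) (h2 : Quad q) (P : (twist a b c D).Point) :
    IsOfFinAddOrder P ↔ q P = 0 := by
  constructor
  · intro h
    obtain ⟨n, hn, e⟩ := isOfFinAddOrder_iff_nsmul_eq_zero.1 h
    exact h2.tors hn.ne' e
  · intro h
    obtain ⟨M, hM⟩ := pts_fin (a := a) (b := b) (c := c) C
    obtain ⟨T, _, hT⟩ := hM D hD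
    rw [← finite_multiples]
    refine T.finite_toSet.subset ?_
    rintro _ ⟨n, rfl⟩
    apply hT
    have := abs_le.1 (h1 (n • P))
    rw [h2.nsmul, h] at this
    simp only [] at *
    linarith [this.1]

theorem mu_small {C : ℝ} {D : ℤ} (hD : D ≠ 0) {q : (twist a b c D).Point → ℝ}
    (h1 : ∀ P, |q P - Hn a b c D P| ≤ C) (h0 : ∀ P, 0 ≤ q P) (h2 : Quad q) :
    ∃ μ > 0, ∀ P, q P < μ → IsOfFinAddOrder P := by
  classical
  obtain ⟨M, hM⟩ := pts_fin (a := a) (b := b) (c := c) (1+C)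
  obtain ⟨T, _, hT⟩ := hM D hD
  have hpos : ∀ P, ¬ IsOfFinAddOrder P → 0 < q P := fun P hP =>
    lt_of_le_of_ne (h0 P) (fun h => hP ((tors_iff hD h1 h2 P).2 h.symm))
  let T' := insert (1:ℝ) ((T.filter (fun P => ¬ IsOfFinAddOrder P)).image q)
  have hne : T'.Nonempty := ⟨1, by simp [T']⟩
  refine ⟨T'.min' hne, ?_, fun P hP => ?_⟩
  · refine (Finset.lt_min'_iff _ hne).2 ?_
    intro x hx
    simp only [T', Finset.mem_insert, Finset.mem_image, Finset.mem_filter] at hx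
    rcases hx with rfl | ⟨P, ⟨_, hP⟩, rfl⟩
    · norm_num
    · exact hpos P hP
  · by_contra hn
    replace hP := (Finset.lt_min'_iff _ hne).1 hP
    have h3 : q P < 1 := hP 1 (by simp [T'])
    have h4 : P ∈ T := hT P (by linarith [(abs_le.1 (h1 P)).1])
    exact lt_irrefl _ (hP (q P) (by
      simp only [T', Finset.mem_insert, Finset.mem_image, Finset.mem_filter]
      exact Or.inr ⟨P, ⟨h4, hn⟩, rfl⟩))
end

noncomputable section
open Height

variable {a b c : ℤ}

lemma sqf (n : ℤ) (hn : n ≠ 0) : ∃ (D : ℤ) (N : ℕ), Squarefree D ∧ 0 < N ∧ n = D * N^2 := by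
  obtain ⟨s, N, hN, h⟩ := Nat.sq_mul_squarefree n.natAbs
  have hn' : n.natAbs ≠ 0 := by simpa using hn
  have hN0 : 0 < N := by
    rcases Nat.eq_zero_or_pos N with h0 | h0
    · subst h0; simp at hN; omega
    · exact h0
  refine ⟨n.sign * s, N, ?_, hN0, ?_⟩
  · rw [← Int.squarefree_natAbs, Int.natAbs_mul, Int.natAbs_sign_of_ne_zero hn, one_mul]
    simpa using h
  · have : (n.natAbs : ℤ) = N^2 * s := by exact_mod_cast hN.symm
    have h2 := Int.sign_mul_natAbs n
    rw [this] at h2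
    linarith

lemma lift_sq {D F : ℤ} {z : ℚ} (h : (F:ℚ) = D * z^2) : ∃ D' : ℤ, D = D' * (z.den:ℤ)^2 ∧ F = D' * z.num^2 := by
  have hz : (z.den:ℚ) ≠ 0 := by exact_mod_cast z.den_ne_zero
  have h1 : F * (z.den:ℤ)^2 = D * z.num^2 := by
    have h2 : (F:ℚ) * (z.den)^2 = D * z.num^2 := by
      nth_rw 1 [h, ← Rat.num_div_den z]; field_simp
    exact_mod_cast h2
  have hc : IsCoprime ((z.den:ℤ)^2) (z.num^2) := by
    apply IsCoprime.pow
    rw [Int.isCoprime_iff_gcd_eq_one, Int.gcd_comm]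
    have := z.reduced
    simpa [Int.gcd, Nat.Coprime] using this
  obtain ⟨D', hD'⟩ : (z.den:ℤ)^2 ∣ D := hc.dvd_of_dvd_mul_right ⟨F, by linarith⟩
  refine ⟨D', by linarith, ?_⟩
  have hz' : (z.den:ℤ)^2 ≠ 0 := pow_ne_zero _ (by exact_mod_cast z.den_ne_zero)
  apply mul_right_cancel₀ hz'
  rw [h1, hD']; ring

lemma F_bound (a b c : ℤ) : ∃ C : ℝ, 0 ≤ C ∧ ∀ u v : ℤ, Fbin a b c u v ≠ 0 →
    Real.log |(Fbin a b c u v : ℝ)| ≤ C + 4 * ht u v := by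
  have hK : (1:ℝ) ≤ 1 + |(a:ℝ)| + |(b:ℝ)| + |(c:ℝ)| := by
    linarith [abs_nonneg (a:ℝ), abs_nonneg (b:ℝ), abs_nonneg (c:ℝ)]
  refine ⟨Real.log (1 + |(a:ℝ)| + |(b:ℝ)| + |(c:ℝ)|), Real.log_nonneg hK, fun u v h => ?_⟩
  set M := Real.exp (ht u v)
  have hle : ∀ w : ℤ, Real.log |(w:ℝ)| ≤ ht u v → |(w:ℝ)| ≤ M := by
    intro w hw
    by_cases h0 : w = 0
    · subst h0; simp; positivity
    · have : 0 < |(w:ℝ)| := abs_pos.2 (by exact_mod_cast h0)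
      rwa [← Real.log_le_iff_le_exp this]
  have hu : |(u:ℝ)| ≤ M := hle u (le_max_of_le_right (le_max_left _ _))
  have hv : |(v:ℝ)| ≤ M := hle v (le_max_of_le_right (le_max_right _ _))
  have hF : |(Fbin a b c u v : ℝ)| ≤ (1 + |(a:ℝ)| + |(b:ℝ)| + |(c:ℝ)|) * M^4 := by
    unfold Fbin
    push_cast
    rw [abs_mul]
    have h1 : |(u:ℝ)^3 + a*u^2*v + b*u*v^2 + c*v^3| ≤ M^3 + |(a:ℝ)| * M^2*M + |(b:ℝ)| * M*M^2 + |(c:ℝ)| * M^3 := by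
      refine (abs_add_le _ _).trans (add_le_add ((abs_add_le _ _).trans (add_le_add ((abs_add_le _ _).trans (add_le_add ?_ ?_)) ?_)) ?_) <;>
      · simp only [abs_mul, abs_pow]; gcongr
    calc _ ≤ M * (M^3 + |(a:ℝ)| * M^2*M + |(b:ℝ)| * M*M^2 + |(c:ℝ)| * M^3) := by gcongr
      _ = _ := by ring
  have hpos : 0 < |(Fbin a b c u v : ℝ)| := abs_pos.2 (by exact_mod_cast h)
  calc _ ≤ Real.log ((1 + |(a:ℝ)| + |(b:ℝ)| + |(c:ℝ)|) * M^4) := Real.log_le_log hpos hF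
    _ = _ := by
      rw [Real.log_mul (by positivity) (by positivity), Real.log_pow, Real.log_exp]; norm_num

lemma Fbin_f {u v : ℤ} (hv : v ≠ 0) : ((Fbin a b c u v : ℤ) : ℚ) =
    v^4 * (((u:ℚ)/v)^3 + a*((u:ℚ)/v)^2 + b*((u:ℚ)/v) + c) := by
  have : (v:ℚ) ≠ 0 := by exact_mod_cast hv
  unfold Fbin; push_cast; field_simp

lemma two_tors {D : ℤ} (hD : D ≠ 0) {P : (twist a b c D).Point} {x : ℚ} (e : vx a b c D P = (x,1))
    (h : x^3+a*x^2+b*x+c = 0) : IsOfFinAddOrder P := by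
  obtain ⟨l, hl, h0, h1, h2⟩ := rel_all (a := a) (b := b) (c := c) hD P P
  rw [sub_self, vx_zero, e] at h1
  simp only [T1] at h1
  have h3 : l * (vx a b c D (P+P)).2 = 0 := by
    have : l * (vx a b c D (P+P)).2 = 4*(x^3+a*x^2+b*x+c) := by linear_combination -h1
    rw [this, h, mul_zero]
  have h4 := (mul_eq_zero.1 h3).resolve_left hl
  rw [vx_zero_iff] at h4
  exact isOfFinAddOrder_iff_nsmul_eq_zero.2 ⟨2, by norm_num, by rw [two_nsmul, h4]⟩

lemma D_le (a b c : ℤ) : ∃ C : ℝ, 0 ≤ C ∧ ∀ D : ℤ, Squarefree D → ∀ x y : ℚ, D*y^2 = x^3+a*x^2+b*x+c → y ≠ 0 →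
    Real.log (|(D:ℝ)| + 2) ≤ C + 4 * logHeight₁ x := by
  obtain ⟨C, C0, hC⟩ := F_bound a b c
  refine ⟨C + 4 + Real.log 3, by have := Real.log_nonneg (show (1:ℝ) ≤ 3 by norm_num); positivity, ?_⟩
  intro D hD x y h hy
  have hD0 : D ≠ 0 := hD.ne_zero
  have hv : (x.den:ℤ) ≠ 0 := by exact_mod_cast x.den_ne_zero
  have hx : ((x.num:ℤ):ℚ)/((x.den:ℤ):ℚ) = x := by
    have := Rat.num_div_den x
    exact_mod_cast this
  have hF := Fbin_f (a := a) (b := b) (c := c) (u := x.num) hv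
  rw [hx, ← h] at hF
  obtain ⟨D', h1, h2⟩ := lift_sq (D := D) (F := Fbin a b c x.num x.den) (z := (x.den:ℤ)^2*y) (by rw [hF]; ring)
  have hF0 : Fbin a b c x.num x.den ≠ 0 := by
    have : ((Fbin a b c x.num x.den : ℤ) : ℚ) ≠ 0 := by
      rw [hF]
      have : ((x.den:ℤ):ℚ) ≠ 0 := by exact_mod_cast hv
      have : (D:ℚ) ≠ 0 := by exact_mod_cast hD0
      positivity
    exact_mod_cast this
  have hle : |(D:ℝ)| ≤ |(Fbin a b c x.num x.den : ℝ)| := by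
    have h3 : IsUnit ((((x.den:ℤ):ℚ)^2*y).den : ℤ) := hD _ ⟨D', by rw [h1]; ring⟩
    have h4 : ((((x.den:ℤ):ℚ)^2*y).den : ℤ)^2 = 1 := by
      rcases Int.isUnit_iff.1 h3 with h | h <;> rw [h] <;> norm_num
    rw [h4, mul_one] at h1
    subst h1
    have : |D| ≤ |Fbin a b c x.num x.den| := by
      rw [h2, abs_mul]
      apply le_mul_of_one_le_right (abs_nonneg _)
      apply Int.one_le_abs
      intro h0
      rw [h0, mul_zero] at h2
      exact hF0 h2
    exact_mod_cast this
  have hD1 : (1:ℝ) ≤ |(D:ℝ)| := by exact_mod_cast Int.one_le_abs hD0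
  have := (ht_bounds (u := x.num) (v := x.den) (by simpa [Int.gcd] using x.reduced) hv).2
  rw [hx] at this
  calc Real.log (|(D:ℝ)|+2) ≤ Real.log (3 * |(Fbin a b c x.num x.den : ℝ)|) :=
        Real.log_le_log (by positivity) (by linarith)
    _ = Real.log 3 + Real.log |(Fbin a b c x.num x.den : ℝ)| := Real.log_mul (by norm_num) (by linarith)
    _ ≤ _ := by linarith [hC _ _ hF0]
end

noncomputable section
open Height

variable {a b c : ℤ}

lemma frac_eq {u v u' v' : ℤ} (h : Int.gcd u v = 1) (h' : Int.gcd u' v' = 1) (hv : v ≠ 0) (hv' : v' ≠ 0)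
    (e : (u:ℚ)/v = u'/v') : (u, v) = (u', v') ∨ (u, v) = (-u', -v') := by
  have hvq : (v:ℚ) ≠ 0 := by exact_mod_cast hv
  have hvq' : (v':ℚ) ≠ 0 := by exact_mod_cast hv'
  rw [div_eq_div_iff hvq hvq'] at e
  have e' : u * v' = u' * v := by exact_mod_cast e
  have c1 : IsCoprime u v := Int.isCoprime_iff_gcd_eq_one.2 h
  have c2 : IsCoprime u' v' := Int.isCoprime_iff_gcd_eq_one.2 h'
  have d1 : v ∣ v' := c1.symm.dvd_of_dvd_mul_left ⟨u', by linarith⟩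
  have d2 : v' ∣ v := c2.symm.dvd_of_dvd_mul_left ⟨u, by linarith⟩
  rcases Int.natAbs_eq_natAbs_iff.1 (Int.natAbs_eq_of_dvd_dvd d1 d2) with r | r
  · left
    subst r
    have := mul_right_cancel₀ hv e'
    rw [this]
  · right
    subst r
    have : u = -u' := by
      apply mul_right_cancel₀ hv'
      linarith
    rw [this]

theorem sum_fiber (hf : DistinctRoots a b c) {j : ℝ} (hj : 0 < j) (hR : RankBound a b c j) :
    ∃ K L : ℝ, ∀ D : ℤ, Squarefree D → ∃ CD : ℝ,
      (L < Real.log (|(D:ℝ)|+2) → CD ≤ K * Real.log (|(D:ℝ)|+2)^(-j)) ∧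
      ∀ S : Finset (ℤ × ℤ), (∀ p ∈ S, p ∈ Psi a b c ∧ ∃ N : ℤ, Fbin a b c p.1 p.2 = D * N^2) →
        ∑ p ∈ S, ht p.1 p.2 ^ (-j) ≤ CD := by
  classical
  have hd := dsc_ne hf
  obtain ⟨C, C0, hC⟩ := heights hd
  obtain ⟨C2, C20, hC2⟩ := D_le a b c
  obtain ⟨M, hM⟩ := pts_fin (a := a) (b := b) (c := c) C
  obtain ⟨r, hr⟩ : ∃ r, ⌈2*j⌉₊ = r+1 := Nat.exists_eq_succ_of_ne_zero (Nat.ceil_pos.2 (by linarith)).ne'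
  have hrj : (r:ℝ) < 2*j := by
    have : r < ⌈2*j⌉₊ := by omega
    exact Nat.lt_ceil.1 this
  have ρ1 : (2:ℝ)^(r-2*j) < 1 := Real.rpow_lt_one_of_one_lt_of_neg (by norm_num) (by linarith)
  set K0 : ℝ := M * 8^r * (1-(2:ℝ)^(r-2*j))⁻¹ with hK0
  have hinv : 0 ≤ (1-(2:ℝ)^(r-2*j))⁻¹ := inv_nonneg.2 (by linarith)
  refine ⟨2 * ((1+C)^j * (K0 * (8:ℝ)^j)), 2 * (C2 + 4*C), fun D hD => ?_⟩
  have hD0 := hD.ne_zero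
  have hDq : (D:ℚ) ≠ 0 := by exact_mod_cast hD0
  obtain ⟨q, q1, q0, qq⟩ := hC D hD0
  obtain ⟨T, hTM, hT⟩ := hM D hD0
  have hT' : ∀ P, IsOfFinAddOrder P → P ∈ T := by
    intro P hP
    apply hT
    have := (tors_iff hD0 q1 qq P).1 hP
    have := (abs_le.1 (q1 P)).1
    linarith
  have hr' : ¬ ∃ P : Fin (r+1) → (twist a b c D).Point, LinearIndependent ℤ P := by
    have := hR D hD0
    rwa [hr] at this
  -- general bound
  have gen : ∀ μ > 0, (∀ P, q P < μ → IsOfFinAddOrder P) → ∀ S : Finset (ℤ × ℤ),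
      (∀ p ∈ S, p ∈ Psi a b c ∧ ∃ N : ℤ, Fbin a b c p.1 p.2 = D * N^2) → ∃ I : Finset (twist a b c D).Point,
      (∀ P ∈ I, ∃ x y : ℚ, vx a b c D P = (x,1) ∧ D*y^2 = x^3+a*x^2+b*x+c ∧ y ≠ 0) ∧
      ∑ p ∈ S, ht p.1 p.2 ^ (-j) ≤ 2 * ((I.filter (fun P => IsOfFinAddOrder P)).card + (1+C)^j * (K0 * μ^(-j))) := by
    intro μ μ0 hμ S hS
    have hpt : ∀ p : ℤ × ℤ, ∃ P : (twist a b c D).Point, p ∈ S → vx a b c D P = ((p.1:ℚ)/p.2, 1) ∧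
       ∃ x y : ℚ, vx a b c D P = (x,1) ∧ D*y^2 = x^3+a*x^2+b*x+c ∧ y ≠ 0 := by
      intro p
      by_cases hp : p ∈ S
      · obtain ⟨⟨h1, h2⟩, N, hN⟩ := hS p hp
        have hv : p.2 ≠ 0 := fun h => h2 (by simp [Fbin, h])
        have hvq : (p.2:ℚ) ≠ 0 := by exact_mod_cast hv
        have hF := Fbin_f (a := a) (b := b) (c := c) (u := p.1) hv
        rw [hN] at hF
        have e : (D:ℚ) * ((N:ℚ)/p.2^2)^2 = ((p.1:ℚ)/p.2)^3+a*((p.1:ℚ)/p.2)^2+b*((p.1:ℚ)/p.2)+c := by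
          push_cast at hF
          have h4 : (p.2:ℚ)^4 ≠ 0 := pow_ne_zero _ hvq
          apply mul_left_cancel₀ h4
          rw [← hF]; field_simp
        refine ⟨.some _ _ (pt_ns hd hD0 e), fun _ => ⟨vx_pt hD0 _, _, _, vx_pt hD0 _, e, ?_⟩⟩
        have : (N:ℚ) ≠ 0 := by
          intro h0
          have : N = 0 := by exact_mod_cast h0
          rw [hN, this] at h2
          simp at h2
        positivity
      · exact ⟨0, fun h => absurd h hp⟩
    choose Pt hPt using hpt
    let I := S.image Pt
    refine ⟨I, ?_, ?_⟩
    · intro P hP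
      obtain ⟨p, hp, rfl⟩ := Finset.mem_image.1 hP
      exact (hPt p hp).2
    let g : (twist a b c D).Point → ℝ := fun P => if IsOfFinAddOrder P then 1 else (1+C)^j * (q P)^(-j)
    have g0 : ∀ P, 0 ≤ g P := by
      intro P
      simp only [g]
      split_ifs
      · norm_num
      · have := q0 P; positivity
    have s1 : ∑ p ∈ S, ht p.1 p.2 ^ (-j) ≤ ∑ p ∈ S, g (Pt p) := by
      apply Finset.sum_le_sum
      intro p hp
      have ht1 := ht_pos p.1 p.2
      simp only [g]
      split_ifs with ho
      · exact Real.rpow_le_one_of_one_le_of_nonpos ht1 (by linarith)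
      · have hq0 : 0 < q (Pt p) := lt_of_le_of_ne (q0 _) (fun h => ho ((tors_iff hD0 q1 qq _).2 h.symm))
        obtain ⟨⟨h1, h2⟩, _⟩ := hS p hp
        have hv : p.2 ≠ 0 := fun h => h2 (by simp [Fbin, h])
        have hb := (ht_bounds h1 hv).1
        rw [← Hn_eq (hPt p hp).1] at hb
        have := (abs_le.1 (q1 (Pt p))).2
        have hle : q (Pt p) / (1+C) ≤ ht p.1 p.2 := by
          rw [div_le_iff₀ (by linarith)]
          nlinarith
        calc ht p.1 p.2 ^ (-j) ≤ (q (Pt p) / (1+C))^(-j) :=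
              Real.rpow_le_rpow_of_nonpos (by positivity) hle (by linarith)
          _ = (1+C)^j * (q (Pt p))^(-j) := by
              rw [Real.div_rpow (q0 _) (by linarith), Real.rpow_neg (by linarith : 0 ≤ 1+C) j, div_inv_eq_mul, mul_comm]
    have s2 : ∑ p ∈ S, g (Pt p) ≤ 2 * ∑ P ∈ I, g P := by
      rw [Finset.sum_comp g Pt, Finset.mul_sum]
      apply Finset.sum_le_sum
      intro P hP
      rw [nsmul_eq_mul]
      apply mul_le_mul_of_nonneg_right _ (g0 P)
      obtain ⟨p, hp, rfl⟩ := Finset.mem_image.1 hP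
      have : S.filter (fun p' => Pt p' = Pt p) ⊆ {p, (-p.1, -p.2)} := by
        intro p' hp'
        rw [Finset.mem_filter] at hp'
        obtain ⟨⟨h1, h2⟩, _⟩ := hS p hp
        have hv : p.2 ≠ 0 := fun h => h2 (by simp [Fbin, h])
        obtain ⟨⟨h1', h2'⟩, _⟩ := hS p' hp'.1
        have hv' : p'.2 ≠ 0 := fun h => h2' (by simp [Fbin, h])
        have e1 := (hPt p hp).1
        have e2 := (hPt p' hp'.1).1
        rw [hp'.2, e1] at e2
        rcases frac_eq h1' h1 hv' hv (Prod.ext_iff.1 e2).1.symm with h | h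
        · exact Finset.mem_insert.2 (Or.inl h)
        · simp [← h]
      exact_mod_cast (Finset.card_le_card this).trans Finset.card_le_two
    have s3 : ∑ P ∈ I, g P ≤ (I.filter (fun P => IsOfFinAddOrder P)).card + (1+C)^j * (K0 * μ^(-j)) := by
      rw [← Finset.sum_filter_add_sum_filter_not I (fun P => IsOfFinAddOrder P)]
      apply add_le_add
      · rw [Finset.sum_congr rfl (g := fun _ => (1:ℝ))]
        · simp
        · intro P hP
          simp [g, (Finset.mem_filter.1 hP).2]
      · rw [Finset.sum_congr rfl (g := fun P => (1+C)^j * (q P)^(-j))]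
        · rw [← Finset.mul_sum]
          apply mul_le_mul_of_nonneg_left _ (by positivity)
          refine (sum_q qq q0 hr' μ0 hμ T hT' _ ?_ hj hrj).trans ?_
          · intro P hP
            by_contra hc
            exact (Finset.mem_filter.1 hP).2 (hμ P (not_le.1 hc))
          · rw [hK0]
            gcongr
        · intro P hP
          simp [g, (Finset.mem_filter.1 hP).2]
    linarith
  by_cases hL : 2 * (C2 + 4*C) < Real.log (|(D:ℝ)|+2)
  · have lpos : 0 < Real.log (|(D:ℝ)|+2) := by
      have : 0 ≤ 2 * (C2 + 4*C) := by positivity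
      linarith
    have big : ∀ P, (∃ x y : ℚ, vx a b c D P = (x,1) ∧ D*y^2 = x^3+a*x^2+b*x+c ∧ y ≠ 0) →
        Real.log (|(D:ℝ)|+2)/8 ≤ q P := by
      rintro P ⟨x, y, e, h, hy⟩
      have := hC2 D hD x y h hy
      rw [← Hn_eq e] at this
      have := (abs_le.1 (q1 P)).1
      linarith
    have hμ : ∀ P, q P < Real.log (|(D:ℝ)|+2)/8 → IsOfFinAddOrder P := by
      intro P hP
      by_cases h0 : P = 0
      · subst h0; exact IsOfFinAddOrder.zero
      obtain ⟨x, y, e, h⟩ := vx_y hD0 h0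
      by_cases hy : y = 0
      · subst hy
        exact two_tors hD0 e (by rw [← h]; simp)
      · exact absurd (big P ⟨x, y, e, h, hy⟩) (not_le.2 hP)
    refine ⟨2 * ((1+C)^j * (K0 * (8:ℝ)^j)) * Real.log (|(D:ℝ)|+2)^(-j), fun _ => le_rfl, fun S hS => ?_⟩
    obtain ⟨I, hI, h⟩ := gen _ (by positivity) hμ S hS
    have : I.filter (fun P => IsOfFinAddOrder P) = ∅ := by
      rw [Finset.filter_eq_empty_iff]
      intro P hP ho
      have := big P (hI P hP)
      rw [(tors_iff hD0 q1 qq P).1 ho] at this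
      linarith
    rw [this] at h
    refine h.trans (le_of_eq ?_)
    rw [Real.div_rpow lpos.le (by norm_num), Real.rpow_neg (by norm_num : (0:ℝ) ≤ 8), div_inv_eq_mul]
    simp; ring
  · obtain ⟨μ, μ0, hμ⟩ := mu_small hD0 q1 q0 qq
    refine ⟨2 * (T.card + (1+C)^j * (K0 * μ^(-j))), fun h => absurd h hL, fun S hS => ?_⟩
    obtain ⟨I, hI, h⟩ := gen μ μ0 hμ S hS
    refine h.trans ?_
    have : ((I.filter (fun P => IsOfFinAddOrder P)).card:ℝ) ≤ T.card := by
      exact_mod_cast Finset.card_le_card (fun P hP => hT' P (Finset.mem_filter.1 hP).2)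
    linarith
end

noncomputable section

variable {a b c : ℤ}

lemma dvd_of_sq {d N t : ℕ} (hd : Squarefree d) (hN : 0 < N) (ht : 1 ≤ t) (h : t^2 ∣ d * N^2) : t ∣ N := by
  obtain ⟨g, t', N', hg, hc, rfl, rfl⟩ := Nat.exists_coprime' (Nat.gcd_pos_of_pos_left N ht)
  have hg2 : 0 < g^2 := by positivity
  have h1 : t'^2 ∣ d * N'^2 := by
    apply Nat.dvd_of_mul_dvd_mul_right hg2
    calc t'^2*g^2 = (t'*g)^2 := by ring
      _ ∣ d * (N'*g)^2 := h
      _ = d * N'^2 * g^2 := by ring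
  have h2 : t'^2 ∣ d := (Nat.Coprime.pow 2 2 hc).dvd_of_dvd_mul_right h1
  have h3 := hd t' (by rwa [← sq])
  rw [Nat.isUnit_iff] at h3
  subst h3
  simp

theorem summable_D {j K : ℝ} (hj : 1 < j) : Summable fun D : ℤ => |(D:ℝ)|⁻¹ * (K * Real.log (|(D:ℝ)|+2)^(-j)) := by
  have h := (sum_log hj).mul_left K
  apply Summable.of_nat_of_neg
  · refine h.congr fun n => ?_
    simp; ring
  · refine h.congr fun n => ?_
    simp; ring

theorem S_summable (hf : DistinctRoots a b c) {j : ℝ} (hj : 1 < j) (hR : RankBound a b c j)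
    (Df : ℤ × ℤ → ℤ) (hDf : ∀ p ∈ Psi a b c, Squarefree (Df p) ∧ ∃ N : ℤ, Fbin a b c p.1 p.2 = Df p * N^2) :
    Summable fun p : Psi a b c => |(Df p.1:ℝ)|⁻¹ * ht p.1.1 p.1.2 ^ (-j) := by
  classical
  obtain ⟨K, L, h⟩ := sum_fiber hf (by linarith) hR
  have h' : ∀ D : ℤ, ∃ CD : ℝ, 0 ≤ CD ∧ (Squarefree D → 
      (L < Real.log (|(D:ℝ)|+2) → CD ≤ K * Real.log (|(D:ℝ)|+2)^(-j)) ∧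
      ∀ S : Finset (ℤ × ℤ), (∀ p ∈ S, p ∈ Psi a b c ∧ ∃ N : ℤ, Fbin a b c p.1 p.2 = D * N^2) →
        ∑ p ∈ S, ht p.1 p.2 ^ (-j) ≤ CD) := by
    intro D
    by_cases hD : Squarefree D
    · obtain ⟨CD, h1, h2⟩ := h D hD
      exact ⟨CD, by simpa using h2 ∅ (by simp), fun _ => ⟨h1, h2⟩⟩
    · exact ⟨0, le_rfl, fun h => absurd h hD⟩
  choose CD hC0 hCD using h'
  let w : ℤ → ℝ := fun D => if Squarefree D then |(D:ℝ)|⁻¹ * CD D else 0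
  have w0 : ∀ D, 0 ≤ w D := by
    intro D
    simp only [w]
    split_ifs
    · have := hC0 D; positivity
    · exact le_rfl
  have hw : Summable w := by
    have hs := summable_D (K := K) hj
    have hfin : {D : ℤ | ¬ L < Real.log (|(D:ℝ)|+2)}.Finite := by
      apply (Set.finite_Icc (-⌈Real.exp L⌉) ⌈Real.exp L⌉).subset
      intro D hD
      rw [Set.mem_ofPred_eq, not_lt, Real.log_le_iff_le_exp (by positivity)] at hD
      rw [Set.mem_Icc, ← abs_le]
      have : (|D| : ℝ) ≤ ⌈Real.exp L⌉ := le_trans (by linarith) (Int.le_ceil _)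
      exact_mod_cast this
    rw [← hfin.summable_compl_iff]
    have hs' := (hfin.summable_compl_iff).2 hs
    refine Summable.of_nonneg_of_le (fun D => w0 _) (fun D => ?_) (hs'.abs)
    have hD : L < Real.log (|(D.1:ℝ)|+2) := by simpa using D.2
    simp only [Function.comp, w]
    split_ifs with hsq
    · refine le_trans ?_ (le_abs_self _)
      have := ((hCD D.1 hsq).1 hD)
      gcongr
    · positivity
  apply summable_of_sum_le (c := ∑' D, w D)
  · intro p
    have := ht_pos p.1.1 p.1.2
    positivity
  · intro S
    rw [← Finset.sum_fiberwise_of_maps_to (t := S.image (fun p => Df p.1)) (g := fun p => Df p.1)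
      (fun p hp => Finset.mem_image_of_mem _ hp)]
    refine le_trans (Finset.sum_le_sum (g := w) ?_) (hw.sum_le_tsum _ (fun D _ => w0 D))
    intro D hD
    obtain ⟨p0, hp0, e0⟩ := Finset.mem_image.1 hD
    have hsq : Squarefree D := by rw [← e0]; exact (hDf p0.1 p0.2).1
    rw [Finset.sum_congr rfl (g := fun p => |(D:ℝ)|⁻¹ * ht p.1.1 p.1.2 ^ (-j))
      (fun p hp => by rw [(Finset.mem_filter.1 hp).2])]
    rw [← Finset.mul_sum]
    simp only [w, if_pos hsq]
    apply mul_le_mul_of_nonneg_left _ (by positivity)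
    have := (hCD D hsq).2 ((S.filter (fun p => Df p.1 = D)).map ⟨Subtype.val, Subtype.val_injective⟩) (by
      intro p hp
      simp only [Finset.mem_map, Finset.mem_filter, Function.Embedding.coeFn_mk] at hp
      obtain ⟨p', ⟨_, h2⟩, rfl⟩ := hp
      refine ⟨p'.2, ?_⟩
      rw [← h2]
      exact (hDf p'.1 p'.2).2)
    rw [Finset.sum_map] at this
    exact this

theorem R_conv (hf : DistinctRoots a b c) {j : ℝ} (hj : 1 < j) (hR : RankBound a b c j) {k : ℝ} (hk : 1 ≤ k) :
    RConv a b c j k Set.univ := by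
  classical
  have hsq : ∀ p : ℤ × ℤ, ∃ (D : ℤ) (N : ℕ), p ∈ Psi a b c → Squarefree D ∧ 0 < N ∧ Fbin a b c p.1 p.2 = D * N^2 := by
    intro p
    by_cases hp : p ∈ Psi a b c
    · obtain ⟨D, N, h⟩ := sqf _ hp.2
      exact ⟨D, N, fun _ => h⟩
    · exact ⟨0, 0, fun h => absurd h hp⟩
  choose Df Nf hDN using hsq
  have h1 := S_summable hf hj hR Df (fun p hp => ⟨(hDN p hp).1, Nf p, (hDN p hp).2.2⟩)
  have h2 : Summable fun n : ℕ => ((n:ℝ)^2)⁻¹ := Real.summable_nat_pow_inv.2 (by norm_num)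
  have h3 := h2.mul_of_nonneg h1 (fun n => by positivity) (fun p => by
    have := ht_pos p.1.1 p.1.2
    positivity)
  let φ : RIdx a b c Set.univ → ℕ × Psi a b c := fun x => (Nf x.1.2 / x.1.1, ⟨x.1.2, x.2.2.1⟩)
  have hdvd : ∀ x : RIdx a b c Set.univ, x.1.1 ∣ Nf x.1.2 := by
    intro x
    obtain ⟨s1, s2, s3⟩ := hDN x.1.2 x.2.2.1
    have h4 := x.2.2.2.2
    rw [s3] at h4
    have h5 : x.1.1^2 ∣ (Df x.1.2).natAbs * (Nf x.1.2)^2 := by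
      have := Int.natAbs_dvd_natAbs.2 h4
      simpa [Int.natAbs_mul, Int.natAbs_pow] using this
    have s1' : Squarefree (Df x.1.2).natAbs := Int.squarefree_natAbs.2 s1
    exact dvd_of_sq s1' s2 x.2.1 h5
  have hφ : Function.Injective φ := by
    intro x y h
    simp only [φ, Prod.mk.injEq, Subtype.mk.injEq] at h
    obtain ⟨e1, e2⟩ := h
    have d1 := hdvd x
    have d2 := hdvd y
    have hN := (hDN x.1.2 x.2.2.1).2.1
    rw [e2] at d1 e1 hN
    have : x.1.1 = y.1.1 := by
      have m1 := Nat.div_mul_cancel d1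
      have m2 := Nat.div_mul_cancel d2
      rw [e1] at m1
      have hpos : 0 < Nf y.1.2 / y.1.1 := Nat.div_pos (Nat.le_of_dvd hN d2) y.2.1
      exact Nat.eq_of_mul_eq_mul_left hpos (m1.trans m2.symm)
    exact Subtype.ext (Prod.ext this e2)
  refine Summable.of_nonneg_of_le (fun x => ?_) (fun x => ?_) (h3.comp_injective hφ)
  · have := ht_pos x.1.2.1 x.1.2.2
    unfold RTerm
    positivity
  · simp only [Function.comp, φ, RTerm]
    have hht := ht_pos x.1.2.1 x.1.2.2
    rw [← mul_assoc]
    apply mul_le_mul_of_nonneg_right _ (by positivity)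
    obtain ⟨s1, s2, s3⟩ := hDN x.1.2 x.2.2.1
    obtain ⟨m, hm⟩ := hdvd x
    have ht0 : 0 < x.1.1 := x.2.1
    have hm0 : 0 < m := by
      rcases Nat.eq_zero_or_pos m with h | h
      · rw [h] at hm; omega
      · exact h
    rw [hm, Nat.mul_div_cancel_left _ ht0, s3, hm]
    have hD1 : (1:ℝ) ≤ |(Df x.1.2:ℝ)| := by exact_mod_cast Int.one_le_abs s1.ne_zero
    have hm1 : (1:ℝ) ≤ m := by exact_mod_cast hm0
    have ht1 : (0:ℝ) < x.1.1 := by exact_mod_cast ht0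
    have e : |((Df x.1.2 * ((x.1.1 * m : ℕ):ℤ)^2 : ℤ) : ℝ)| = (x.1.1:ℝ)^2 * (|(Df x.1.2:ℝ)| * m^2) := by
      push_cast
      rw [abs_mul, abs_of_nonneg (by positivity : (0:ℝ) ≤ ((x.1.1:ℝ)*m)^2)]; ring
    rw [e, Real.mul_rpow (by positivity) (by positivity), ← mul_assoc, Real.rpow_mul (by positivity),
      Real.rpow_two, ← Real.rpow_add (by positivity), add_neg_cancel, Real.rpow_zero, one_mul,
      ← mul_inv, mul_comm ((m:ℝ)^2), ← Real.rpow_neg_one]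
    apply Real.rpow_le_rpow_of_exponent_le _ (by linarith)
    nlinarith [mul_le_mul hD1 (one_le_pow₀ hm1 (n := 2)) (by norm_num) (by linarith)]
end

noncomputable section
open Height Filter

variable {a b c : ℤ}

lemma h_shift (k : ℚ) : ∃ C : ℝ, ∀ x : ℚ, |logHeight₁ (x + k) - logHeight₁ x| ≤ C := by
  refine ⟨totalWeight ℚ * Real.log 2 + logHeight₁ k, fun x => ?_⟩
  have h1 := logHeight₁_add_le x k
  have h2 := logHeight₁_sub_le (x+k) k
  rw [add_sub_cancel_right] at h2
  rw [abs_le]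
  constructor <;> linarith

lemma h_scale {k : ℚ} (hk : k ≠ 0) : ∃ C : ℝ, ∀ x : ℚ, |logHeight₁ (k * x) - logHeight₁ x| ≤ C := by
  refine ⟨logHeight₁ k, fun x => ?_⟩
  have h1 := logHeight₁_mul_le k x
  have h2 := logHeight₁_mul_le k⁻¹ (k*x)
  rw [← mul_assoc, inv_mul_cancel₀ hk, one_mul, logHeight₁_inv] at h2
  rw [abs_le]
  constructor <;> linarith

lemma h_ge (x : ℚ) (hx : x ≠ 0) : Real.log |(x:ℝ)| ≤ logHeight₁ x := by
  rw [Rat.logHeight₁_eq_log_max]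
  apply Real.log_le_log (by positivity)
  rw [Nat.cast_max]
  apply le_max_of_le_left
  have : (1:ℝ) ≤ x.den := by exact_mod_cast x.den_pos
  rw [Rat.cast_def, abs_div, Nat.cast_natAbs, Int.cast_abs, abs_of_nonneg (by positivity : (0:ℝ) ≤ x.den)]
  exact div_le_self (abs_nonneg _) this

lemma h_frac (p r : ℤ) (hr : r ≠ 0) :
    logHeight₁ ((p:ℚ)/r) + Real.log (Int.gcd p r) = Real.log (max |(p:ℝ)| |(r:ℝ)|) := by
  obtain ⟨g, p', r', hg, hc, hp, hr'⟩ := Int.exists_gcd_one' (m := p) (n := r)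
    (Int.gcd_pos_iff.2 (Or.inr hr))
  have hg' : (0:ℝ) < g := by exact_mod_cast hg
  have hr0 : r' ≠ 0 := by
    rintro rfl
    simp at hr'
    exact hr hr'
  have hgq : (g:ℚ) ≠ 0 := by exact_mod_cast hg.ne'
  have e1 : ((p:ℚ)/r) = (p':ℚ)/r' := by
    rw [hp, hr']; push_cast
    rw [mul_div_mul_right _ _ hgq]
  have e2 : Int.gcd p r = g := by
    rw [hp, hr', Int.gcd_mul_right, hc]; simp
  rw [e1, e2, h_cop hc hr0, hp, hr']
  push_cast
  rw [abs_mul, abs_mul, abs_of_pos hg', ← max_mul_of_nonneg _ _ hg'.le, Real.log_mul _ hg'.ne']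
  have : (0:ℝ) < |(r':ℝ)| := abs_pos.2 (by exact_mod_cast hr0)
  exact (lt_max_of_lt_right this).ne'

theorem crit (hd : dsc a b c ≠ 0) {A B : ℚ} (hA : A = b - a^2/3) (hB : B = c - a*b/3 + 2*a^3/27)
    (X1 X2 s : ℕ → ℚ)
    (H1 : ∀ᶠ n in atTop, X2 n^3 + A*X2 n + B = (s n)^2 * (X1 n^3 + A*X1 n + B))
    (H2 : ∀ᶠ n in atTop, X1 n^3 + A*X1 n + B ≠ 0)
    (H3 : ∀ᶠ n in atTop, X1 n ≠ X2 n)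
    (HH : ∀ C : ℝ, ∀ᶠ n in atTop, ∀ q1 q2 : ℝ, |q1 - logHeight₁ (X1 n)| ≤ C →
      |q2 - logHeight₁ (X2 n)| ≤ C → ∃ m : ℝ,
        m ≤ logHeight₁ ((X1 n^3 + A*X1 n + B)*(1 - s n)^2/(X1 n - X2 n)^2 - X1 n - X2 n) - C ∧
        m ≤ logHeight₁ ((X1 n^3 + A*X1 n + B)*(1 + s n)^2/(X1 n - X2 n)^2 - X1 n - X2 n) - C ∧
        (q1 + q2 - m)^2 < 4*q1*q2) :
    ∃ D : ℤ, D ≠ 0 ∧ ∃ P : Fin 2 → (twist a b c D).Point, LinearIndependent ℤ P := by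
  obtain ⟨C, C0, hC⟩ := heights hd
  obtain ⟨C3, hC3⟩ := h_shift (-(a:ℚ)/3)
  obtain ⟨n, h1, h2, h3, h4⟩ := (H1.and (H2.and (H3.and (HH (C+C3))))).exists
  generalize X1 n = X1 at *
  generalize X2 n = X2 at *
  generalize s n = s at *
  have shift : ∀ X : ℚ, (X + -(a:ℚ)/3)^3 + a*(X + -(a:ℚ)/3)^2 + b*(X + -(a:ℚ)/3) + c = X^3+A*X+B := by
    intro X; rw [hA, hB]; ring
  set ρ := X1^3+A*X1+B with hρ
  let D : ℤ := ρ.num * ρ.den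
  have hnum : ρ.num ≠ 0 := Rat.num_ne_zero.2 h2
  have hden : (ρ.den:ℤ) ≠ 0 := by exact_mod_cast ρ.den_ne_zero
  have hD : D ≠ 0 := mul_ne_zero hnum hden
  have hdenq : (ρ.den:ℚ) ≠ 0 := by exact_mod_cast ρ.den_ne_zero
  let y : ℚ := 1/ρ.den
  have hy : D * y^2 = ρ := by
    simp only [D, y]
    push_cast
    have h5 := Rat.num_div_den ρ
    calc _ = (ρ.num:ℚ)/ρ.den := by field_simp
      _ = ρ := h5
  set x1 := X1 + -(a:ℚ)/3 with hx1
  set x2 := X2 + -(a:ℚ)/3 with hx2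
  have e1 : D * y^2 = x1^3+a*x1^2+b*x1+c := by rw [hy, hx1, shift]
  have e2 : D * (s*y)^2 = x2^3+a*x2^2+b*x2+c := by rw [hx2, shift, h1, ← hy]; ring
  have e2' : D * (-(s*y))^2 = x2^3+a*x2^2+b*x2+c := by rw [← e2]; ring
  have hx : x1 ≠ x2 := fun h => h3 (add_right_cancel h)
  refine ⟨D, hD, ![.some _ _ (pt_ns hd hD e1), .some _ _ (pt_ns hd hD e2)], ?_⟩
  set P : (twist a b c D).Point := .some _ _ (pt_ns hd hD e1) with hP
  set Q : (twist a b c D).Point := .some _ _ (pt_ns hd hD e2) with hQ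
  have hnQ : -Q = .some _ _ (pt_ns hd hD e2') := by
    rw [hQ, WeierstrassCurve.Affine.Point.neg_some]
    congr 1
    simp [WeierstrassCurve.Affine.negY, twist]
  have v1 : vx a b c D P = (x1, 1) := vx_pt hD _
  have v2 : vx a b c D Q = (x2, 1) := vx_pt hD _
  have hX : x1 - x2 = X1 - X2 := by rw [hx1, hx2]; ring
  have v3 : vx a b c D (P+Q) = (ρ*(1-s)^2/(X1-X2)^2 - X1 - X2 + -(a:ℚ)/3, 1) := by
    rw [hP, hQ, vx_add_pt hD _ _ hx, hX, ← hy, hx1, hx2]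
    congr 1
    rw [div_pow]
    ring
  have v4 : vx a b c D (P-Q) = (ρ*(1+s)^2/(X1-X2)^2 - X1 - X2 + -(a:ℚ)/3, 1) := by
    rw [sub_eq_add_neg, hnQ, hP, vx_add_pt hD _ _ hx, hX, ← hy, hx1, hx2]
    congr 1
    rw [div_pow]
    ring
  obtain ⟨q, q1, q0, qq⟩ := hC D hD
  rw [LinearIndependent.pair_iff]
  by_contra hne
  push Not at hne
  obtain ⟨m, k, hmk, hmk0⟩ := hne
  have hg := qq.gram (m := m) (n := k) (by
    by_cases h : m = 0
    · exact Or.inr (hmk0 h)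
    · exact Or.inl h) hmk
  have bd : ∀ (R : (twist a b c D).Point) (X : ℚ), vx a b c D R = (X + -(a:ℚ)/3, 1) →
      |q R - logHeight₁ X| ≤ C + C3 := by
    intro R X h
    have h5 := q1 R
    rw [Hn_eq h] at h5
    have h6 := hC3 X
    calc _ = |(q R - logHeight₁ (X + -(a:ℚ)/3)) + (logHeight₁ (X + -(a:ℚ)/3) - logHeight₁ X)| := by ring_nf
      _ ≤ _ := (abs_add_le _ _).trans (add_le_add h5 h6)
  obtain ⟨μ, m1, m2, m3⟩ := h4 (q P) (q Q) (bd P X1 v1) (bd Q X2 v2)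
  have b3 := (abs_le.1 (bd _ _ v3)).1
  have b4 := (abs_le.1 (bd _ _ v4)).1
  have b5 := qq P Q
  rw [hg] at m3
  have h7 : (q (P+Q) - q P - q Q)^2 ≤ (q P + q Q - μ)^2 := by
    apply sq_le_sq'
    · linarith
    · linarith
  linarith
end

noncomputable section
open Height Filter
variable {a b c : ℤ}

lemma asy_le {F : ℝ → ℝ} (hF : ContinuousAt F 0) (g : ℕ → ℝ) (d : ℕ)
    (h : ∀ᶠ n : ℕ in atTop, g n = n^d * F ((n:ℝ)⁻¹)) :
    ∃ C : ℝ, 0 < C ∧ ∀ᶠ n : ℕ in atTop, |g n| ≤ C * n^d := by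
  have h1 : Tendsto (fun n : ℕ => |F ((n:ℝ)⁻¹)|) atTop (nhds |F 0|) :=
    (hF.tendsto.comp tendsto_inv_atTop_nhds_zero_nat).abs
  refine ⟨|F 0| + 1, by positivity, ?_⟩
  filter_upwards [h, h1.eventually_lt_const (lt_add_one _)] with n hn h2
  rw [hn, abs_mul, abs_of_nonneg (by positivity : (0:ℝ) ≤ (n:ℝ)^d), mul_comm]
  gcongr

lemma asy_ge {F : ℝ → ℝ} (hF : ContinuousAt F 0) (h0 : F 0 ≠ 0) (g : ℕ → ℝ) (d : ℕ)
    (h : ∀ᶠ n : ℕ in atTop, g n = n^d * F ((n:ℝ)⁻¹)) :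
    ∃ C : ℝ, 0 < C ∧ ∀ᶠ n : ℕ in atTop, C * n^d ≤ |g n| := by
  have h1 : Tendsto (fun n : ℕ => |F ((n:ℝ)⁻¹)|) atTop (nhds |F 0|) :=
    (hF.tendsto.comp tendsto_inv_atTop_nhds_zero_nat).abs
  have h3 : 0 < |F 0| := abs_pos.2 h0
  refine ⟨|F 0|/2, by positivity, ?_⟩
  filter_upwards [h, h1.eventually_const_lt (half_lt_self h3)] with n hn h2
  rw [hn, abs_mul, abs_of_nonneg (by positivity : (0:ℝ) ≤ (n:ℝ)^d), mul_comm]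
  gcongr

lemma grow {F : ℝ → ℝ} (hF : ContinuousAt F 0) (h0 : F 0 ≠ 0) (g : ℕ → ℚ) (d : ℕ)
    (h : ∀ᶠ n : ℕ in atTop, (g n : ℝ) = n^d * F ((n:ℝ)⁻¹)) :
    ∃ C : ℝ, ∀ᶠ n : ℕ in atTop, d * Real.log n - C ≤ logHeight₁ (g n) := by
  obtain ⟨C, C0, hC⟩ := asy_ge hF h0 _ d h
  refine ⟨- Real.log C, ?_⟩
  filter_upwards [hC, eventually_gt_atTop 0] with n hn hn0
  have hn1 : (0:ℝ) < n := by exact_mod_cast hn0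
  have hg : g n ≠ 0 := by
    intro h; rw [h] at hn; simp at hn
    have : 0 < C * (n:ℝ)^d := by positivity
    linarith
  refine le_trans ?_ (h_ge _ hg)
  calc _ = Real.log (C * n^d) := by rw [Real.log_mul (by positivity) (by positivity), Real.log_pow]; ring
    _ ≤ _ := Real.log_le_log (by positivity) hn

lemma shrink {F : ℝ → ℝ} (hF : ContinuousAt F 0) (h0 : F 0 ≠ 0) (g : ℕ → ℚ) (k : ℚ)
    (h : ∀ᶠ n : ℕ in atTop, (g n : ℝ) - k = (n:ℝ)⁻¹ * F ((n:ℝ)⁻¹)) :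
    ∃ C : ℝ, ∀ᶠ n : ℕ in atTop, Real.log n - C ≤ logHeight₁ (g n) := by
  obtain ⟨C, hC⟩ := grow (F := fun x => (F x)⁻¹) (hF.inv₀ h0) (inv_ne_zero h0) (fun n => (g n - k)⁻¹) 1
    (by filter_upwards [h] with n hn
        push_cast; rw [hn, mul_inv, inv_inv, pow_one])
  obtain ⟨C', hC'⟩ := h_shift (-k)
  refine ⟨C + C', ?_⟩
  filter_upwards [hC] with n hn
  rw [logHeight₁_inv] at hn
  have := abs_le.1 (hC' (g n))
  rw [← sub_eq_add_neg] at this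
  push_cast at hn
  linarith [this.2]

lemma up_bd (p r : ℤ) (hr : r ≠ 0) : logHeight₁ ((p:ℚ)/r) ≤ Real.log (max |(p:ℝ)| |(r:ℝ)|) := by
  rw [← h_frac p r hr]
  have : 0 ≤ Real.log (Int.gcd p r) := by
    apply Real.log_natCast_nonneg
  linarith

lemma up_asy {F G : ℝ → ℝ} (hF : ContinuousAt F 0) (hG : ContinuousAt G 0) (p r : ℕ → ℤ) (g : ℕ → ℚ) (d : ℕ)
    (h1 : ∀ᶠ n : ℕ in atTop, (p n : ℝ) = n^d * F ((n:ℝ)⁻¹))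
    (h2 : ∀ᶠ n : ℕ in atTop, (r n : ℝ) = n^d * G ((n:ℝ)⁻¹))
    (hr : ∀ᶠ n : ℕ in atTop, r n ≠ 0) (hg : ∀ᶠ n : ℕ in atTop, g n = p n / r n) :
    ∃ C : ℝ, ∀ᶠ n : ℕ in atTop, logHeight₁ (g n) ≤ d * Real.log n + C := by
  obtain ⟨C, C0, hC⟩ := asy_le hF _ d h1
  obtain ⟨C', C0', hC'⟩ := asy_le hG _ d h2
  refine ⟨Real.log (max C C'), ?_⟩
  filter_upwards [hC, hC', hr, hg, eventually_gt_atTop 0] with n e1 e2 e3 e4 hn0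
  have hn1 : (0:ℝ) < n := by exact_mod_cast hn0
  rw [e4]
  refine (up_bd _ _ e3).trans ?_
  have : 0 < |(r n : ℝ)| := by rw [abs_pos]; exact_mod_cast e3
  calc _ ≤ Real.log (max C C' * n^d) := by
        apply Real.log_le_log (lt_max_of_lt_right this)
        apply max_le
        · exact e1.trans (by gcongr; exact le_max_left _ _)
        · exact e2.trans (by gcongr; exact le_max_right _ _)
    _ = _ := by
      have : (0:ℝ) < max C C' := lt_max_of_lt_left C0
      rw [Real.log_mul (by positivity) (by positivity), Real.log_pow]; ring

lemma log_big (K : ℝ) : ∀ᶠ n : ℕ in atTop, K ≤ Real.log n :=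
  (Real.tendsto_log_atTop.comp tendsto_natCast_atTop_atTop).eventually_ge_atTop K

lemma slack_ge {h : ℕ → ℝ} {l l' : ℝ} (hl : l < l')
    (H : ∃ C : ℝ, ∀ᶠ n : ℕ in atTop, l' * Real.log n - C ≤ h n) :
    ∀ C : ℝ, ∀ᶠ n : ℕ in atTop, l * Real.log n + C ≤ h n := by
  obtain ⟨C', hC'⟩ := H
  intro C
  filter_upwards [hC', log_big ((C+C')/(l'-l))] with n h1 h2
  rw [div_le_iff₀ (by linarith)] at h2
  nlinarith

lemma quad_neg {q1 q2 l δ μ L : ℝ} (hL : 0 < L) (h1 : l*L ≤ q1) (h2 : l*L ≤ q2)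
    (hd1 : q1 - q2 ≤ δ*L) (hd2 : q2 - q1 ≤ δ*L) (hμ : 0 < μ) (hδ : 0 ≤ δ)
    (hμ1 : μ < 4*l) (hc : δ^2 - 2*μ*(δ+2*l) + μ^2 < 0) : (q1 + q2 - μ*L)^2 < 4*q1*q2 := by
  wlog h : q2 ≤ q1 generalizing q1 q2
  · have := this h2 h1 hd2 hd1 (le_of_not_ge h)
    linarith [add_comm q1 q2 ▸ this]
  obtain ⟨d, hd⟩ : ∃ d, d = q1 - q2 := ⟨_, rfl⟩
  have hq : q1 = q2 + d := by linarith
  subst hq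
  have d0 : 0 ≤ d := by linarith
  have dd : d ≤ δ*L := by linarith
  have k1 : d * (δ*L - d) ≥ 0 := mul_nonneg d0 (by linarith)
  have k2 : 0 ≤ μ*L*(q2 - l*L) := by apply mul_nonneg (by positivity); linarith
  -- d^2 - 2 μ L (d + 2 q2) + μ² L² < 0
  have k3 : d^2 - 2*(μ*L)*(d+2*(l*L)) + (μ*L)^2 < 0 := by
    have e1 : d^2 ≤ δ*L*d := by nlinarith
    by_cases hδ2 : δ ≤ 2*μ
    · have : δ*L*d ≤ 2*(μ*L)*d := mul_le_mul_of_nonneg_right (by nlinarith) d0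
      have e2 : 0 < μ*L^2*(4*l-μ) := by apply mul_pos (by positivity); linarith
      nlinarith
    · push Not at hδ2
      have e3 : (δ - 2*μ)*L*d ≤ (δ-2*μ)*L*(δ*L) := by
        apply mul_le_mul_of_nonneg_left dd; apply mul_nonneg <;> linarith
      have e4 : L^2 * (δ^2 - 2*μ*(δ+2*l) + μ^2) < 0 := mul_neg_of_pos_of_neg (by positivity) hc
      nlinarith
  nlinarith

lemma HH_of {h1 h2 h3 h4 : ℕ → ℝ} (l δ μ : ℝ) (hμ : 0 < μ) (hδ : 0 ≤ δ)
    (hμ1 : μ < 4*l) (hc : δ^2 - 2*μ*(δ+2*l) + μ^2 < 0)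
    (H1 : ∀ C : ℝ, ∀ᶠ n : ℕ in atTop, l * Real.log n + C ≤ h1 n)
    (H2 : ∀ C : ℝ, ∀ᶠ n : ℕ in atTop, l * Real.log n + C ≤ h2 n)
    (H5 : ∀ C : ℝ, ∀ᶠ n : ℕ in atTop, -δ * Real.log n + C ≤ h1 n - h2 n)
    (H6 : ∀ C : ℝ, ∀ᶠ n : ℕ in atTop, -δ * Real.log n + C ≤ h2 n - h1 n)
    (H3 : ∀ C : ℝ, ∀ᶠ n : ℕ in atTop, μ * Real.log n + C ≤ h3 n)
    (H4 : ∀ C : ℝ, ∀ᶠ n : ℕ in atTop, μ * Real.log n + C ≤ h4 n) :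
    ∀ C : ℝ, ∀ᶠ n in atTop, ∀ q1 q2 : ℝ, |q1 - h1 n| ≤ C →
      |q2 - h2 n| ≤ C → ∃ m : ℝ, m ≤ h3 n - C ∧ m ≤ h4 n - C ∧ (q1 + q2 - m)^2 < 4*q1*q2 := by
  intro C
  filter_upwards [H1 C, H2 C, H3 C, H4 C, H5 (2*C), H6 (2*C), log_big 1] with n e1 e2 e3 e4 e5 e6 e7 q1 q2 g1 g2
  rw [abs_le] at g1 g2
  refine ⟨μ * Real.log n, by linarith, by linarith, ?_⟩
  apply quad_neg (l := l) (δ := δ) (by linarith) (by linarith) (by linarith) (by linarith) (by linarith) hμ hδ hμ1 hc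

/-- both combinations grow -/
lemma grow_pm {A B : ℚ} {x1 x2 σ : ℝ → ℝ} (c1 : ContinuousAt x1 0) (c2 : ContinuousAt x2 0)
    (c3 : ContinuousAt σ 0) (X1 X2 s : ℕ → ℚ) (d : ℕ) (hd : d ≠ 0)
    (e1 : ∀ᶠ n : ℕ in atTop, (X1 n : ℝ) = n^d * x1 ((n:ℝ)⁻¹))
    (e2 : ∀ᶠ n : ℕ in atTop, (X2 n : ℝ) = n^d * x2 ((n:ℝ)⁻¹))
    (e3 : ∀ᶠ n : ℕ in atTop, (s n : ℝ) = σ ((n:ℝ)⁻¹)) (hx : x1 0 - x2 0 ≠ 0) (η : ℝ)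
    (hη : x1 0 ^3 * (1 + η*σ 0)^2/(x1 0 - x2 0)^2 - x1 0 - x2 0 ≠ 0) (η' : ℚ) (hηη : (η':ℝ) = η):
    ∃ C : ℝ, ∀ᶠ n : ℕ in atTop, d * Real.log n - C ≤
      logHeight₁ ((X1 n^3 + A*X1 n + B)*(1 + η' * s n)^2/(X1 n - X2 n)^2 - X1 n - X2 n) := by
  refine grow (F := fun e => (x1 e ^3 + A*(e^d)^2*x1 e + B*(e^d)^3)*(1 + η*σ e)^2/(x1 e - x2 e)^2 - x1 e - x2 e)
    ?_ ?_ _ d ?_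
  · have : ContinuousAt (fun e => (x1 e ^3 + A*(e^d)^2*x1 e + B*(e^d)^3)*(1 + η*σ e)^2) 0 := by fun_prop
    exact ((this.div ((c1.sub c2).pow 2) (pow_ne_zero 2 hx)).sub c1).sub c2
  · simpa [hd] using hη
  · have hne : ∀ᶠ n : ℕ in atTop, x1 ((n:ℝ)⁻¹) - x2 ((n:ℝ)⁻¹) ≠ 0 :=
      ((c1.sub c2).tendsto.comp tendsto_inv_atTop_nhds_zero_nat).eventually_ne hx
    filter_upwards [e1, e2, e3, eventually_gt_atTop 0, hne] with n h1 h2 h3 h4 h5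
    have hn1 : (n:ℝ)^d ≠ 0 := pow_ne_zero _ (by exact_mod_cast h4.ne')
    push_cast
    rw [h1, h2, h3, hηη, inv_pow]
    generalize (n:ℝ)^d = N at *
    generalize x1 ((n:ℝ)⁻¹) = x at *
    generalize x2 ((n:ℝ)⁻¹) = y at *
    rw [show N*x - N*y = N*(x-y) by ring]
    field_simp
end

noncomputable section
open Height Filter
variable {a b c : ℤ}

lemma ne_pm {A B : ℚ} {x1 x2 : ℝ → ℝ} (c1 : ContinuousAt x1 0) (c2 : ContinuousAt x2 0)
    (X1 X2 : ℕ → ℚ) (d : ℕ) (hd : d ≠ 0)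
    (e1 : ∀ᶠ n : ℕ in atTop, (X1 n : ℝ) = n^d * x1 ((n:ℝ)⁻¹))
    (e2 : ∀ᶠ n : ℕ in atTop, (X2 n : ℝ) = n^d * x2 ((n:ℝ)⁻¹))
    (hx : x1 0 - x2 0 ≠ 0) (hx1 : x1 0 ≠ 0) :
    (∀ᶠ n : ℕ in atTop, X1 n^3 + A*X1 n + B ≠ 0) ∧ ∀ᶠ n : ℕ in atTop, X1 n ≠ X2 n := by
  constructor
  · have c3 : ContinuousAt (fun e => x1 e ^3 + A*(e^d)^2*x1 e + B*(e^d)^3) 0 := by fun_prop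
    have hne := (c3.tendsto.comp tendsto_inv_atTop_nhds_zero_nat).eventually_ne (b₂ := 0)
      (by simpa [hd] using hx1)
    filter_upwards [e1, eventually_gt_atTop 0, hne] with n h1 h4 h5 h
    have hn1 : (n:ℝ)^d ≠ 0 := pow_ne_zero _ (by exact_mod_cast h4.ne')
    apply h5
    have h' : (X1 n:ℝ)^3 + A*X1 n + B = 0 := by exact_mod_cast h
    rw [h1] at h'
    simp only [Function.comp, inv_pow]
    generalize (n:ℝ)^d = N at *
    generalize x1 ((n:ℝ)⁻¹) = y at *
    field_simp
    linear_combination h'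
  · have hne := ((c1.sub c2).tendsto.comp tendsto_inv_atTop_nhds_zero_nat).eventually_ne hx
    filter_upwards [e1, e2, eventually_gt_atTop 0, hne] with n h1 h2 h4 h5 h
    have hn1 : (n:ℝ)^d ≠ 0 := pow_ne_zero _ (by exact_mod_cast h4.ne')
    apply h5
    have h' : (X1 n:ℝ) = X2 n := by exact_mod_cast h
    rw [h1, h2] at h'
    simp only [Function.comp, Pi.sub_apply]
    have := mul_left_cancel₀ hn1 h'
    linarith

lemma ev_ne {F : ℝ → ℝ} (hF : ContinuousAt F 0) (h0 : F 0 ≠ 0) :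
    ∀ᶠ n : ℕ in atTop, F ((n:ℝ)⁻¹) ≠ 0 :=
  (hF.tendsto.comp tendsto_inv_atTop_nhds_zero_nat).eventually_ne h0

lemma two_B0 (hd : dsc a b c ≠ 0) {A B : ℚ} (hA : A = b - a^2/3) (hB : B = c - a*b/3 + 2*a^3/27)
    (B0 : B = 0) : ∃ D : ℤ, D ≠ 0 ∧ ∃ P : Fin 2 → (twist a b c D).Point, LinearIndependent ℤ P := by
  obtain ⟨A3, hA3⟩ : ∃ A3 : ℤ, A = A3/3 := ⟨3*b-a^2, by rw [hA]; push_cast; ring⟩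
  let X1 : ℕ → ℚ := fun n => n^2*(4*A+n^4)/(2*A-n^4)
  let X2 : ℕ → ℚ := fun n => n^2*(2*A-n^4)/(4*(A+n^4))
  let s : ℕ → ℚ := fun n => (2*A-n^4)^2/(8*(A+n^4)^2)
  let x1 : ℝ → ℝ := fun e => (4*A*e^4+1)/(2*A*e^4-1)
  let x2 : ℝ → ℝ := fun e => (2*A*e^4-1)/(4*(A*e^4+1))
  let σ : ℝ → ℝ := fun e => (2*A*e^4-1)^2/(8*(A*e^4+1)^2)
  have c1 : ContinuousAt x1 0 := by
    apply ContinuousAt.div (by fun_prop) (by fun_prop); norm_num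
  have c2 : ContinuousAt x2 0 := by
    apply ContinuousAt.div (by fun_prop) (by fun_prop); norm_num
  have c3 : ContinuousAt σ 0 := by
    apply ContinuousAt.div (by fun_prop) (by fun_prop); norm_num
  have v1 : x1 0 = -1 := by simp [x1]
  have v2 : x2 0 = -1/4 := by simp [x2]
  have v3 : σ 0 = 1/8 := by simp [σ]
  have n1 : ∀ᶠ n : ℕ in atTop, (A + (n:ℚ)^4) ≠ 0 ∧ (2*A-(n:ℚ)^4) ≠ 0 := by
    filter_upwards [ev_ne (F := fun e => A*e^4+1) (by fun_prop) (by norm_num),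
      ev_ne (F := fun e => 2*A*e^4-1) (by fun_prop) (by norm_num), eventually_gt_atTop 0] with n h1 h2 h3
    have hn1 : (n:ℝ) ≠ 0 := by exact_mod_cast h3.ne'
    constructor
    · intro h
      have h' : ((A:ℝ) + (n:ℝ)^4) = 0 := by exact_mod_cast h
      apply h1; field_simp; linarith
    · intro h
      have h' : (2*(A:ℝ) - (n:ℝ)^4) = 0 := by exact_mod_cast h
      apply h2; field_simp; linarith
  have nr : ∀ n : ℕ, ((A + (n:ℚ)^4) ≠ 0 ∧ (2*A-(n:ℚ)^4) ≠ 0) → ((A:ℝ) + (n:ℝ)^4) ≠ 0 ∧ (2*(A:ℝ)-(n:ℝ)^4) ≠ 0 :=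
    fun n h => ⟨by exact_mod_cast h.1, by exact_mod_cast h.2⟩
  have e1 : ∀ᶠ n : ℕ in atTop, (X1 n : ℝ) = n^2 * x1 ((n:ℝ)⁻¹) := by
    filter_upwards [n1, eventually_gt_atTop 0] with n h h3
    obtain ⟨h1, h2⟩ := nr n h
    have hn1 : (n:ℝ) ≠ 0 := by exact_mod_cast h3.ne'
    have : (2*(A:ℝ)*((n:ℝ)⁻¹)^4-1) ≠ 0 := by
      rw [show (2*(A:ℝ)*((n:ℝ)⁻¹)^4-1) = (2*(A:ℝ)-(n:ℝ)^4)/n^4 by field_simp]; positivity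
    simp only [X1, x1]; push_cast
    rw [mul_div_assoc]; congr 1
    rw [div_eq_div_iff h2 this]; field_simp
  have e2 : ∀ᶠ n : ℕ in atTop, (X2 n : ℝ) = n^2 * x2 ((n:ℝ)⁻¹) := by
    filter_upwards [n1, eventually_gt_atTop 0] with n h h3
    obtain ⟨h1, h2⟩ := nr n h
    have hn1 : (n:ℝ) ≠ 0 := by exact_mod_cast h3.ne'
    have : ((A:ℝ)*((n:ℝ)⁻¹)^4+1) ≠ 0 := by
      rw [show ((A:ℝ)*((n:ℝ)⁻¹)^4+1) = ((A:ℝ)+(n:ℝ)^4)/n^4 by field_simp]; positivity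
    simp only [X2, x2]; push_cast
    rw [mul_div_assoc]; congr 1
    rw [div_eq_div_iff (mul_ne_zero four_ne_zero h1) (mul_ne_zero four_ne_zero this)]; field_simp
  have e3 : ∀ᶠ n : ℕ in atTop, (s n : ℝ) = σ ((n:ℝ)⁻¹) := by
    filter_upwards [n1, eventually_gt_atTop 0] with n h h3
    obtain ⟨h1, h2⟩ := nr n h
    have hn1 : (n:ℝ) ≠ 0 := by exact_mod_cast h3.ne'
    have : ((A:ℝ)*((n:ℝ)⁻¹)^4+1) ≠ 0 := by
      rw [show ((A:ℝ)*((n:ℝ)⁻¹)^4+1) = ((A:ℝ)+(n:ℝ)^4)/n^4 by field_simp]; positivity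
    simp only [s, σ]; push_cast
    rw [div_eq_div_iff (mul_ne_zero (by norm_num) (pow_ne_zero 2 h1)) (mul_ne_zero (by norm_num) (pow_ne_zero 2 this))]
    field_simp
  have hx : x1 0 - x2 0 ≠ 0 := by rw [v1, v2]; norm_num
  obtain ⟨N2, N3⟩ := ne_pm (A := A) (B := B) c1 c2 X1 X2 2 two_ne_zero e1 e2 hx (by rw [v1]; norm_num)
  have lo1 := grow c1 (by rw [v1]; norm_num) X1 2 e1
  have lo2 := grow c2 (by rw [v2]; norm_num) X2 2 e2
  have up1 : ∃ C : ℝ, ∀ᶠ n : ℕ in atTop, logHeight₁ (X1 n) ≤ (6:ℕ) * Real.log n + C := by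
    apply up_asy (F := fun e => 4*A3*e^4+3) (G := fun e => (2*A3*e^4-3)*e^2) (by fun_prop) (by fun_prop)
      (fun n => n^2*(4*A3+3*n^4)) (fun n => 2*A3-3*n^4)
    · filter_upwards [eventually_gt_atTop 0] with n h3
      have hn1 : (n:ℝ) ≠ 0 := by exact_mod_cast h3.ne'
      push_cast; field_simp
    · filter_upwards [eventually_gt_atTop 0] with n h3
      have hn1 : (n:ℝ) ≠ 0 := by exact_mod_cast h3.ne'
      push_cast; field_simp
    · filter_upwards [n1] with n h h'
      apply h.2; rw [hA3]
      have : ((2*A3-3*n^4 : ℤ):ℚ) = 0 := by rw [h']; rfl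
      push_cast at this; linarith
    · filter_upwards [n1] with n h
      have : ((2*A3-3*n^4 : ℤ):ℚ) = 3*(2*A-n^4) := by rw [hA3]; push_cast; ring
      rw [this]; push_cast
      simp only [X1]
      rw [show n^2*(4*(A3:ℚ)+3*n^4) = 3*(n^2*(4*A+n^4)) by rw [hA3]; ring, mul_div_mul_left _ _ (by norm_num)]
  have up2 : ∃ C : ℝ, ∀ᶠ n : ℕ in atTop, logHeight₁ (X2 n) ≤ (6:ℕ) * Real.log n + C := by
    apply up_asy (F := fun e => 2*A3*e^4-3) (G := fun e => 4*(A3*e^4+3)*e^2) (by fun_prop) (by fun_prop)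
      (fun n => n^2*(2*A3-3*n^4)) (fun n => 4*(A3+3*n^4))
    · filter_upwards [eventually_gt_atTop 0] with n h3
      have hn1 : (n:ℝ) ≠ 0 := by exact_mod_cast h3.ne'
      push_cast; field_simp
    · filter_upwards [eventually_gt_atTop 0] with n h3
      have hn1 : (n:ℝ) ≠ 0 := by exact_mod_cast h3.ne'
      push_cast; field_simp
    · filter_upwards [n1] with n h h'
      apply h.1; rw [hA3]
      have : ((4*(A3+3*n^4) : ℤ):ℚ) = 0 := by rw [h']; rfl
      push_cast at this; linarith
    · filter_upwards [n1] with n h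
      have : ((4*(A3+3*n^4) : ℤ):ℚ) = 3*(4*(A+n^4)) := by rw [hA3]; push_cast; ring
      rw [this]; push_cast
      simp only [X2]
      rw [show n^2*(2*(A3:ℚ)-3*n^4) = 3*(n^2*(2*A-n^4)) by rw [hA3]; ring, mul_div_mul_left _ _ (by norm_num)]
  refine crit hd hA hB X1 X2 s ?_ N2 N3 ?_
  · filter_upwards [n1] with n ⟨h1, h2⟩
    simp only [X1, X2, s]
    rw [B0]
    field_simp
    ring
  · refine HH_of 1.99 4.01 1.99 (by norm_num) (by norm_num) (by norm_num) (by norm_num)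
      (slack_ge (by norm_num) lo1) (slack_ge (by norm_num) lo2) ?_ ?_ ?_ ?_
    · apply slack_ge (l' := -4) (by norm_num)
      obtain ⟨C, hC⟩ := lo1
      obtain ⟨C', hC'⟩ := up2
      refine ⟨C+C', ?_⟩
      filter_upwards [hC, hC'] with n k1 k2
      push_cast at k1 k2; linarith
    · apply slack_ge (l' := -4) (by norm_num)
      obtain ⟨C, hC⟩ := lo2
      obtain ⟨C', hC'⟩ := up1
      refine ⟨C+C', ?_⟩
      filter_upwards [hC, hC'] with n k1 k2
      push_cast at k1 k2; linarith
    · have := slack_ge (l := 1.99) (by norm_num) (grow_pm (A := A) (B := B) c1 c2 c3 X1 X2 s 2 two_ne_zero e1 e2 e3 hx (-1)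
        (by rw [v1, v2, v3]; norm_num) (-1) (by simp))
      simpa only [neg_one_mul, ← sub_eq_add_neg] using this
    · have := slack_ge (l := 1.99) (by norm_num) (grow_pm (A := A) (B := B) c1 c2 c3 X1 X2 s 2 two_ne_zero e1 e2 e3 hx 1
        (by rw [v1, v2, v3]; norm_num) 1 (by simp))
      simpa only [one_mul] using this
end

noncomputable section
open Height Filter
variable {a b c : ℤ}

lemma gcd_g (n : ℤ) : Int.gcd (n^4+n^2+1) (n^2*(n^2+1)) = 1 := by
  rw [← Int.isCoprime_iff_gcd_eq_one]
  exact ⟨1, -1, by ring⟩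
lemma gcd_g' (n : ℤ) : Int.gcd (n^4+n^2+1) (n^2+1) = 1 := by
  rw [← Int.isCoprime_iff_gcd_eq_one]
  exact ⟨1, -n^2, by ring⟩

lemma h_lg (n : ℕ) (hn : 0 < n) (r : ℤ) (hr : 0 < r) (hr2 : r ≤ (n:ℤ)^4+n^2+1)
   (hg : Int.gcd ((n:ℤ)^4+n^2+1) r = 1) :
   |logHeight₁ (((((n:ℤ)^4+n^2+1 : ℤ):ℚ))/r) - 4 * Real.log n| ≤ Real.log 3 := by
  have hn1 : (1:ℝ) ≤ n := by exact_mod_cast hn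
  have h := h_frac ((n:ℤ)^4+n^2+1) r hr.ne'
  rw [hg] at h
  have h2 : max |(((n:ℤ)^4+n^2+1 : ℤ):ℝ)| |(r:ℝ)| = (n:ℝ)^4+n^2+1 := by
    rw [max_eq_left]
    · push_cast; rw [abs_of_nonneg (by positivity)]
    · rw [← Int.cast_abs, ← Int.cast_abs, abs_of_pos hr, abs_of_nonneg (by positivity)]
      exact_mod_cast hr2
  rw [h2] at h
  simp only [Nat.cast_one, Real.log_one, add_zero] at h
  rw [h, show 4*Real.log n = Real.log ((n:ℝ)^4) by rw [Real.log_pow]; norm_num]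
  have p2 : (n:ℝ)^2 ≤ n^4 := pow_le_pow_right₀ hn1 (by norm_num)
  have p3 : (1:ℝ) ≤ n^4 := one_le_pow₀ hn1
  rw [abs_le]
  constructor
  · have : Real.log ((n:ℝ)^4) ≤ Real.log ((n:ℝ)^4+n^2+1) := Real.log_le_log (by positivity) (by nlinarith)
    have := Real.log_nonneg (show (1:ℝ) ≤ 3 by norm_num)
    linarith
  · rw [sub_le_iff_le_add, ← Real.log_mul (by norm_num) (by positivity)]
    exact Real.log_le_log (by positivity) (by linarith)

lemma two_AB (hd : dsc a b c ≠ 0) {A B : ℚ} (hA : A = b - a^2/3) (hB : B = c - a*b/3 + 2*a^3/27)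
    (A0 : A ≠ 0) (B0 : B ≠ 0) : ∃ D : ℤ, D ≠ 0 ∧ ∃ P : Fin 2 → (twist a b c D).Point, LinearIndependent ℤ P := by
  obtain ⟨k, hk⟩ : ∃ k : ℚ, k = -B/A := ⟨_, rfl⟩
  have hk0 : k ≠ 0 := by rw [hk]; exact div_ne_zero (neg_ne_zero.2 B0) A0
  have hBk : B = -k*A := by rw [hk]; field_simp
  have hkr : (k:ℝ) ≠ 0 := by exact_mod_cast hk0
  let X1 : ℕ → ℚ := fun n => k * (((((n:ℤ)^4+n^2+1 : ℤ):ℚ))/((n^2*(n^2+1):ℤ):ℚ))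
  let X2 : ℕ → ℚ := fun n => k * (((((n:ℤ)^4+n^2+1 : ℤ):ℚ))/((n^2+1:ℤ):ℚ))
  let s : ℕ → ℚ := fun n => n^3
  obtain ⟨C, hC⟩ := h_scale hk0
  have b1 : ∀ᶠ n : ℕ in atTop, |logHeight₁ (X1 n) - 4 * Real.log n| ≤ C + Real.log 3 := by
    filter_upwards [eventually_gt_atTop 0] with n hn
    have hn' : (0:ℤ) < n := by exact_mod_cast hn
    have := h_lg n hn (n^2*(n^2+1)) (by positivity) (by nlinarith) (gcd_g n)
    have h2 := hC (((((n:ℤ)^4+n^2+1 : ℤ):ℚ))/((n^2*(n^2+1):ℤ):ℚ))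
    have := (abs_sub_le _ _ _).trans (add_le_add h2 this)
    exact this
  have b2 : ∀ᶠ n : ℕ in atTop, |logHeight₁ (X2 n) - 4 * Real.log n| ≤ C + Real.log 3 := by
    filter_upwards [eventually_gt_atTop 0] with n hn
    have hn' : (0:ℤ) < n := by exact_mod_cast hn
    have := h_lg n hn (n^2+1) (by positivity) (by nlinarith [pow_pos hn' 4]) (gcd_g' n)
    have h2 := hC (((((n:ℤ)^4+n^2+1 : ℤ):ℚ))/((n^2+1:ℤ):ℚ))
    have := (abs_sub_le _ _ _).trans (add_le_add h2 this)
    exact this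
  have key : ∀ τ : ℝ, τ ≠ 0 → τ ≠ 1 → τ ≠ -1 → 
     let x := k * ((τ^4+τ^2+1)/(τ^2*(τ^2+1)))
     let y := k * ((τ^4+τ^2+1)/(τ^2+1))
     (x^3+A*x+(-k*A))*(1-τ^3)^2/(x-y)^2 - x - y - k = 
      τ⁻¹ * (k*(-2-τ⁻¹-2*τ⁻¹^2)/((1+τ⁻¹^2)*(1+τ⁻¹)^2) + A/k*τ⁻¹*(1+τ⁻¹^2)/((1+τ⁻¹)^2*(1-τ⁻¹+τ⁻¹^2)^2)) := by
    intro τ t0 t1 t2 x y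
    have p1 : τ^2+1 ≠ 0 := by positivity
    have p2 : τ^4+τ^2+1 ≠ 0 := by positivity
    have p3 : τ + 1 ≠ 0 := fun h => t2 (by linarith)
    have p4 : τ - 1 ≠ 0 := fun h => t1 (by linarith)
    have p5 : τ^2-τ+1 ≠ 0 := by nlinarith [sq_nonneg (τ-1), sq_nonneg τ]
    have p6 : τ^2+τ+1 ≠ 0 := by nlinarith [sq_nonneg (τ+1), sq_nonneg τ]
    have hx : x - y = -k*(τ-1)*(τ+1)*(τ^2-τ+1)*(τ^2+τ+1)/(τ^2*(τ^2+1)) := by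
      simp only [x, y]; field_simp; ring
    have hf : x^3+A*x+(-k*A) = (k^3*((τ^2-τ+1)*(τ^2+τ+1))^3 + A*k*(τ^2*(τ^2+1))^2)/(τ^2*(τ^2+1))^3 := by
      simp only [x]; field_simp; ring
    have h1s : (1-τ^3) = -(τ-1)*(τ^2+τ+1) := by ring
    have hxy : x + y + k = k*(τ^2+1)^2/τ^2 := by
      simp only [x, y]; field_simp; ring
    rw [show ∀ z : ℝ, z - x - y - k = z - (x+y+k) by intro z; ring, hxy, hx, hf, h1s]
    have q1 : 1+τ⁻¹^2 = (τ^2+1)/τ^2 := by field_simp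
    have q2 : 1+τ⁻¹ = (τ+1)/τ := by field_simp
    have q3 : 1-τ⁻¹+τ⁻¹^2 = (τ^2-τ+1)/τ^2 := by field_simp
    rw [q1, q2, q3]
    clear_value x y
    obtain ⟨P, hP⟩ : ∃ P, P = τ^2-τ+1 := ⟨_, rfl⟩
    obtain ⟨Q, hQ⟩ : ∃ Q, Q = τ^2+τ+1 := ⟨_, rfl⟩
    obtain ⟨M, hM⟩ : ∃ M, M = τ-1 := ⟨_, rfl⟩
    obtain ⟨R, hR⟩ : ∃ R, R = τ^2+1 := ⟨_, rfl⟩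
    obtain ⟨T, hT⟩ : ∃ T, T = τ+1 := ⟨_, rfl⟩
    rw [← hP, ← hQ, ← hM, ← hR, ← hT]
    rw [← hP] at p5
    rw [← hQ] at p6
    rw [← hM] at p4
    rw [← hR] at p1
    rw [← hT] at p3
    clear q1 q2 q3 h1s hf hx hxy
    field_simp
    subst P Q M R T
    ring
  refine crit hd hA hB X1 X2 s ?_ ?_ ?_ ?_
  · filter_upwards [eventually_gt_atTop 0] with n hn
    have hn1 : (n:ℚ) ≠ 0 := by exact_mod_cast hn.ne'
    simp only [X1, X2, s]; rw [hBk]; push_cast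
    have p1 : (n:ℚ)^2+1 ≠ 0 := by positivity
    field_simp
    ring
  · have := ev_ne (F := fun e => ((k*(1+e^2+e^4)/(1+e^2))^3+A*(k*(1+e^2+e^4)/(1+e^2)) + B : ℝ))
      (by
        have : ContinuousAt (fun e : ℝ => (k*(1+e^2+e^4)/(1+e^2) : ℝ)) 0 := by
          apply ContinuousAt.div (by fun_prop) (by fun_prop); norm_num
        fun_prop) (by rw [hBk]; norm_num; rw [mul_comm, add_assoc]; simp; exact hk0)
    filter_upwards [eventually_gt_atTop 0, this] with n hn h5 h
    have hn1 : (n:ℝ) ≠ 0 := by exact_mod_cast hn.ne'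
    apply h5
    have h' : ((X1 n:ℝ)^3 + A*X1 n + B) = 0 := by exact_mod_cast h
    rw [← h']
    have : (X1 n : ℝ) = (k*(1+(n:ℝ)⁻¹^2+(n:ℝ)⁻¹^4)/(1+(n:ℝ)⁻¹^2) : ℝ) := by
      simp only [X1]; push_cast
      have p1 : (n:ℝ)^2+1 ≠ 0 := by positivity
      rw [show 1+(n:ℝ)⁻¹^2 = (n^2+1)/n^2 by field_simp]
      field_simp
    rw [this]
  · filter_upwards [eventually_gt_atTop 1] with n hn h
    have hn0 : n ≠ 0 := by omega
    have hn1 : (n:ℚ) ≠ 0 := by exact_mod_cast hn0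
    have hn2 : (1:ℚ) < (n:ℚ)^2 := by
      have : (1:ℚ) < n := by exact_mod_cast hn
      nlinarith
    simp only [X1, X2] at h
    push_cast at h
    have p1 : (n:ℚ)^2+1 ≠ 0 := by positivity
    have p2 : (n:ℚ)^4+n^2+1 ≠ 0 := by positivity
    field_simp at h
    linarith
  · have lo1 : ∃ C : ℝ, ∀ᶠ n : ℕ in atTop, 4 * Real.log n - C ≤ logHeight₁ (X1 n) := ⟨C + Real.log 3, by
      filter_upwards [b1] with n h; linarith [(abs_le.1 h).1]⟩
    have lo2 : ∃ C : ℝ, ∀ᶠ n : ℕ in atTop, 4 * Real.log n - C ≤ logHeight₁ (X2 n) := ⟨C + Real.log 3, by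
      filter_upwards [b2] with n h; linarith [(abs_le.1 h).1]⟩
    refine HH_of 3.99 0.01 0.99 (by norm_num) (by norm_num) (by norm_num) (by norm_num)
      (slack_ge (by norm_num) lo1) (slack_ge (by norm_num) lo2) ?_ ?_ ?_ ?_
    · refine slack_ge (l' := 0) (by norm_num) ⟨2*(C + Real.log 3), ?_⟩
      filter_upwards [b1, b2] with n h1 h2
      rw [abs_le] at h1 h2; linarith
    · refine slack_ge (l' := 0) (by norm_num) ⟨2*(C + Real.log 3), ?_⟩
      filter_upwards [b1, b2] with n h1 h2
      rw [abs_le] at h1 h2; linarith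
    · apply slack_ge (l' := 1) (by norm_num)
      simp only [one_mul]
      apply shrink (F := fun e => (k*(-2-e-2*e^2)/((1+e^2)*(1+e)^2) + A/k*e*(1+e^2)/((1+e)^2*(1-e+e^2)^2) : ℝ)) (k := k)
      · apply ContinuousAt.add
        · apply ContinuousAt.div (by fun_prop) (by fun_prop); norm_num
        · apply ContinuousAt.div (by fun_prop) (by fun_prop); norm_num
      · norm_num; exact hk0
      · filter_upwards [eventually_gt_atTop 1] with n hn
        have hn1 : (1:ℝ) < n := by exact_mod_cast hn
        rw [← key n (by linarith) (by linarith) (by linarith), hBk]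
        simp only [X1, X2, s]; push_cast; rfl
    · apply slack_ge (l' := 1) (by norm_num)
      simp only [one_mul]
      apply shrink (F := fun e => -(k*(-2+e-2*e^2)/((1+e^2)*(1-e)^2) - A/k*e*(1+e^2)/((1-e)^2*(1+e+e^2)^2) : ℝ)) (k := k)
      · apply ContinuousAt.neg
        apply ContinuousAt.sub
        · apply ContinuousAt.div (by fun_prop) (by fun_prop); norm_num
        · apply ContinuousAt.div (by fun_prop) (by fun_prop); norm_num
      · norm_num; exact hk0
      · filter_upwards [eventually_gt_atTop 1] with n hn
        have hn1 : (1:ℝ) < n := by exact_mod_cast hn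
        have := key (-n) (by linarith) (by linarith) (by linarith)
        simp only [Even.neg_pow (show Even 4 by decide), Even.neg_pow (show Even 2 by decide), Odd.neg_pow (show Odd 3 by decide), sub_neg_eq_add, inv_neg] at this
        rw [hBk]
        simp only [X1, X2, s]; push_cast; rw [this]; ring
end

noncomputable section
open Height Filter
variable {a b c : ℤ}

def pU {R : Type*} [CommRing R] (w : R) : R := -w^4+86*w^3+48*w^2+320*w+1088
def pV {R : Type*} [CommRing R] (w : R) : R := 2*w^4+17*w^3+552*w^2-640*w-448
def pY {R : Type*} [CommRing R] (w : R) : R := -w^4-103*w^3-600*w^2+320*w-640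
def rU (e : ℝ) : ℝ := -1+86*e+48*e^2+320*e^3+1088*e^4
def rV (e : ℝ) : ℝ := 2+17*e+552*e^2-640*e^3-448*e^4
def rY (e : ℝ) : ℝ := -1-103*e-600*e^2+320*e^3-640*e^4
lemma pU_r {w : ℝ} (hw : w ≠ 0) : pU w = w^4 * rU w⁻¹ := by unfold pU rU; field_simp
lemma pV_r {w : ℝ} (hw : w ≠ 0) : pV w = w^4 * rV w⁻¹ := by unfold pV rV; field_simp
lemma pY_r {w : ℝ} (hw : w ≠ 0) : pY w = w^4 * rY w⁻¹ := by unfold pY rY; field_simp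
lemma rU_c : Continuous rU := by unfold rU; fun_prop
lemma rV_c : Continuous rV := by unfold rV; fun_prop
lemma rY_c : Continuous rY := by unfold rY; fun_prop

lemma big_id (w : ℚ) : (w+1)*(w*(w-8)^3*pY w^3+64*(w+1)^3*pV w^3) = (w^2+20*w-8)^2*(w*pU w^3+pV w^3) := by
  unfold pU pV pY; ring
lemma bez_UV (w : ℤ) : (3555-1030*w-26*w^2-4*w^3)*pU w + (198-245*w+176*w^2-2*w^3)*pV w = 3779136 := by
  unfold pU pV; ring
lemma sum_UVY (w : ℤ) : pU w + pV w + pY w = 0 := by unfold pU pV pY; ring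

lemma gcd_UV (w : ℤ) : (Int.gcd (pU w) (pV w)) ∣ 3779136 := by
  have : ((Int.gcd (pU w) (pV w) : ℕ):ℤ) ∣ 3779136 := by
    rw [← bez_UV w]
    exact dvd_add (Dvd.dvd.mul_left (Int.gcd_dvd_left ..) _) (Dvd.dvd.mul_left (Int.gcd_dvd_right ..) _)
  exact_mod_cast this
lemma gcd_YV (w : ℤ) : (Int.gcd (pY w) (pV w)) ∣ 3779136 := by
  refine dvd_trans (Int.dvd_gcd ?_ (Int.gcd_dvd_right ..)) (gcd_UV w)
  have : pU w = -(pY w + pV w) := by linarith [sum_UVY w]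
  rw [this, dvd_neg]
  exact dvd_add (Int.gcd_dvd_left ..) (Int.gcd_dvd_right ..)

/-- lower bound for heights of fractions -/
lemma lo_frac (p r p' r' : ℤ) (K : ℕ) (hK : K ≠ 0) (hg : Int.gcd p r ∣ K) (hp' : p' ≠ 0) (hr' : r' ≠ 0) (hp : p ≠ 0) (hr : r ≠ 0) :
    Real.log |(p:ℝ)| - Real.log |(r':ℝ)| - Real.log K ≤ logHeight₁ (((p'*p : ℤ):ℚ)/((r'*r:ℤ):ℚ)) := by
  have h := h_frac (p'*p) (r'*r) (mul_ne_zero hr' hr)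
  have h1 : Int.gcd (p'*p) (r'*r) ∣ p'.natAbs * r'.natAbs * K := by
    have e : Int.gcd (p'*p) (r'*r) ∣ Int.gcd p' (r'*r) * Int.gcd p (r'*r) := by
      simp only [Int.gcd, Int.natAbs_mul]; exact Nat.gcd_mul_left_dvd_mul_gcd _ _ _
    have e2 : Int.gcd p (r'*r) ∣ Int.gcd p r' * Int.gcd p r := by
      simp only [Int.gcd, Int.natAbs_mul]; exact Nat.gcd_mul_right_dvd_mul_gcd _ _ _
    refine e.trans ?_
    rw [mul_assoc]
    refine mul_dvd_mul ?_ (e2.trans (mul_dvd_mul ?_ hg))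
    · exact Nat.gcd_dvd_left _ _
    · exact Nat.gcd_dvd_right _ _
  have pa : 0 < p'.natAbs := Int.natAbs_pos.2 hp'
  have pb : 0 < r'.natAbs := Int.natAbs_pos.2 hr'
  have h2 := Nat.le_of_dvd (by positivity) h1
  have h3 : Real.log (Int.gcd (p'*p) (r'*r)) ≤ Real.log |(p':ℝ)| + Real.log |(r':ℝ)| + Real.log K := by
    have g0 : 0 < Int.gcd (p'*p) (r'*r) := Int.gcd_pos_iff.2 (Or.inl (mul_ne_zero hp' hp))
    rw [← Real.log_mul (by simpa using hp') (by simpa using hr'), ← Real.log_mul (by simp [hp', hr']) (by exact_mod_cast hK)]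
    apply Real.log_le_log (by exact_mod_cast g0)
    have : ((Int.gcd (p'*p) (r'*r) : ℕ):ℝ) ≤ ((p'.natAbs * r'.natAbs * K : ℕ):ℝ) := by exact_mod_cast h2
    refine this.trans (le_of_eq ?_)
    push_cast [Nat.cast_natAbs]; rfl
  have h4 : Real.log |(p':ℝ)| + Real.log |(p:ℝ)| ≤ Real.log (max |((p'*p:ℤ):ℝ)| |((r'*r:ℤ):ℝ)|) := by
    rw [← Real.log_mul (by simpa using hp') (by simpa using hp)]
    have : 0 < |(p':ℝ)| * |(p:ℝ)| := by
      apply mul_pos <;> (rw [abs_pos]; simpa)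
    apply Real.log_le_log this
    apply le_max_of_le_left
    push_cast; rw [abs_mul]
  linarith
end

noncomputable section
open Height Filter
variable {a b c : ℤ}

lemma logasy_ge {F : ℝ → ℝ} (hF : ContinuousAt F 0) (h0 : F 0 ≠ 0) (g : ℕ → ℝ) (d : ℕ)
    (h : ∀ᶠ n : ℕ in atTop, g n = n^d * F ((n:ℝ)⁻¹)) :
    ∃ C : ℝ, ∀ᶠ n : ℕ in atTop, d * Real.log n - C ≤ Real.log |g n| := by
  obtain ⟨C, C0, hC⟩ := asy_ge hF h0 _ d h
  refine ⟨- Real.log C, ?_⟩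
  filter_upwards [hC, eventually_gt_atTop 0] with n hn hn0
  have hn1 : (0:ℝ) < n := by exact_mod_cast hn0
  calc _ = Real.log (C * n^d) := by rw [Real.log_mul (by positivity) (by positivity), Real.log_pow]; ring
    _ ≤ _ := Real.log_le_log (by positivity) hn

lemma logasy_le {F : ℝ → ℝ} (hF : ContinuousAt F 0) (h0 : F 0 ≠ 0) (g : ℕ → ℝ) (d : ℕ)
    (h : ∀ᶠ n : ℕ in atTop, g n = n^d * F ((n:ℝ)⁻¹)) :
    ∃ C : ℝ, ∀ᶠ n : ℕ in atTop, Real.log |g n| ≤ d * Real.log n + C := by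
  obtain ⟨C, C0, hC⟩ := asy_le hF _ d h
  obtain ⟨C', C0', hC'⟩ := asy_ge hF h0 _ d h
  refine ⟨Real.log C, ?_⟩
  filter_upwards [hC, hC', eventually_gt_atTop 0] with n hn hn' hn0
  have hn1 : (0:ℝ) < n := by exact_mod_cast hn0
  calc _ ≤ Real.log (C * n^d) := Real.log_le_log (lt_of_lt_of_le (by positivity) hn') hn
    _ = _ := by rw [Real.log_mul (by positivity) (by positivity), Real.log_pow]; ring

lemma fin_id {V U Y w z B : ℚ} (hV : V ≠ 0) (hw : w + 1 ≠ 0) (hz : z^3 = w*B)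
    (h : (w+1)*(w*(w-8)^3*Y^3+64*(w+1)^3*V^3) = (w^2+20*w-8)^2*(w*U^3+V^3)) :
    (z*(w-8)*Y/(4*(w+1)*V))^3 + 0*(z*(w-8)*Y/(4*(w+1)*V)) + B =
    ((w^2+20*w-8)/(8*(w+1)^2))^2*((z*U/V)^3 + 0*(z*U/V) + B) := by
  have l : (z*(w-8)*Y/(4*(w+1)*V))^3 + 0*(z*(w-8)*Y/(4*(w+1)*V)) + B =
      B*((w+1)*(w*(w-8)^3*Y^3+64*(w+1)^3*V^3))/(64*(w+1)^4*V^3) := by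
    rw [div_pow, mul_pow, mul_pow, hz]; field_simp; ring
  have r : (z*U/V)^3 + 0*(z*U/V) + B = B*(w*U^3+V^3)/V^3 := by
    rw [div_pow, mul_pow, hz]; field_simp; ring
  rw [l, r, h, div_pow]; field_simp; ring

lemma two_A0 (hd : dsc a b c ≠ 0) {A B : ℚ} (hA : A = b - a^2/3) (hB : B = c - a*b/3 + 2*a^3/27)
    (A0 : A = 0) (B0 : B ≠ 0) : ∃ D : ℤ, D ≠ 0 ∧ ∃ P : Fin 2 → (twist a b c D).Point, LinearIndependent ℤ P := by
  obtain ⟨β, hβ⟩ : ∃ β : ℤ, B = β/27 := ⟨27*c-9*a*b+2*a^3, by rw [hB]; push_cast; ring⟩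
  have β0 : β ≠ 0 := by rintro rfl; apply B0; rw [hβ]; simp
  have βr : (β:ℝ) ≠ 0 := by exact_mod_cast β0
  let z : ℕ → ℤ := fun n => β*n
  let w : ℕ → ℤ := fun n => 27*β^2*n^3
  let X1 : ℕ → ℚ := fun n => z n*pU (w n:ℚ)/pV (w n:ℚ)
  let X2 : ℕ → ℚ := fun n => z n*((w n)-8)*pY (w n:ℚ)/(4*((w n)+1)*pV (w n:ℚ))
  let s : ℕ → ℚ := fun n => ((w n:ℚ)^2+20*w n-8)/(8*((w n:ℚ)+1)^2)
  let om : ℝ → ℝ := fun e => e^3/(27*β^2)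
  have om0 : om 0 = 0 := by simp [om]
  have omc : ContinuousAt om 0 := by simp only [om]; fun_prop
  let x1 : ℝ → ℝ := fun e => β*(rU (om e))/(rV (om e))
  let x2 : ℝ → ℝ := fun e => β*(1-8*om e)*(rY (om e))/(4*(1+om e)*rV (om e))
  let σ : ℝ → ℝ := fun e => (1+20*om e-8*om e^2)/(8*(1+om e)^2)
  have cU : ContinuousAt (fun e => rU (om e)) 0 := rU_c.continuousAt.comp omc
  have cV : ContinuousAt (fun e => rV (om e)) 0 := rV_c.continuousAt.comp omc
  have cY : ContinuousAt (fun e => rY (om e)) 0 := rY_c.continuousAt.comp omc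
  have c1 : ContinuousAt x1 0 := by
    apply ContinuousAt.div (by fun_prop) (by fun_prop); simp [om0, rV]
  have c2 : ContinuousAt x2 0 := by
    apply ContinuousAt.div (by fun_prop) (by fun_prop); simp [om0, rV]
  have c3 : ContinuousAt σ 0 := by
    apply ContinuousAt.div (by fun_prop) (by fun_prop); simp [om0]
  have v1 : x1 0 = -β/2 := by simp [x1, om0, rU, rV]
  have v2 : x2 0 = -β/8 := by simp [x2, om0, rY, rV]; norm_num
  have v3 : σ 0 = 1/8 := by simp [σ, om0]
  have wz : ∀ n : ℕ, 0 < n → (w n:ℝ) ≠ 0 := by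
    intro n hn
    have : (n:ℝ) ≠ 0 := by exact_mod_cast hn.ne'
    simp only [w]; push_cast; positivity
  have omw : ∀ n : ℕ, om ((n:ℝ)⁻¹) = (w n:ℝ)⁻¹ := by
    intro n; simp only [om, w]; push_cast; rw [inv_pow, div_eq_mul_inv, ← mul_inv, mul_comm]
  have nV : ∀ᶠ n : ℕ in atTop, pV (w n:ℝ) ≠ 0 := by
    filter_upwards [ev_ne cV (by simp [om0, rV]), eventually_gt_atTop 0] with n h1 h2
    rw [pV_r (wz n h2), ← omw]
    exact mul_ne_zero (pow_ne_zero _ (wz n h2)) h1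
  have nU : ∀ᶠ n : ℕ in atTop, pU (w n:ℝ) ≠ 0 := by
    filter_upwards [ev_ne cU (by simp [om0, rU]), eventually_gt_atTop 0] with n h1 h2
    rw [pU_r (wz n h2), ← omw]
    exact mul_ne_zero (pow_ne_zero _ (wz n h2)) h1
  have nY : ∀ᶠ n : ℕ in atTop, pY (w n:ℝ) ≠ 0 := by
    filter_upwards [ev_ne cY (by simp [om0, rY]), eventually_gt_atTop 0] with n h1 h2
    rw [pY_r (wz n h2), ← omw]
    exact mul_ne_zero (pow_ne_zero _ (wz n h2)) h1
  have n1 : ∀ᶠ n : ℕ in atTop, (w n + 1) ≠ 0 ∧ w n - 8 ≠ 0 ∧ z n ≠ 0 := by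
    filter_upwards [eventually_gt_atTop 0] with n h2
    have h2' : (0:ℤ) < n := by exact_mod_cast h2
    have : (27:ℤ) ≤ w n := by
      have : 0 < β^2*n^3 := by positivity
      simp only [w]; nlinarith
    exact ⟨by omega, by omega, by simp [z, β0, h2.ne']⟩
  have iU : ∀ n : ℕ, ((pU (w n) : ℤ):ℝ) = pU (w n:ℝ) := by intro n; simp [pU]
  have iV : ∀ n : ℕ, ((pV (w n) : ℤ):ℝ) = pV (w n:ℝ) := by intro n; simp [pV]
  have iY : ∀ n : ℕ, ((pY (w n) : ℤ):ℝ) = pY (w n:ℝ) := by intro n; simp [pY]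
  have qU : ∀ n : ℕ, ((pU (w n) : ℤ):ℚ) = pU (w n:ℚ) := by intro n; simp [pU]
  have qV : ∀ n : ℕ, ((pV (w n) : ℤ):ℚ) = pV (w n:ℚ) := by intro n; simp [pV]
  have qY : ∀ n : ℕ, ((pY (w n) : ℤ):ℚ) = pY (w n:ℚ) := by intro n; simp [pY]
  have aU : ∀ n : ℕ, 0 < n → pU (w n:ℝ) = n^12*((27*β^2)^4*rU (om (n:ℝ)⁻¹)) := by
    intro n h; rw [pU_r (wz n h), omw]; simp only [w]; push_cast; ring
  have aV : ∀ n : ℕ, 0 < n → pV (w n:ℝ) = n^12*((27*β^2)^4*rV (om (n:ℝ)⁻¹)) := by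
    intro n h; rw [pV_r (wz n h), omw]; simp only [w]; push_cast; ring
  have aY : ∀ n : ℕ, 0 < n → pY (w n:ℝ) = n^12*((27*β^2)^4*rY (om (n:ℝ)⁻¹)) := by
    intro n h; rw [pY_r (wz n h), omw]; simp only [w]; push_cast; ring
  have a8 : ∀ n : ℕ, 0 < n → (w n:ℝ) - 8 = n^3*(27*β^2*(1-8*om (n:ℝ)⁻¹)) := by
    intro n h; rw [omw]; have := wz n h
    have e : (w n:ℝ) = 27*β^2*n^3 := by simp only [w]; push_cast; ring
    calc (w n:ℝ) - 8 = w n * (1 - 8*(w n:ℝ)⁻¹) := by field_simp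
      _ = (27*β^2*n^3) * (1 - 8*(w n:ℝ)⁻¹) := by rw [← e]
      _ = _ := by ring
  have a11 : ∀ n : ℕ, 0 < n → (w n:ℝ) + 1 = n^3*(27*β^2*(1+om (n:ℝ)⁻¹)) := by
    intro n h; rw [omw]; have := wz n h
    have e : (w n:ℝ) = 27*β^2*n^3 := by simp only [w]; push_cast; ring
    calc (w n:ℝ) + 1 = w n * (1 + (w n:ℝ)⁻¹) := by field_simp
      _ = (27*β^2*n^3) * (1 + (w n:ℝ)⁻¹) := by rw [← e]
      _ = _ := by ring
  have n1' : ∀ᶠ n : ℕ in atTop, (1 + om (n:ℝ)⁻¹) ≠ 0 :=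
    ev_ne (F := fun e => 1 + om e) (by fun_prop) (by simp [om0])
  have nV' := ev_ne cV (by simp [om0, rV])
  have pcast : ∀ n : ℕ, (((pU (w n:ℚ)) : ℚ):ℝ) = pU (w n:ℝ) ∧ (((pV (w n:ℚ)) : ℚ):ℝ) = pV (w n:ℝ) ∧ (((pY (w n:ℚ)) : ℚ):ℝ) = pY (w n:ℝ) := by
    intro n; simp [pU, pV, pY]
  have e1 : ∀ᶠ n : ℕ in atTop, (X1 n : ℝ) = n^1 * x1 ((n:ℝ)⁻¹) := by
    filter_upwards [nV', eventually_gt_atTop 0] with n h h3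
    have hn1 : (n:ℝ) ≠ 0 := by exact_mod_cast h3.ne'
    simp only [X1, x1]; push_cast
    rw [(pcast n).1, (pcast n).2.1, aU n h3, aV n h3]
    simp only [z]; push_cast
    generalize rU (om (n:ℝ)⁻¹) = U at *
    generalize rV (om (n:ℝ)⁻¹) = V at *
    field_simp
  have e2 : ∀ᶠ n : ℕ in atTop, (X2 n : ℝ) = n^1 * x2 ((n:ℝ)⁻¹) := by
    filter_upwards [nV', n1', eventually_gt_atTop 0] with n h h' h3
    have hn1 : (n:ℝ) ≠ 0 := by exact_mod_cast h3.ne'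
    simp only [X2, x2]; push_cast
    rw [(pcast n).2.2, (pcast n).2.1, aY n h3, aV n h3, a8 n h3, a11 n h3]
    simp only [z]; push_cast
    generalize rY (om (n:ℝ)⁻¹) = U at *
    generalize rV (om (n:ℝ)⁻¹) = V at *
    generalize (om (n:ℝ)⁻¹) = o at *
    field_simp
  have e3 : ∀ᶠ n : ℕ in atTop, (s n : ℝ) = σ ((n:ℝ)⁻¹) := by
    filter_upwards [n1', n1, eventually_gt_atTop 0] with n h h1 h3
    have h1' : (w n:ℝ) + 1 ≠ 0 := by exact_mod_cast h1.1
    simp only [s, σ]; push_cast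
    rw [omw] at *
    have := wz n h3
    generalize (w n:ℝ) = t at *
    rw [div_eq_div_iff (by positivity) (by positivity)]
    field_simp
  have hx : x1 0 - x2 0 ≠ 0 := by
    rw [v1, v2]; intro h; apply βr; linarith
  obtain ⟨N2, N3⟩ := ne_pm (A := A) (B := B) c1 c2 X1 X2 1 one_ne_zero e1 e2 hx (by rw [v1]; intro h; apply βr; linarith)
  have up1 : ∃ C : ℝ, ∀ᶠ n : ℕ in atTop, logHeight₁ (X1 n) ≤ (13:ℕ) * Real.log n + C := by
    apply up_asy (F := fun e => β*((27*β^2)^4*rU (om e))) (G := fun e => e*((27*β^2)^4*rV (om e))) (by fun_prop) (by fun_prop)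
      (fun n => z n*pU (w n)) (fun n => pV (w n))
    · filter_upwards [eventually_gt_atTop 0] with n h3
      push_cast; rw [iU, aU n h3]; simp only [z]; push_cast; ring
    · filter_upwards [eventually_gt_atTop 0] with n h3
      have hn1 : (n:ℝ) ≠ 0 := by exact_mod_cast h3.ne'
      push_cast; rw [iV, aV n h3]
      generalize rV (om (n:ℝ)⁻¹) = V at *
      field_simp
    · filter_upwards [nV] with n h h'
      apply h; rw [← iV, h']; simp
    · filter_upwards with n
      push_cast; rw [qU, qV]
  have up2 : ∃ C : ℝ, ∀ᶠ n : ℕ in atTop, logHeight₁ (X2 n) ≤ (16:ℕ) * Real.log n + C := by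
    apply up_asy (F := fun e => β*(27*β^2*(1-8*om e))*((27*β^2)^4*rY (om e)))
      (G := fun e => e*(4*(27*β^2*(1+om e))*((27*β^2)^4*rV (om e)))) (by fun_prop) (by fun_prop)
      (fun n => z n*(w n-8)*pY (w n)) (fun n => 4*(w n+1)*pV (w n))
    · filter_upwards [eventually_gt_atTop 0] with n h3
      push_cast; rw [iY, aY n h3, a8 n h3]; simp only [z]; push_cast; ring
    · filter_upwards [eventually_gt_atTop 0] with n h3
      have hn1 : (n:ℝ) ≠ 0 := by exact_mod_cast h3.ne'
      push_cast; rw [iV, aV n h3, a11 n h3]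
      generalize rV (om (n:ℝ)⁻¹) = V at *
      generalize (om (n:ℝ)⁻¹) = o at *
      field_simp
    · filter_upwards [nV, n1] with n h h1
      have : pV (w n) ≠ 0 := by
        intro h'; apply h; rw [← iV, h']; simp
      exact mul_ne_zero (mul_ne_zero four_ne_zero h1.1) this
    · filter_upwards with n
      push_cast; rw [qY, qV]
  have lU : ∃ C : ℝ, ∀ᶠ n : ℕ in atTop, (12:ℕ) * Real.log n - C ≤ Real.log |pU (w n:ℝ)| := by
    apply logasy_ge (F := fun e => ((27*β^2)^4*rU (om e))) (by fun_prop) (by simp [om0, rU, β0])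
    filter_upwards [eventually_gt_atTop 0] with n h3
    rw [aU n h3]
  have lY : ∃ C : ℝ, ∀ᶠ n : ℕ in atTop, (12:ℕ) * Real.log n - C ≤ Real.log |pY (w n:ℝ)| := by
    apply logasy_ge (F := fun e => ((27*β^2)^4*rY (om e))) (by fun_prop) (by simp [om0, rY, β0])
    filter_upwards [eventually_gt_atTop 0] with n h3
    rw [aY n h3]
  have lw : ∃ C : ℝ, ∀ᶠ n : ℕ in atTop, Real.log |4*((w n:ℝ)+1)| ≤ (3:ℕ) * Real.log n + C := by
    apply logasy_le (F := fun e => 4*(27*β^2*(1+om e))) (by fun_prop) (by simp [om0, β0])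
    filter_upwards [eventually_gt_atTop 0] with n h3
    rw [a11 n h3]; ring
  have lo1 : ∃ C : ℝ, ∀ᶠ n : ℕ in atTop, 12 * Real.log n - C ≤ logHeight₁ (X1 n) := by
    obtain ⟨C, hC⟩ := lU
    refine ⟨C + Real.log (3779136:ℕ), ?_⟩
    filter_upwards [hC, nU, nV, n1] with n h hU hV h1
    have := lo_frac (pU (w n)) (pV (w n)) (z n) 1 3779136 (by norm_num) (gcd_UV _) h1.2.2 one_ne_zero
      (fun h' => hU (by rw [← iU, h']; simp)) (fun h' => hV (by rw [← iV, h']; simp))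
    rw [iU] at this
    push_cast at this h
    rw [qU, qV] at this
    simp only [one_mul, Real.log_one, abs_one, sub_zero] at this
    have e : logHeight₁ (X1 n) = logHeight₁ ((z n:ℚ) * pU (w n:ℚ)/pV (w n:ℚ)) := rfl
    rw [e]; push_cast; linarith
  have lo2 : ∃ C : ℝ, ∀ᶠ n : ℕ in atTop, 9 * Real.log n - C ≤ logHeight₁ (X2 n) := by
    obtain ⟨C, hC⟩ := lY
    obtain ⟨C', hC'⟩ := lw
    refine ⟨C + C' + Real.log (3779136:ℕ), ?_⟩
    filter_upwards [hC, hC', nY, nV, n1] with n h h' hU hV h1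
    have := lo_frac (pY (w n)) (pV (w n)) (z n*(w n-8)) (4*(w n+1)) 3779136 (by norm_num) (gcd_YV _)
      (mul_ne_zero h1.2.2 h1.2.1) (mul_ne_zero four_ne_zero h1.1)
      (fun h' => hU (by rw [← iY, h']; simp)) (fun h' => hV (by rw [← iV, h']; simp))
    rw [iY] at this
    push_cast at this h h'
    rw [qY, qV] at this
    have e : logHeight₁ (X2 n) = logHeight₁ ((z n:ℚ)*((w n)-8)*pY (w n:ℚ)/(4*((w n)+1)*pV (w n:ℚ))) := rfl
    rw [e]; push_cast; linarith
  refine crit hd hA hB X1 X2 s ?_ N2 N3 ?_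
  · filter_upwards [n1, nV] with n h1 hV
    have hV' : pV (w n:ℚ) ≠ 0 := by
      intro h; apply hV; rw [← (pcast n).2.1, h]; simp
    have hw1 : (w n:ℚ) + 1 ≠ 0 := by exact_mod_cast h1.1
    have hz : (z n:ℚ)^3 = w n * B := by simp only [z, w]; rw [hβ]; push_cast; ring
    simp only [X1, X2, s]
    rw [A0]
    have := big_id (w n)
    exact fin_id hV' hw1 hz this
  · refine HH_of 8.99 4.01 0.99 (by norm_num) (by norm_num) (by norm_num) (by norm_num)
      (slack_ge (by norm_num) lo1) (slack_ge (by norm_num) lo2) ?_ ?_ ?_ ?_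
    · apply slack_ge (l' := -4) (by norm_num)
      obtain ⟨C, hC⟩ := lo1
      obtain ⟨C', hC'⟩ := up2
      refine ⟨C+C', ?_⟩
      filter_upwards [hC, hC'] with n k1 k2
      push_cast at k1 k2; linarith
    · apply slack_ge (l' := -4) (by norm_num)
      obtain ⟨C, hC⟩ := lo2
      obtain ⟨C', hC'⟩ := up1
      refine ⟨C+C', ?_⟩
      filter_upwards [hC, hC'] with n k1 k2
      push_cast at k1 k2; linarith
    · have := slack_ge (l := 0.99) (by norm_num) (grow_pm (A := A) (B := B) c1 c2 c3 X1 X2 s 1 one_ne_zero e1 e2 e3 hx (-1)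
        (by rw [v1, v2, v3]; intro h; apply βr; field_simp at h; ring_nf at h; linarith) (-1) (by simp))
      simpa only [neg_one_mul, ← sub_eq_add_neg] using this
    · have := slack_ge (l := 0.99) (by norm_num) (grow_pm (A := A) (B := B) c1 c2 c3 X1 X2 s 1 one_ne_zero e1 e2 e3 hx 1
        (by rw [v1, v2, v3]; intro h; apply βr; field_simp at h; ring_nf at h; linarith) 1 (by simp))
      simpa only [one_mul] using this

theorem two_pts (hd : dsc a b c ≠ 0) : ∃ D : ℤ, D ≠ 0 ∧ ∃ P : Fin 2 → (twist a b c D).Point, LinearIndependent ℤ P := by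
  obtain ⟨A, hA⟩ : ∃ A : ℚ, A = b - a^2/3 := ⟨_, rfl⟩
  obtain ⟨B, hB⟩ : ∃ B : ℚ, B = c - a*b/3 + 2*a^3/27 := ⟨_, rfl⟩
  by_cases B0 : B = 0
  · exact two_B0 hd hA hB B0
  by_cases A0 : A = 0
  · exact two_A0 hd hA hB A0 B0
  · exact two_AB hd hA hB A0 B0

theorem not_rank (hd : dsc a b c ≠ 0) {j : ℝ} (hj : j ≤ 1) : ¬ RankBound a b c j := by
  intro h
  obtain ⟨D, hD, P, hP⟩ := two_pts hd
  refine h D hD ⟨fun i => P (Fin.castLE (Nat.ceil_le.2 (by push_cast; linarith)) i), ?_⟩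
  exact hP.comp _ (Fin.castLE_injective _)
end

noncomputable section
open Filter

/-- value of the cubic -/
def fc (a b c x : ℝ) : ℝ := x^3+a*x^2+b*x+c

structure Geo (a b c : ℝ) {G : Type*} [AddCommGroup G] (v : G → ℝ × ℝ) : Prop where
  z2 : (v 0).2 = 0
  z1 : (v 0).1 ≠ 0
  aff : ∀ g, g ≠ 0 → (v g).2 = 1
  neg : ∀ g, v (-g) = v g
  rel : ∀ P Q, XRel a b c (v P) (v Q) (v (P+Q)) (v (P-Q))
  pos : ∀ g, g ≠ 0 → 0 ≤ fc a b c (v g).1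
  inj : ∀ P Q, v P = v Q → P = Q ∨ P = -Q

lemma bez_dsc (a b c x : ℝ) : (3*x^2+2*a*x+4*b-a^2)*((x^2-b)^2-4*c*(2*x+a))
    - (3*x^3-a*x^2-5*b*x+2*a*b-27*c)*fc a b c x = - dsc a b c := by
  unfold fc dsc; ring

lemma T_dbl (a b c p : ℝ) : T1 b a c (p*p) (p*1+1*p) (1*1) = 4*fc a b c p ∧
    T0 b a c (p*p) (p*1+1*p) (1*1) = (p^2-b)^2-4*c*(2*p+a) := by
  unfold T1 T0 fc; constructor <;> ring

lemma T_ne {a b c : ℝ} (hd : dsc a b c ≠ 0) {p r : ℝ × ℝ} (hp : p ≠ 0) (hr : r ≠ 0) 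
    (h0 : T0 b a c (p.1*r.1) (p.1*r.2+p.2*r.1) (p.2*r.2) = 0)
    (h1 : T1 b a c (p.1*r.1) (p.1*r.2+p.2*r.1) (p.2*r.2) = 0)
    (h2 : T2 (p.1*r.1) (p.1*r.2+p.2*r.1) (p.2*r.2) = 0) : False := by
  obtain ⟨p1, p2⟩ := p
  obtain ⟨r1, r2⟩ := r
  simp only at h0 h1 h2
  have e : p1*r2 = p2*r1 := by
    have : (p1*r2-p2*r1)^2 = 0 := by rw [← h2]; unfold T2; ring
    have := pow_eq_zero_iff (two_ne_zero) |>.1 this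
    linarith
  by_cases hp2 : p2 = 0
  · subst hp2
    have hp1 : p1 ≠ 0 := fun h => hp (by rw [h]; rfl)
    have hr2 : r2 = 0 := by
      rw [zero_mul] at e; exact (mul_eq_zero.1 e).resolve_left hp1
    subst hr2
    have hr1 : r1 ≠ 0 := fun h => hr (by rw [h]; rfl)
    unfold T0 at h0
    apply mul_ne_zero hp1 hr1
    have : (p1*r1)^2 = 0 := by linear_combination h0
    exact pow_eq_zero_iff (two_ne_zero) |>.1 this
  · have hr2 : r2 ≠ 0 := by
      rintro rfl
      rw [mul_zero] at e
      have : r1 = 0 := (mul_eq_zero.1 e.symm).resolve_left hp2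
      exact hr (by rw [this]; rfl)
    obtain ⟨x, hx⟩ : ∃ x, x = p1/p2 := ⟨_, rfl⟩
    have e1 : p1 = x*p2 := by rw [hx]; field_simp
    have e2 : r1 = x*r2 := by rw [hx]; field_simp; linarith
    subst e1 e2
    have k1 : (p2*r2)^2 * (4*fc a b c x) = 0 := by rw [← h1]; unfold T1 fc; ring
    have k0 : (p2*r2)^2 * ((x^2-b)^2-4*c*(2*x+a)) = 0 := by rw [← h0]; unfold T0; ring
    have hne : (p2*r2)^2 ≠ 0 := by positivity
    have k1' := (mul_eq_zero.1 k1).resolve_left hne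
    have k0' := (mul_eq_zero.1 k0).resolve_left hne
    apply hd
    have := bez_dsc a b c x
    rw [k0', show fc a b c x = 0 by linarith] at this
    linarith

lemma fc_low {a b c x : ℝ} (h : 0 ≤ fc a b c x) : -(1+|a|+|b|+|c|) ≤ x := by
  by_contra hx
  push Not at hx
  unfold fc at h
  have ha := abs_nonneg a
  have hb := abs_nonneg b
  have hc := abs_nonneg c
  obtain ⟨y, hy⟩ : ∃ y, y = -x := ⟨_, rfl⟩
  have hxy : x = -y := by linarith
  subst hxy
  have y1 : 1 + |a|+|b|+|c| < y := by linarith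
  have y2 : 1 ≤ y := by linarith
  have e1 : a * y^2 ≤ |a| * y^2 := by gcongr; exact le_abs_self a
  have e2 : -(b*y) ≤ |b| * y^2 := by
    have : -(b*y) ≤ |b| * y := by nlinarith [neg_abs_le b]
    have : |b| * y ≤ |b| * y^2 := by gcongr; nlinarith
    linarith
  have e3 : c ≤ |c| * y^2 := by
    have := le_abs_self c
    nlinarith
  have e4 : y^2*(1+|a|+|b|+|c|) < y^2*y := by gcongr
  nlinarith

variable {a b c : ℝ} {G : Type*} [AddCommGroup G] {v : G → ℝ × ℝ}

lemma Geo.pm (h : Geo a b c v) {P Q : G} (hP : P ≠ 0) (hQ : Q ≠ 0) (hne : (v P).1 ≠ (v Q).1) :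
    P + Q ≠ 0 ∧ P - Q ≠ 0 ∧
    T0 b a c ((v P).1*(v Q).1) ((v P).1+(v Q).1) 1 = ((v P).1-(v Q).1)^2*((v (P+Q)).1*(v (P-Q)).1) ∧
    T1 b a c ((v P).1*(v Q).1) ((v P).1+(v Q).1) 1 = ((v P).1-(v Q).1)^2*((v (P+Q)).1+(v (P-Q)).1) := by
  have n1 : P + Q ≠ 0 := by
    intro e; apply hne; rw [eq_neg_of_add_eq_zero_left e, h.neg]
  have n2 : P - Q ≠ 0 := by
    intro e; apply hne; rw [sub_eq_zero.1 e]
  refine ⟨n1, n2, ?_⟩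
  obtain ⟨l, hl, h0, h1, h2⟩ := h.rel P Q
  simp only [h.aff P hP, h.aff Q hQ, h.aff _ n1, h.aff _ n2, one_mul, mul_one] at h0 h1 h2
  have hl2 : ((v P).1-(v Q).1)^2 = l := by rw [← h2]; unfold T2; ring
  rw [hl2]
  exact ⟨h0, h1⟩

theorem Geo.unbdd (h : Geo a b c v) (hd : dsc a b c ≠ 0) [Infinite G] (T : ℝ) : ∃ g, g ≠ 0 ∧ T < (v g).1 := by
  by_contra hcon
  push Not at hcon
  obtain ⟨M, hM⟩ : ∃ M, M = (1+|a|+|b|+|c|) + |T| := ⟨_, rfl⟩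
  have hM1 : 1 + |a|+|b|+|c| ≤ M := by rw [hM]; linarith [abs_nonneg T]
  have hM2 : T ≤ M := by
    rw [hM]; linarith [le_abs_self T, abs_nonneg a, abs_nonneg b, abs_nonneg c]
  have hb : ∀ g, g ≠ 0 → |(v g).1| ≤ M := by
    intro g hg
    rw [abs_le]
    exact ⟨by linarith [fc_low (h.pos g hg)], by linarith [hcon g hg]⟩
  have hinf : ((fun g => (v g).1) '' {g | g ≠ 0}).Infinite := by
    intro hfin
    have h1 : ({g : G | g ≠ 0}).Infinite := (Set.finite_singleton (0:G)).infinite_compl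
    apply h1
    refine Set.Finite.of_finite_fibers (fun g => (v g).1) hfin ?_
    rintro x ⟨g, hg, rfl⟩
    refine Set.Finite.subset (s := {g, -g}) (Set.toFinite _) ?_
    rintro k ⟨hk, hk2⟩
    simp only [Set.mem_preimage, Set.mem_singleton_iff] at hk2
    exact h.inj k g (Prod.ext hk2 (by rw [h.aff k hk, h.aff g hg]))
  set e := hinf.natEmbedding
  have hX : ∀ n, ∃ g, g ≠ 0 ∧ (v g).1 = (e n : ℝ) := fun n => (e n).2
  choose g hg hgx using hX
  obtain ⟨p, hp, φ, hφ, hlim⟩ := (isCompact_Icc (a := -M) (b := M)).tendsto_subseq (x := fun n => (v (g n)).1)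
    (fun n => abs_le.1 (hb _ (hg n)))
  have hlim2 := hlim.comp (tendsto_add_atTop_nat 1)
  have hne : ∀ n, (v (g (φ n))).1 ≠ (v (g (φ (n+1)))).1 := by
    intro n hn
    rw [hgx, hgx] at hn
    have := e.injective (Subtype.ext hn)
    have := hφ (Nat.lt_succ_self n)
    simp at this
    omega
  have hd0 : Tendsto (fun n => ((v (g (φ n))).1 - (v (g (φ (n+1)))).1)^2) atTop (nhds 0) := by
    have := (hlim.sub hlim2).pow 2
    simpa using this
  have hM0 : 0 ≤ M := by
    linarith [abs_nonneg a, abs_nonneg b, abs_nonneg c]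
  have t1 : Tendsto (fun n => T1 b a c ((v (g (φ n))).1 * (v (g (φ (n+1)))).1) ((v (g (φ n))).1 + (v (g (φ (n+1)))).1) 1) atTop (nhds 0) := by
    refine squeeze_zero_norm (a := fun n => ((v (g (φ n))).1 - (v (g (φ (n+1)))).1)^2 * (M+M)) ?_ (by simpa using hd0.mul_const (M+M))
    intro n
    obtain ⟨n1, n2, -, h1⟩ := h.pm (hg _) (hg _) (hne n)
    rw [h1, Real.norm_eq_abs, abs_mul, abs_of_nonneg (sq_nonneg _)]
    gcongr
    exact (abs_add_le _ _).trans (add_le_add (hb _ n1) (hb _ n2))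
  have t0 : Tendsto (fun n => T0 b a c ((v (g (φ n))).1 * (v (g (φ (n+1)))).1) ((v (g (φ n))).1 + (v (g (φ (n+1)))).1) 1) atTop (nhds 0) := by
    refine squeeze_zero_norm (a := fun n => ((v (g (φ n))).1 - (v (g (φ (n+1)))).1)^2 * (M*M)) ?_ (by simpa using hd0.mul_const (M*M))
    intro n
    obtain ⟨n1, n2, h0, -⟩ := h.pm (hg _) (hg _) (hne n)
    rw [h0, Real.norm_eq_abs, abs_mul, abs_of_nonneg (sq_nonneg _), abs_mul]
    gcongr
    · exact hb _ n1
    · exact hb _ n2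
  have hpair := hlim.prodMk_nhds hlim2
  have c1 : Continuous (fun z : ℝ × ℝ => T1 b a c (z.1*z.2) (z.1+z.2) 1) := by unfold T1; fun_prop
  have c0 : Continuous (fun z : ℝ × ℝ => T0 b a c (z.1*z.2) (z.1+z.2) 1) := by unfold T0; fun_prop
  have e1 := tendsto_nhds_unique ((c1.tendsto (p,p)).comp hpair) t1
  have e0 := tendsto_nhds_unique ((c0.tendsto (p,p)).comp hpair) t0
  have d := T_dbl a b c p
  simp only [mul_one, one_mul] at d e1 e0
  rw [d.1] at e1
  rw [d.2] at e0
  apply hd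
  have := bez_dsc a b c p
  rw [e0, show fc a b c p = 0 by linarith] at this
  linarith
end

noncomputable section
open Filter

lemma quad_ev {A : ℝ} (B C : ℝ) (hA : 0 < A) : ∃ T0, ∀ T, T0 ≤ T → 0 < A*T^2+B*T+C := by
  refine ⟨1+(|B|+|C|)/A, fun T hT => ?_⟩
  have hB := abs_nonneg B
  have hC := abs_nonneg C
  have h0 : 0 ≤ (|B|+|C|)/A := by positivity
  have h1 : 1 ≤ T := by linarith
  have h2 : A + (|B|+|C|) ≤ A*T := by
    calc A + (|B|+|C|) = A*(1+(|B|+|C|)/A) := by field_simp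
      _ ≤ A*T := by gcongr
  have h3 : (A + (|B|+|C|))*T ≤ A*T*T := by gcongr
  have h4 : -(|B| * T) ≤ B*T := by nlinarith [neg_abs_le B]
  have h5 : -(|C| * T) ≤ C := by nlinarith [neg_abs_le C]
  nlinarith

variable {a b c : ℝ} {G : Type*} [AddCommGroup G] {v : G → ℝ × ℝ}

set_option maxHeartbeats 1000000 in
theorem Geo.hit (h : Geo a b c v) (hd : dsc a b c ≠ 0) [Infinite G] {α : ℝ}
    (hα : ∀ x, α ≤ x → 0 < fc a b c x) {δ : ℝ} (hδ : 0 < δ) :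
    ∃ g, g ≠ 0 ∧ |(v g).1 - α| < δ := by
  by_contra hcon
  push Not at hcon
  obtain ⟨S, hS⟩ : ∃ S : Set ℝ, S = {x | ∃ g, g ≠ 0 ∧ (v g).1 = x ∧ α < x} := ⟨_, rfl⟩
  have hne : S.Nonempty := by
    obtain ⟨g, hg, hg2⟩ := h.unbdd hd α
    exact ⟨(v g).1, by rw [hS]; exact ⟨g, hg, rfl, hg2⟩⟩
  have hlow : ∀ x ∈ S, α + δ ≤ x := by
    rw [hS]; rintro x ⟨g, hg, rfl, hx⟩
    have := hcon g hg
    rw [abs_of_pos (by linarith)] at this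
    linarith
  have hbd : BddBelow S := ⟨α + δ, hlow⟩
  obtain ⟨q, hq⟩ : ∃ q, q = sInf S := ⟨_, rfl⟩
  have hq1 : α + δ ≤ q := by rw [hq]; exact le_csInf hne hlow
  have hqle : ∀ x ∈ S, q ≤ x := fun x hx => by rw [hq]; exact csInf_le hbd hx
  have hfq := hα q (by linarith)
  have hqa : 0 < q - α := by linarith
  let A := fun p T : ℝ => T0 b a c (p*T) (p+T) 1 - q * T1 b a c (p*T) (p+T) 1 + q^2*(p-T)^2
  let B := fun p T : ℝ => T0 b a c (p*T) (p+T) 1 - α * T1 b a c (p*T) (p+T) 1 + α^2*(p-T)^2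
  let C := fun p T : ℝ => T1 b a c (p*T) (p+T) 1 - 2*α * (p-T)^2
  obtain ⟨t2, h2⟩ := quad_ev (A := (q-α)^2) (B q 1 - B q 0 - (q-α)^2) (B q 0) (by positivity)
  obtain ⟨t3, h3⟩ := quad_ev (A := 2*(q-α)) (C q 1 - C q 0 - 2*(q-α)) (C q 0) (by positivity)
  obtain ⟨T, hT, hTm⟩ : ∃ g, g ≠ 0 ∧ max (max (q+1) (|A q 0|/(4*fc a b c q))) (max t2 t3) < (v g).1 := h.unbdd hd _
  obtain ⟨τ, hτ⟩ : ∃ τ, τ = (v T).1 := ⟨_, rfl⟩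
  rw [← hτ] at hTm
  simp only [max_lt_iff] at hTm
  obtain ⟨⟨m1, m2⟩, m3, m4⟩ := hTm
  have kA : A q τ < 0 := by
    rw [div_lt_iff₀ (by positivity)] at m2
    have : A q τ = A q 0 - τ * (4*fc a b c q) := by
      simp only [A]; unfold T0 T1 fc; ring
    rw [this]
    linarith [le_abs_self (A q 0)]
  have kB : 0 < B q τ := by
    have := h2 τ m3.le
    have e : B q τ = (q-α)^2*τ^2 + (B q 1 - B q 0 - (q-α)^2)*τ + B q 0 := by
      simp only [B]; unfold T0 T1; ring
    rw [e]; exact this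
  have kC : 0 < C q τ := by
    have := h3 τ m4.le
    have e : C q τ = 2*(q-α)*τ^2 + (C q 1 - C q 0 - 2*(q-α))*τ + C q 0 := by
      simp only [C]; unfold T1; ring
    rw [e]; exact this
  have cA : Continuous (fun p => A p τ) := by simp only [A]; unfold T0 T1; fun_prop
  have cB : Continuous (fun p => B p τ) := by simp only [B]; unfold T0 T1; fun_prop
  have cC : Continuous (fun p => C p τ) := by simp only [C]; unfold T1; fun_prop
  have ev : ∀ᶠ p in nhds q, A p τ < 0 ∧ 0 < B p τ ∧ 0 < C p τ ∧ p < τ :=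
    (cA.continuousAt.eventually (Iio_mem_nhds kA)).and
    ((cB.continuousAt.eventually (Ioi_mem_nhds kB)).and
    ((cC.continuousAt.eventually (Ioi_mem_nhds kC)).and (Iio_mem_nhds (by linarith))))
  obtain ⟨ε, hε, hev⟩ := Metric.eventually_nhds_iff.1 ev
  obtain ⟨p, hpS, hpq⟩ := exists_lt_of_csInf_lt hne (show sInf S < q + ε by rw [← hq]; linarith)
  have hqp := hqle p hpS
  obtain ⟨e1, e2, e3, e4⟩ := hev (show dist p q < ε by rw [Real.dist_eq, abs_of_nonneg (by linarith)]; linarith)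
  rw [hS] at hpS
  obtain ⟨P, hP, hPp, hpα⟩ := hpS
  obtain ⟨n1, n2, r0, r1⟩ := h.pm hP hT (by rw [hPp, ← hτ]; exact e4.ne)
  rw [hPp, ← hτ] at r0 r1
  have hs : 0 < (p-τ)^2 := by have : p - τ ≠ 0 := by linarith
                              positivity
  simp only [A, B, C, r0, r1] at e1 e2 e3
  generalize hx : (v (P+T)).1 = x at *
  generalize hy : (v (P-T)).1 = y at *
  have f1 : (x-q)*(y-q) < 0 := by
    by_contra hh; push Not at hh
    have := mul_nonneg hs.le hh
    linarith
  have f2 : 0 < (x-α)*(y-α) := by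
    by_contra hh; push Not at hh
    have := mul_nonneg hs.le (neg_nonneg.2 hh)
    linarith
  have f3 : 0 < (x-α)+(y-α) := by
    by_contra hh; push Not at hh
    have := mul_nonneg hs.le (neg_nonneg.2 hh)
    linarith
  have g1 : α < x := by by_contra hh; nlinarith
  have g2 : α < y := by by_contra hh; nlinarith
  have s1 := hqle x (by rw [hS]; exact ⟨_, n1, hx, g1⟩)
  have s2 := hqle y (by rw [hS]; exact ⟨_, n2, hy, g2⟩)
  nlinarith
end

noncomputable section
open Filter

variable {a b c : ℝ} {G : Type*} [AddCommGroup G] {v : G → ℝ × ℝ}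

lemma XRel.smul' {v w p m : ℝ × ℝ} (h : XRel a b c v w p m) {s t : ℝ} (hs : s ≠ 0) (ht : t ≠ 0) :
    XRel a b c (s • v) (t • w) p m := by
  obtain ⟨l, hl, h0, h1, h2⟩ := h
  refine ⟨(s*t)^2*l, by positivity, ?_, ?_, ?_⟩
  · rw [mul_assoc, ← h0]; simp only [Prod.smul_fst, Prod.smul_snd, smul_eq_mul]; unfold T0; ring
  · rw [mul_assoc, ← h1]; simp only [Prod.smul_fst, Prod.smul_snd, smul_eq_mul]; unfold T1; ring
  · rw [mul_assoc, ← h2]; simp only [Prod.smul_fst, Prod.smul_snd, smul_eq_mul]; unfold T2; ring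

def TT (a b c : ℝ) (z : (ℝ × ℝ) × (ℝ × ℝ)) : ℝ × ℝ × ℝ :=
  (T0 b a c (z.1.1*z.2.1) (z.1.1*z.2.2+z.1.2*z.2.1) (z.1.2*z.2.2),
   T1 b a c (z.1.1*z.2.1) (z.1.1*z.2.2+z.1.2*z.2.1) (z.1.2*z.2.2),
   T2 (z.1.1*z.2.1) (z.1.1*z.2.2+z.1.2*z.2.1) (z.1.2*z.2.2))

lemma TT_cont : Continuous (TT a b c) := by
  unfold TT T0 T1 T2; fun_prop

lemma TT_low (hd : dsc a b c ≠ 0) : ∃ m > 0, ∀ p r : ℝ × ℝ, ‖p‖ = 1 → ‖r‖ = 1 → m ≤ ‖TT a b c (p, r)‖ := by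
  have hK : IsCompact (Metric.sphere (0 : ℝ × ℝ) 1 ×ˢ Metric.sphere (0 : ℝ × ℝ) 1) :=
    (isCompact_sphere _ _).prod (isCompact_sphere _ _)
  have hne : (Metric.sphere (0 : ℝ × ℝ) 1 ×ˢ Metric.sphere (0 : ℝ × ℝ) 1).Nonempty :=
    ⟨((1,0),(1,0)), by simp [Prod.norm_def]⟩
  obtain ⟨⟨p, r⟩, hz, hmin⟩ := hK.exists_isMinOn hne (TT_cont (a := a) (b := b) (c := c)).norm.continuousOn
  simp only [Set.mem_prod, mem_sphere_iff_norm, sub_zero] at hz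
  refine ⟨‖TT a b c (p, r)‖, ?_, fun p' r' h1 h2 => hmin (by simp [h1, h2])⟩
  rw [gt_iff_lt, norm_pos_iff]
  intro h0
  simp only [TT, Prod.mk_eq_zero] at h0
  refine T_ne hd (p := p) (r := r) ?_ ?_ h0.1 h0.2.1 h0.2.2
  · intro e; rw [e] at hz; simp at hz
  · intro e; rw [e] at hz; simp at hz

def Ph (a b c x0 : ℝ) (z : (ℝ × ℝ) × (ℝ × ℝ)) : ℝ :=
  (TT a b c z).1 - x0 * (TT a b c z).2.1 + x0^2 * (TT a b c z).2.2

lemma Ph_cont {x0 : ℝ} : Continuous (Ph a b c x0) := by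
  unfold Ph TT T0 T1 T2; fun_prop

lemma XRel.Ph_eq {x0 : ℝ} {v w p m : ℝ × ℝ} (h : XRel a b c v w p m) : ∃ l : ℝ, 
    Ph a b c x0 (v, w) = l * ((p.1 - x0*p.2) * (m.1 - x0*m.2)) ∧ ‖TT a b c (v, w)‖ ≤ |l| * (2 * (‖p‖ * ‖m‖)) := by
  obtain ⟨l, hl, h0, h1, h2⟩ := h
  refine ⟨l, ?_, ?_⟩
  · simp only [Ph, TT, h0, h1, h2]; ring
  · simp only [TT, h0, h1, h2]
    have p1 : |p.1| ≤ ‖p‖ := norm_fst_le p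
    have p2 : |p.2| ≤ ‖p‖ := norm_snd_le p
    have m1 : |m.1| ≤ ‖m‖ := norm_fst_le m
    have m2 : |m.2| ≤ ‖m‖ := norm_snd_le m
    have hpm : 0 ≤ ‖p‖ * ‖m‖ := by positivity
    have key : ∀ x y : ℝ, |x| ≤ ‖p‖ → |y| ≤ ‖m‖ → |x * y| ≤ ‖p‖ * ‖m‖ := by
      intro x y hx hy
      rw [abs_mul]; gcongr
    simp only [Prod.norm_mk, Real.norm_eq_abs, abs_mul l]
    refine max_le ?_ (max_le ?_ ?_) <;> gcongr
    · linarith [key _ _ p1 m1]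
    · refine (abs_add_le _ _).trans ?_
      linarith [key _ _ p1 m2, key _ _ p2 m1]
    · linarith [key _ _ p2 m2]

lemma Geo.vne (h : Geo a b c v) (g : G) : v g ≠ 0 := by
  intro e
  by_cases hg : g = 0
  · subst hg; exact h.z1 (by rw [e]; rfl)
  · have := h.aff g hg; rw [e] at this; simp at this

lemma Geo.bad (h : Geo a b c v) {x0 δ : ℝ} (hδ : 0 < δ) {g : G} (hg : ¬ (g ≠ 0 ∧ |(v g).1 - x0| < δ)) :
    δ / (1 + |x0| + δ) * ‖v g‖ ≤ |(v g).1 - x0 * (v g).2| := by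
  have hx := abs_nonneg x0
  have hpos : 0 < 1 + |x0| + δ := by linarith
  rw [div_mul_eq_mul_div, div_le_iff₀ hpos]
  by_cases h0 : g = 0
  · subst h0
    rw [Prod.norm_def, h.z2, mul_zero, sub_zero]
    simp only [norm_zero, Real.norm_eq_abs]
    rw [max_eq_left (abs_nonneg _)]
    nlinarith [abs_nonneg (v 0).1]
  · have hb : δ ≤ |(v g).1 - x0| := by
      by_contra hh; push Not at hh; exact hg ⟨h0, hh⟩
    rw [Prod.norm_def, h.aff g h0, mul_one]
    simp only [norm_one, Real.norm_eq_abs]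
    have : max |(v g).1| 1 ≤ 1 + |x0| + |(v g).1 - x0| := by
      apply max_le
      · have := abs_add_le ((v g).1 - x0) x0
        rw [sub_add_cancel] at this
        linarith
      · linarith [abs_nonneg ((v g).1 - x0)]
    nlinarith

theorem Geo.synd (h : Geo a b c v) (hd : dsc a b c ≠ 0) {R : G} (hR : R ≠ 0) {δ : ℝ} (hδ : 0 < δ) :
    ∃ S : Finset G, ∀ P, ∃ s ∈ S, P + s ≠ 0 ∧ |(v (P+s)).1 - (v R).1| < δ := by
  classical
  obtain ⟨x0, hx0⟩ : ∃ x0, x0 = (v R).1 := ⟨_, rfl⟩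
  rw [← hx0]
  let u : G → ℝ × ℝ := fun g => (‖v g‖)⁻¹ • v g
  have hn : ∀ g, ‖v g‖ ≠ 0 := fun g => norm_ne_zero_iff.2 (h.vne g)
  have hu : ∀ g, ‖u g‖ = 1 := fun g => by
    simp only [u]; rw [norm_smul, norm_inv, norm_norm]; exact inv_mul_cancel₀ (hn g)
  have hrel : ∀ P Q, XRel a b c (u P) (u Q) (v (P+Q)) (v (P-Q)) := fun P Q =>
    (h.rel P Q).smul' (inv_ne_zero (hn P)) (inv_ne_zero (hn Q))
  obtain ⟨m, hm, hmT⟩ := TT_low hd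
  obtain ⟨d1, hd1⟩ : ∃ d1, d1 = δ / (1 + |x0| + δ) := ⟨_, rfl⟩
  have d1p : 0 < d1 := by rw [hd1]; have := abs_nonneg x0; positivity
  obtain ⟨η, hη⟩ : ∃ η, η = d1^2 * m / 2 := ⟨_, rfl⟩
  have ηp : 0 < η := by rw [hη]; positivity
  have hbad : ∀ P Q, ¬ (P + Q ≠ 0 ∧ |(v (P+Q)).1 - x0| < δ) → ¬ (P - Q ≠ 0 ∧ |(v (P-Q)).1 - x0| < δ) →
      η ≤ |Ph a b c x0 (u P, u Q)| := by
    intro P Q h1 h2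
    obtain ⟨l, e1, e2⟩ := (hrel P Q).Ph_eq (x0 := x0)
    have k1 := h.bad hδ h1
    have k2 := h.bad hδ h2
    rw [← hd1] at k1 k2
    have k3 := hmT _ _ (hu P) (hu Q)
    rw [e1, abs_mul, abs_mul]
    calc η ≤ d1^2 * (|l| * (2 * (‖v (P+Q)‖ * ‖v (P-Q)‖))) / 2 := by
            rw [hη]; gcongr; exact k3.trans e2
      _ = |l| * ((d1 * ‖v (P+Q)‖) * (d1 * ‖v (P-Q)‖)) := by ring
      _ ≤ _ := by gcongr
  have hzero : ∀ P, Ph a b c x0 (u P, u (R - P)) = 0 := by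
    intro P
    obtain ⟨l, e1, e2⟩ := (hrel P (R-P)).Ph_eq (x0 := x0)
    rw [e1, add_sub_cancel, h.aff R hR, ← hx0]; ring
  have hK : IsCompact (Metric.sphere (0 : ℝ × ℝ) 1 ×ˢ Metric.sphere (0 : ℝ × ℝ) 1) :=
    (isCompact_sphere _ _).prod (isCompact_sphere _ _)
  have huc := hK.uniformContinuousOn_of_continuous (Ph_cont (a := a) (b := b) (c := c) (x0 := x0)).continuousOn
  obtain ⟨ε, hε, hεu⟩ := Metric.uniformContinuousOn_iff.1 huc η ηp
  let w : G → ℝ × ℝ := fun P => u (R - P)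
  have htb : TotallyBounded (Set.range w) := by
    refine TotallyBounded.subset ?_ (isCompact_sphere (0 : ℝ × ℝ) 1).totallyBounded
    rintro _ ⟨P, rfl⟩
    simp [w, hu]
  obtain ⟨t, hts, htf, hcov⟩ := Metric.finite_approx_of_totallyBounded htb ε hε
  let S0 : Finset G := htf.toFinset.image (fun y => R - Function.invFun w y)
  refine ⟨S0 ∪ S0.image (fun x => -x), fun P => ?_⟩
  obtain ⟨y, hy, hPy⟩ := Set.mem_iUnion₂.1 (hcov ⟨P, rfl⟩)
  have hwy : w (Function.invFun w y) = y := Function.invFun_eq (hts hy)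
  have hmem : R - Function.invFun w y ∈ S0 := 
    Finset.mem_image.2 ⟨y, htf.mem_toFinset.2 hy, rfl⟩
  by_contra hcon
  push Not at hcon
  have b1 := hcon _ (Finset.mem_union_left _ hmem)
  have b2 := hcon _ (Finset.mem_union_right _ (Finset.mem_image_of_mem _ hmem))
  have := hbad P (R - Function.invFun w y) (fun hh => absurd hh.2 (not_lt.2 (b1 hh.1)))
    (fun hh => by rw [sub_eq_add_neg] at hh; exact absurd hh.2 (not_lt.2 (b2 hh.1)))
  have hdist := hεu (u P, u (R - P)) (by simp [hu]) (u P, u (R - Function.invFun w y)) (by simp [hu]) (by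
    rw [Prod.dist_eq]; simp only [dist_self]
    rw [max_eq_right dist_nonneg]
    rw [Metric.mem_ball, ← hwy] at hPy
    exact hPy)
  rw [hzero, dist_zero_left, Real.norm_eq_abs] at hdist
  linarith
end

noncomputable section
open Filter

section
variable {a b c : ℝ} {G : Type*} [AddCommGroup G] {v : G → ℝ × ℝ}

lemma fc_flip (a b c x : ℝ) : fc (-a) b (-c) (-x) = - fc a b c x := by unfold fc; ring

lemma fc_pos {α : ℝ} (h : ∀ r, fc a b c r = 0 → r < α) : ∀ x, α ≤ x → 0 < fc a b c x := by
  intro x hx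
  by_contra hcon
  push Not at hcon
  obtain ⟨y, hy⟩ : ∃ y, y = 2 + |a| + |b| + |c| + |x| := ⟨_, rfl⟩
  have hxy : x ≤ y := by
    rw [hy]; linarith [le_abs_self x, abs_nonneg a, abs_nonneg b, abs_nonneg c]
  have hfy : 0 < fc a b c y := by
    by_contra hh
    push Not at hh
    have := fc_low (a := -a) (b := b) (c := -c) (x := -y) (by rw [fc_flip]; linarith)
    rw [abs_neg, abs_neg] at this
    linarith [abs_nonneg x]
  have hc : Continuous (fc a b c) := by unfold fc; fun_prop
  obtain ⟨z, hz, hz0⟩ := intermediate_value_Icc hxy hc.continuousOn ⟨hcon, hfy.le⟩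
  linarith [h z hz0, hz.1]

lemma Geo.final (h : Geo a b c v) (hd : dsc a b c ≠ 0) [Infinite G] {α : ℝ} 
    (hα : ∀ r, fc a b c r = 0 → r < α) {X : Set ℝ} (hX : IsOpen X) (hαX : α ∈ X) :
    ∃ S : Finset G, ∀ g, ∃ s ∈ S, g + s ≠ 0 ∧ (v (g+s)).1 ∈ X ∧ fc a b c (v (g+s)).1 ≠ 0 := by
  have hp := fc_pos hα
  have hc : Continuous (fc a b c) := by unfold fc; fun_prop
  have ev : ∀ᶠ x in nhds α, x ∈ X ∧ 0 < fc a b c x :=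
    Filter.Eventually.and (hX.mem_nhds hαX) (hc.continuousAt.eventually (Ioi_mem_nhds (hp α le_rfl)))
  obtain ⟨ε, hε, hev⟩ := Metric.eventually_nhds_iff.1 ev
  obtain ⟨R, hR, hRα⟩ := h.hit hd hp (half_pos hε)
  obtain ⟨S, hS⟩ := h.synd hd hR (half_pos hε)
  refine ⟨S, fun g => ?_⟩
  obtain ⟨s, hs, h1, h2⟩ := hS g
  have := @hev (v (g+s)).1 (by
    rw [Real.dist_eq]
    have := abs_add_le ((v (g+s)).1 - (v R).1) ((v R).1 - α)
    rw [sub_add_sub_cancel] at this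
    linarith)
  exact ⟨s, hs, h1, this.1, this.2.ne'⟩
end

variable {a b c : ℤ} {G : Type*} [AddCommGroup G]

lemma XRel.cast {a b c : ℚ} {v w p m : ℚ × ℚ} (h : XRel a b c v w p m) :
    XRel (a:ℝ) (b:ℝ) (c:ℝ) ((v.1:ℝ), (v.2:ℝ)) ((w.1:ℝ), (w.2:ℝ)) ((p.1:ℝ), (p.2:ℝ)) ((m.1:ℝ), (m.2:ℝ)) := by
  obtain ⟨l, hl, h0, h1, h2⟩ := h
  refine ⟨l, by exact_mod_cast hl, ?_, ?_, ?_⟩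
  · unfold T0 at *; simp only; exact_mod_cast h0
  · unfold T1 at *; simp only; exact_mod_cast h1
  · unfold T2 at *; simp only; exact_mod_cast h2

lemma XRel.flip {a b c : ℝ} {v w p m : ℝ × ℝ} (h : XRel a b c v w p m) :
    XRel (-a) b (-c) (-v.1, v.2) (-w.1, w.2) (-p.1, p.2) (-m.1, m.2) := by
  obtain ⟨l, hl, h0, h1, h2⟩ := h
  refine ⟨l, hl, ?_, ?_, ?_⟩
  · simp only; linear_combination h0 + (by unfold T0; ring : T0 b (-a) (-c) (-v.1 * -w.1) (-v.1 * w.2 + v.2 * -w.1) (v.2 * w.2) = T0 b a c (v.1 * w.1) (v.1 * w.2 + v.2 * w.1) (v.2 * w.2))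
  · simp only; linear_combination -h1 + (by unfold T1; ring : T1 b (-a) (-c) (-v.1 * -w.1) (-v.1 * w.2 + v.2 * -w.1) (v.2 * w.2) = - T1 b a c (v.1 * w.1) (v.1 * w.2 + v.2 * w.1) (v.2 * w.2))
  · simp only; linear_combination h2 + (by unfold T2; ring : T2 (-v.1 * -w.1) (-v.1 * w.2 + v.2 * -w.1) (v.2 * w.2) = T2 (v.1 * w.1) (v.1 * w.2 + v.2 * w.1) (v.2 * w.2))

lemma geo_pos {D : ℤ} (hD : 0 < D) (φ : G →+ (twist a b c D).Point) (hφ : Function.Injective φ) :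
    Geo (a:ℝ) b c (fun g => (((vx a b c D (φ g)).1 : ℝ), ((vx a b c D (φ g)).2 : ℝ))) where
  z2 := by simp [vx_zero]
  z1 := by simp [vx_zero]
  aff := fun g hg => by
    obtain ⟨x, y, e, -⟩ := vx_y hD.ne' (P := φ g) (by rwa [Ne, map_eq_zero_iff φ hφ])
    simp [e]
  neg := fun g => by simp [vx_neg]
  rel := fun P Q => by
    have := (rel_all (a := a) (b := b) (c := c) hD.ne' (φ P) (φ Q)).cast
    rw [← map_add, ← map_sub] at this
    simpa using this
  pos := fun g hg => by
    obtain ⟨x, y, e, e2⟩ := vx_y hD.ne' (P := φ g) (by rwa [Ne, map_eq_zero_iff φ hφ])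
    simp only [e, fc]
    have : (x:ℝ)^3+a*x^2+b*x+c = D*y^2 := by exact_mod_cast e2.symm
    rw [this]
    have : (0:ℝ) < D := by exact_mod_cast hD
    positivity
  inj := fun P Q h => by
    simp only [Prod.mk.injEq, Rat.cast_inj] at h
    rcases vx_eq hD.ne' (Prod.ext h.1 h.2) with h | h
    · exact Or.inl (hφ h)
    · right; apply hφ; rw [map_neg, h]

lemma geo_neg {D : ℤ} (hD : D < 0) (φ : G →+ (twist a b c D).Point) (hφ : Function.Injective φ) :
    Geo (-a:ℝ) b (-c) (fun g => (-((vx a b c D (φ g)).1 : ℝ), ((vx a b c D (φ g)).2 : ℝ))) where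
  z2 := by simp [vx_zero]
  z1 := by simp [vx_zero]
  aff := fun g hg => by
    obtain ⟨x, y, e, -⟩ := vx_y hD.ne (P := φ g) (by rwa [Ne, map_eq_zero_iff φ hφ])
    simp [e]
  neg := fun g => by simp [vx_neg]
  rel := fun P Q => by
    have := (rel_all (a := a) (b := b) (c := c) hD.ne (φ P) (φ Q)).cast.flip
    rw [← map_add, ← map_sub] at this
    simpa using this
  pos := fun g hg => by
    obtain ⟨x, y, e, e2⟩ := vx_y hD.ne (P := φ g) (by rwa [Ne, map_eq_zero_iff φ hφ])
    simp only [e, fc_flip]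
    have : fc a b c (x:ℝ) = D*y^2 := by unfold fc; exact_mod_cast e2.symm
    rw [this]
    have : (D:ℝ) < 0 := by exact_mod_cast hD
    nlinarith [sq_nonneg (y:ℝ)]
  inj := fun P Q h => by
    simp only [Prod.mk.injEq, Rat.cast_inj, neg_inj] at h
    rcases vx_eq hD.ne (Prod.ext h.1 h.2) with h | h
    · exact Or.inl (hφ h)
    · right; apply hφ; rw [map_neg, h]

theorem synd_pts (hd : dsc a b c ≠ 0) {D : ℤ} (hD : D ≠ 0) (φ : G →+ (twist a b c D).Point)
    (hφ : Function.Injective φ) [Infinite G] {X : Set ℝ} (hX : Broad a b c X) :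
    ∃ S : Finset G, ∀ g, ∃ s ∈ S, ∃ x y : ℚ, vx a b c D (φ (g+s)) = (x, 1) ∧ (x:ℝ) ∈ X ∧
      D*y^2 = x^3+a*x^2+b*x+c ∧ y ≠ 0 := by
  obtain ⟨hXo, ⟨α, hα, hα2⟩, ⟨β, hβ, hβ2⟩⟩ := hX
  have fin : ∀ k : G, k ≠ 0 → ((vx a b c D (φ k)).1 : ℝ) ∈ X → fc a b c (vx a b c D (φ k)).1 ≠ 0 →
      ∃ x y : ℚ, vx a b c D (φ k) = (x, 1) ∧ (x:ℝ) ∈ X ∧ D*y^2 = x^3+a*x^2+b*x+c ∧ y ≠ 0 := by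
    intro k hk h1 h2
    obtain ⟨x, y, e, e2⟩ := vx_y hD (P := φ k) (by rwa [Ne, map_eq_zero_iff φ hφ])
    refine ⟨x, y, e, by simpa [e] using h1, e2, ?_⟩
    rintro rfl
    apply h2
    rw [e]; unfold fc
    have : x^3+a*x^2+b*x+c = 0 := by rw [← e2]; ring
    exact_mod_cast this
  have hdR : dsc (a:ℝ) b c ≠ 0 := by
    have : dsc (a:ℝ) b c = ((dsc a b c : ℤ) : ℝ) := by unfold dsc; push_cast; ring
    rw [this]; exact_mod_cast hd
  rcases lt_or_gt_of_ne hD with h | h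
  · have hdR' : dsc (-a:ℝ) b (-c) ≠ 0 := by
      have : dsc (-a:ℝ) b (-c) = dsc (a:ℝ) b c := by unfold dsc; ring
      rwa [this]
    obtain ⟨S, hS⟩ := (geo_neg h φ hφ).final hdR' (α := -β) (X := -X) (by
      intro r hr
      have := hβ2 (-r) (by
        have := fc_flip (-a) b (-c) r
        rw [hr, neg_neg, neg_neg] at this
        unfold fc at this; linarith)
      linarith) hXo.neg (by simpa using hβ)
    refine ⟨S, fun g => ?_⟩
    obtain ⟨s, hs, h1, h2, h3⟩ := hS g
    refine ⟨s, hs, fin _ h1 (by simpa using h2) ?_⟩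
    rw [fc_flip] at h3
    exact neg_ne_zero.1 h3
  · obtain ⟨S, hS⟩ := (geo_pos h φ hφ).final hdR (α := α) (X := X) hα2 hXo hα
    refine ⟨S, fun g => ?_⟩
    obtain ⟨s, hs, h1, h2, h3⟩ := hS g
    exact ⟨s, hs, fin _ h1 h2 h3⟩
end

noncomputable section
open Filter Height

theorem count {ι : Type*} (T : ι → ℝ) (hT : Summable T) (hT0 : ∀ i, 0 ≤ T i) {n : ℕ} (hn : 1 ≤ n) {j : ℝ}
    (hjn : 2*j ≤ n) (idx : (Fin n → ℤ) → ι) (K : ℕ)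
    (hK : ∀ (s : Finset (Fin n → ℤ)) (i : ι), (∀ g ∈ s, idx g = i) → s.card ≤ K)
    (c0 : ℝ) (hc0 : 0 < c0)
    (hlow : ∀ N : ℕ, 1 ≤ N → ∀ g : Fin n → ℤ, (∀ i, |g i| ≤ N) → c0 * (1 + (N:ℝ))^(-(2*j)) ≤ T (idx g)) :
    False := by
  classical
  obtain ⟨ε, hε⟩ : ∃ ε : ℝ, ε = c0 / (2^(n+1) * (K+1)) := ⟨_, rfl⟩
  have εp : 0 < ε := by rw [hε]; positivity
  obtain ⟨F, hF⟩ := summable_iff_vanishing.1 hT (Metric.ball 0 ε) (Metric.ball_mem_nhds _ εp)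
  obtain ⟨N, hN⟩ : ∃ N : ℕ, N = 2*(K*F.card) + 1 := ⟨_, rfl⟩
  have hN1 : 1 ≤ N := by omega
  have hNr : (1:ℝ) ≤ N := by exact_mod_cast hN1
  let box : Finset (Fin n → ℤ) := Fintype.piFinset (fun _ => Finset.Icc (1:ℤ) N)
  have hbox : box.card = N^n := by
    simp [box, Fintype.card_piFinset]
  have hb : ∀ g ∈ box, ∀ i, |g i| ≤ N := by
    intro g hg i
    have := Finset.mem_Icc.1 ((Fintype.mem_piFinset.1 hg) i)
    rw [abs_of_nonneg (by omega)]; exact this.2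
  let good := box.filter (fun g => idx g ∉ F)
  let bad := box.filter (fun g => idx g ∈ F)
  have hbad : bad.card ≤ K * F.card := by
    refine Finset.card_le_mul_card_image_of_maps_to (f := idx) (fun g hg => (Finset.mem_filter.1 hg).2) K ?_
    intro i _
    exact hK _ i (fun g hg => (Finset.mem_filter.1 hg).2)
  have hsum : bad.card + good.card = N^n := by
    rw [← hbox]; exact Finset.card_filter_add_card_filter_not (s := box) (fun g => idx g ∈ F)
  have hNn : N ≤ N^n := Nat.le_self_pow (by omega) N
  have hgood : N^n ≤ 2 * good.card := by omega
  have h1 : ∑ g ∈ good, T (idx g) ≤ K * ε := by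
    rw [Finset.sum_comp]
    have hd : Disjoint (good.image idx) F := by
      rw [Finset.disjoint_left]
      intro i hi
      obtain ⟨g, hg, rfl⟩ := Finset.mem_image.1 hi
      exact (Finset.mem_filter.1 hg).2
    have := hF _ hd
    rw [mem_ball_zero_iff, Real.norm_eq_abs] at this
    have h2 := (le_abs_self _).trans this.le
    calc _ ≤ ∑ i ∈ good.image idx, (K:ℝ) * T i := by
          apply Finset.sum_le_sum
          intro i _
          rw [nsmul_eq_mul]
          have : ((good.filter (fun g => idx g = i)).card : ℝ) ≤ K := by
            exact_mod_cast hK _ i (fun g hg => (Finset.mem_filter.1 hg).2)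
          exact mul_le_mul_of_nonneg_right this (hT0 i)
      _ = K * ∑ i ∈ good.image idx, T i := by rw [Finset.mul_sum]
      _ ≤ K * ε := by gcongr
  have h2 : good.card * (c0 * (1 + (N:ℝ))^(-(2*j))) ≤ ∑ g ∈ good, T (idx g) := by
    rw [← nsmul_eq_mul]
    apply Finset.card_nsmul_le_sum
    intro g hg
    exact hlow N hN1 g (hb g (Finset.mem_filter.1 hg).1)
  have h3 : ((2*(N:ℝ))^n)⁻¹ ≤ (1 + (N:ℝ))^(-(2*j)) := by
    calc ((2*(N:ℝ))^n)⁻¹ ≤ ((1+(N:ℝ))^n)⁻¹ := by gcongr; linarith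
      _ = (1+(N:ℝ))^(-(n:ℝ)) := by rw [Real.rpow_neg (by positivity), Real.rpow_natCast]
      _ ≤ _ := Real.rpow_le_rpow_of_exponent_le (by linarith) (by linarith)
  have h4 : c0 / 2^(n+1) ≤ good.card * (c0 * (1 + (N:ℝ))^(-(2*j))) := by
    have hg : (N:ℝ)^n / 2 ≤ good.card := by
      have : ((N^n : ℕ):ℝ) ≤ ((2*good.card : ℕ):ℝ) := by exact_mod_cast hgood
      push_cast at this; linarith
    have hNp : (0:ℝ) < N := by linarith
    calc c0 / 2^(n+1) = (N:ℝ)^n/2 * (c0 * ((2*(N:ℝ))^n)⁻¹) := by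
          rw [mul_pow, pow_succ]; field_simp
      _ ≤ _ := by gcongr
  have h5 : K * ε < c0 / 2^(n+1) := by
    rw [hε, ← mul_div_assoc, div_lt_div_iff₀ (by positivity) (by positivity)]
    have : (0:ℝ) < c0 * 2^(n+1) := by positivity
    nlinarith
  linarith

variable {a b c : ℤ}

lemma idx_ex {D : ℤ} (hD0 : D ≠ 0) {x y : ℚ} (h : D*y^2 = x^3+a*x^2+b*x+c) (hy : y ≠ 0) {X : Set ℝ}
    (hX : (x:ℝ) ∈ X) {k : ℝ} (hk : 1 ≤ k) (j : ℝ) :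
    ∃ i : RIdx a b c X, i.1.2 = (x.num, (x.den:ℤ)) ∧
      |(D:ℝ)|^(-k) * ht x.num x.den ^ (-j) ≤ RTerm a b c j k i.1 := by
  have hv : (x.den:ℤ) ≠ 0 := by exact_mod_cast x.den_ne_zero
  have hx : ((x.num:ℤ):ℚ)/((x.den:ℤ):ℚ) = x := by
    have := Rat.num_div_den x
    exact_mod_cast this
  have hF := Fbin_f (a := a) (b := b) (c := c) (u := x.num) hv
  rw [hx, ← h] at hF
  have hF0 : Fbin a b c x.num x.den ≠ 0 := by
    have : ((Fbin a b c x.num x.den : ℤ) : ℚ) ≠ 0 := by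
      rw [hF]
      have : ((x.den:ℤ):ℚ) ≠ 0 := by exact_mod_cast hv
      have : (D:ℚ) ≠ 0 := by exact_mod_cast hD0
      positivity
    exact_mod_cast this
  obtain ⟨z, hz⟩ : ∃ z : ℚ, z = (x.den:ℤ)^2*y := ⟨_, rfl⟩
  obtain ⟨D', h1, h2⟩ := lift_sq (D := D) (F := Fbin a b c x.num x.den) (z := z) (by rw [hF, hz]; ring)
  have hzn : z.num ≠ 0 := by
    intro e; rw [e] at h2; apply hF0; rw [h2]; ring
  have hD'0 : D' ≠ 0 := by rintro rfl; apply hF0; rw [h2]; ring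
  have hle : |D'| ≤ |D| := by
    rw [h1, abs_mul]
    apply le_mul_of_one_le_right (abs_nonneg _)
    apply Int.one_le_abs
    have : (z.den:ℤ) ≠ 0 := by exact_mod_cast z.den_ne_zero
    positivity
  have hsq : ((z.num.natAbs : ℕ) : ℤ)^2 = z.num^2 := by simp
  refine ⟨⟨(z.num.natAbs, x.num, (x.den:ℤ)), ?_, ?_, ?_, ?_⟩, rfl, ?_⟩
  · exact Nat.one_le_iff_ne_zero.2 (Int.natAbs_ne_zero.2 hzn)
  · refine ⟨?_, hF0⟩
    simpa [Int.gcd] using x.reduced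
  · have : ((x.num:ℤ):ℝ)/((x.den:ℤ):ℝ) = x := by exact_mod_cast congrArg (Rat.cast : ℚ → ℝ) hx
    simp only [this]; exact hX
  · simp only; rw [hsq, h2]; exact dvd_mul_left _ _
  · unfold RTerm
    simp only
    have hht : 0 ≤ ht x.num x.den ^ (-j) := Real.rpow_nonneg (by linarith [ht_pos x.num x.den]) _
    refine mul_le_mul_of_nonneg_right ?_ hht
    obtain ⟨t, htt⟩ : ∃ t : ℝ, t = ((z.num.natAbs : ℕ) : ℝ) := ⟨_, rfl⟩
    have tp : 0 < t := by
      rw [htt]; exact_mod_cast Nat.pos_of_ne_zero (Int.natAbs_ne_zero.2 hzn)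
    have e : |((Fbin a b c x.num x.den : ℤ) : ℝ)| = |(D':ℝ)| * t^2 := by
      rw [h2, ← hsq, htt]; push_cast; rw [abs_mul]; simp
    have D'p : 0 < |(D':ℝ)| := by rw [abs_pos]; exact_mod_cast hD'0
    rw [e, ← htt, Real.mul_rpow (abs_nonneg _) (by positivity), ← Real.rpow_natCast t 2, ← Real.rpow_mul tp.le]
    have e2 : t^(2*k) * (|(D':ℝ)|^(-k) * t^(((2:ℕ):ℝ) * -k)) = |(D':ℝ)|^(-k) := by
      rw [mul_comm, mul_assoc, ← Real.rpow_add tp]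
      have : ((2:ℕ):ℝ) * -k + 2*k = 0 := by push_cast; ring
      rw [this, Real.rpow_zero, mul_one]
    rw [e2]
    apply Real.rpow_le_rpow_of_nonpos D'p _ (by linarith)
    exact_mod_cast hle

lemma q_box {A : Type*} [AddCommGroup A] {q : A → ℝ} (hq : Quad q) (h0 : ∀ P, 0 ≤ q P) {n : ℕ} (P : Fin n → A) :
    ∃ B : ℝ, 0 ≤ B ∧ ∀ N : ℕ, ∀ g : Fin n → ℤ, (∀ i, |g i| ≤ N) → q (∑ i, g i • P i) ≤ B * (N:ℝ)^2 := by
  classical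
  have : ∀ s : Finset (Fin n), ∃ B : ℝ, 0 ≤ B ∧ ∀ N : ℕ, ∀ g : Fin n → ℤ, (∀ i, |g i| ≤ N) →
      q (∑ i ∈ s, g i • P i) ≤ B * (N:ℝ)^2 := by
    intro s
    induction s using Finset.induction_on with
    | empty => exact ⟨0, le_rfl, fun N g _ => by simp [hq.zero]⟩
    | insert i s his ih =>
      obtain ⟨B, hB, ih⟩ := ih
      refine ⟨2*q (P i) + 2*B, by have := h0 (P i); positivity, fun N g hg => ?_⟩
      rw [Finset.sum_insert his]
      refine (hq.add_le h0 _ _).trans ?_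
      have h1 := ih N g hg
      have h2 : q (g i • P i) ≤ (N:ℝ)^2 * q (P i) := by
        rw [hq.zsmul]
        apply mul_le_mul_of_nonneg_right _ (h0 _)
        rw [← sq_abs]
        gcongr
        exact_mod_cast hg i
      nlinarith
  exact this Finset.univ
end

noncomputable section
open Filter Height

variable {a b c : ℤ}

theorem rank_of_conv (hd : dsc a b c ≠ 0) {j : ℝ} (hj : 0 < j) {k : ℝ} (hk : 1 ≤ k) {X : Set ℝ} (hX : Broad a b c X)
    (hR : RConv a b c j k X) : RankBound a b c j := by
  classical
  intro D hD
  rintro ⟨P, hP⟩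
  generalize hn : ⌈2*j⌉₊ = n at P hP
  have hjn : 2*j ≤ n := by rw [← hn]; exact Nat.le_ceil _
  have hn1 : 1 ≤ n := by
    rw [← hn]; exact Nat.one_le_iff_ne_zero.2 (Nat.ceil_pos.2 (by positivity)).ne'
  let φ : (Fin n → ℤ) →+ (twist a b c D).Point := (Fintype.linearCombination ℤ P).toAddMonoidHom
  have hφ : Function.Injective φ := linearIndependent_iff_injective_fintypeLinearCombination.1 hP
  have hφs : ∀ g, φ g = ∑ i, g i • P i := fun g => Fintype.linearCombination_apply ℤ P g
  have : Nonempty (Fin n) := ⟨⟨0, hn1⟩⟩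
  have : Infinite (Fin n → ℤ) := Pi.infinite_of_right
  obtain ⟨S, hS⟩ := synd_pts hd hD φ hφ hX
  choose s hs x y hvx hxX hxy hy using hS
  have hidx := fun g => idx_ex hD (hxy g) (hy g) (hxX g) hk j
  choose idx hi1 hi2 using hidx
  obtain ⟨C, hC, hq⟩ := heights hd
  obtain ⟨q, hqH, hq0, hqQ⟩ := hq D hD
  obtain ⟨B, hB, hqB⟩ := q_box hqQ hq0 P
  obtain ⟨M, hM⟩ : ∃ M, M = ∑ s ∈ S, q (φ s) := ⟨_, rfl⟩
  have hM0 : 0 ≤ M := by rw [hM]; exact Finset.sum_nonneg (fun _ _ => hq0 _)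
  obtain ⟨A, hA⟩ : ∃ A, A = 2*B + 2*M + C + 1 := ⟨_, rfl⟩
  have Ap : 0 < A := by rw [hA]; positivity
  have Dp : 0 < |(D:ℝ)| := by rw [abs_pos]; exact_mod_cast hD
  have hht : ∀ N : ℕ, 1 ≤ N → ∀ g : Fin n → ℤ, (∀ i, |g i| ≤ N) → ht (x g).num (x g).den ≤ A * (1+(N:ℝ))^2 := by
    intro N hN g hg
    have hv : ((x g).den:ℤ) ≠ 0 := by exact_mod_cast (x g).den_ne_zero
    have hx : (((x g).num:ℤ):ℚ)/(((x g).den:ℤ):ℚ) = x g := by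
      have := Rat.num_div_den (x g)
      exact_mod_cast this
    have h1 := (ht_bounds (u := (x g).num) (v := (x g).den) (by simpa [Int.gcd] using (x g).reduced) hv).2
    rw [hx, ← Hn_eq (hvx g)] at h1
    have h2 := abs_le.1 (hqH (φ (g + s g)))
    have h3 : q (φ (g + s g)) ≤ 2 * q (φ g) + 2 * q (φ (s g)) := by
      rw [map_add]; exact hqQ.add_le hq0 _ _
    have h4 : q (φ g) ≤ B * (N:ℝ)^2 := by rw [hφs]; exact hqB N g hg
    have h5 : q (φ (s g)) ≤ M := by
      rw [hM]; exact Finset.single_le_sum (f := fun s => q (φ s)) (fun _ _ => hq0 _) (hs g)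
    have hNr : (0:ℝ) ≤ N := Nat.cast_nonneg N
    have h6 : (1:ℝ) ≤ (1+(N:ℝ))^2 := by nlinarith
    have h7 : (N:ℝ)^2 ≤ (1+(N:ℝ))^2 := by nlinarith
    have h8 : B*(N:ℝ)^2 ≤ B*(1+(N:ℝ))^2 := by gcongr
    have h9 : 2*M+C+1 ≤ (2*M+C+1)*(1+(N:ℝ))^2 := le_mul_of_one_le_right (by positivity) h6
    rw [hA]
    nlinarith
  refine count (fun i : RIdx a b c X => RTerm a b c j k i.1) hR ?_ hn1 hjn idx (2*S.card) ?_
    (|(D:ℝ)|^(-k) * A^(-j)) (by positivity) ?_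
  · intro i
    have := ht_pos i.1.2.1 i.1.2.2
    unfold RTerm
    exact mul_nonneg (mul_nonneg (Real.rpow_nonneg (Nat.cast_nonneg _) _) (Real.rpow_nonneg (abs_nonneg _) _)) (Real.rpow_nonneg (by linarith) _)
  · intro s0 i hsi
    rcases s0.eq_empty_or_nonempty with rfl | ⟨g0, hg0⟩
    · simp
    · have hsub : s0 ⊆ S.image (fun s1 => (g0 + s g0) - s1) ∪ S.image (fun s1 => -(g0 + s g0) - s1) := by
        intro g hg
        have e1 : idx g = idx g0 := by rw [hsi g hg, hsi g0 hg0]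
        have e2 : ((x g).num, ((x g).den:ℤ)) = ((x g0).num, ((x g0).den:ℤ)) := by
          rw [← hi1, ← hi1, e1]
        have e3 : x g = x g0 := by
          simp only [Prod.mk.injEq, Nat.cast_inj] at e2
          exact Rat.ext e2.1 e2.2
        have e4 : vx a b c D (φ (g + s g)) = vx a b c D (φ (g0 + s g0)) := by
          rw [hvx, hvx, e3]
        rw [Finset.mem_union, Finset.mem_image, Finset.mem_image]
        rcases vx_eq hD e4 with h | h
        · left
          refine ⟨s g, hs g, ?_⟩
          rw [← hφ h, add_sub_cancel_right]
        · right
          rw [← map_neg] at h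
          refine ⟨s g, hs g, ?_⟩
          rw [← hφ h, add_sub_cancel_right]
      refine (Finset.card_le_card hsub).trans ((Finset.card_union_le _ _).trans ?_)
      have h1 := Finset.card_image_le (s := S) (f := fun s1 => (g0 + s g0) - s1)
      have h2 := Finset.card_image_le (s := S) (f := fun s1 => -(g0 + s g0) - s1)
      omega
  · intro N hN g hg
    refine le_trans ?_ (hi2 g)
    rw [mul_assoc]
    apply mul_le_mul_of_nonneg_left _ (Real.rpow_nonneg Dp.le _)
    have hN0 : (0:ℝ) < 1 + N := by positivity
    have e : A^(-j) * (1+(N:ℝ))^(-(2*j)) = (A * (1+(N:ℝ))^2)^(-j) := by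
      rw [Real.mul_rpow Ap.le (by positivity), ← Real.rpow_natCast _ 2, ← Real.rpow_mul hN0.le]
      congr 2; push_cast; ring
    rw [e]
    apply Real.rpow_le_rpow_of_nonpos (by linarith [ht_pos (x g).num (x g).den]) (hht N hN g hg) (by linarith)

lemma broad_univ (a b c : ℤ) : Broad a b c Set.univ := by
  have key : ∀ a b c r : ℝ, fc a b c r = 0 → |r| ≤ 1+|a|+|b|+|c| := by
    intro a b c r hr
    rw [abs_le]
    refine ⟨fc_low hr.ge, ?_⟩
    have := fc_low (a := -a) (b := b) (c := -c) (x := -r) (by rw [fc_flip, hr, neg_zero])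
    rw [abs_neg, abs_neg] at this
    linarith
  refine ⟨isOpen_univ, ⟨2+|(a:ℝ)|+|(b:ℝ)|+|(c:ℝ)|, trivial, fun r hr => ?_⟩, ⟨-(2+|(a:ℝ)|+|(b:ℝ)|+|(c:ℝ)|), trivial, fun r hr => ?_⟩⟩
  · have := (abs_le.1 (key a b c r hr)).2
    linarith
  · have := (abs_le.1 (key a b c r hr)).1
    linarith
end

/-- **Corollary 11.** For `j > 0`, the following are equivalent:
(a) `rank E^{(D)}(ℚ) < 2j` for all nonzero `D`;
(b) `R_E(j,k,X)` converges for some `k ≥ 1` and some broad `X`;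
(c) `R_E(j,k)` converges for every `k ≥ 1`. -/
theorem rank_tfae_R (a b c : ℤ) (hf : DistinctRoots a b c) (j : ℝ) (hj : 0 < j) :
    List.TFAE
      [RankBound a b c j,
       ∃ k : ℝ, 1 ≤ k ∧ ∃ X : Set ℝ, Broad a b c X ∧ RConv a b c j k X,
       ∀ k : ℝ, 1 ≤ k → RConv a b c j k Set.univ] := by
  have hd := dsc_ne hf
  tfae_have 1 → 3 := by
    intro h k hk
    by_cases hj1 : 1 < j
    · exact R_conv hf hj1 h hk
    · exact absurd h (not_rank hd (not_lt.1 hj1))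
  tfae_have 3 → 2 := fun h => ⟨1, le_rfl, Set.univ, broad_univ a b c, h 1 le_rfl⟩
  tfae_have 2 → 1 := by
    rintro ⟨k, hk, X, hX, hR⟩
    exact rank_of_conv hd hj hk hX hR
  tfae_finish
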